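/- arXiv:2408.13737 — 3 statements merged into one kernel-verified Lean document; each statement's English description precedes it below -/
import Mathlib

section
/- (Baker) If α₁, …, α_n are non-zero algebraic numbers such that log α₁, …, log α_n are linearly independent over the rational numbers, then 1, log α₁, …, log α_n are linearly independent over the field of algebraic numbers. -/
/-- Recursion for derivatives of `z ^ a * exp (c z)`. -/
def qr {R : Type*} [CommRing R] (z : R) : List (R × R) → ℕ → R
  | [], a => z ^ a
  | p :: l, a => p.1 * a * qr z l (a - 1) + p.2 * qr z l a

lemma qr_map {R S : Type*} [CommRing R] [CommRing S] (f : R →+* S) (z : R) (l : List (R × R))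
    (a : ℕ) : f (qr z l a) = qr (f z) (l.map fun p => (f p.1, f p.2)) a := by
  induction l generalizing a with
  | nil => simp [qr]
  | cons p l ih => simp [qr, ih]

lemma qr_perm {R : Type*} [CommRing R] (z : R) {l l' : List (R × R)} (h : l.Perm l') (a : ℕ) :
    qr z l a = qr z l' a := by
  induction h generalizing a with
  | nil => rfl
  | cons x h ih => simp [qr, ih]
  | swap x y l => simp only [qr]; ring
  | trans h1 h2 ih1 ih2 => rw [ih1, ih2]

lemma qr_lin {R J : Type*} [CommRing R] [Fintype J] (z : R) (pre post : List (R × R))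
    (b : J → R) (x : J → R × R) (a : ℕ) :
    qr z (pre ++ (∑ j, b j * (x j).1, ∑ j, b j * (x j).2) :: post) a
      = ∑ j, b j * qr z (pre ++ x j :: post) a := by
  induction pre generalizing a with
  | nil =>
    simp only [List.nil_append, qr, Finset.sum_mul, ← Finset.sum_add_distrib]
    refine Finset.sum_congr rfl fun j _ => by ring
  | cons p l ih =>
    simp only [List.cons_append, qr, ih, Finset.mul_sum, ← Finset.sum_add_distrib]
    refine Finset.sum_congr rfl fun j _ => by ring

lemma qr_bound {R : Type*} [CommRing R] (ν : R → ℝ) (h0 : ∀ x, 0 ≤ ν x)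
    (hadd : ∀ x y, ν (x + y) ≤ ν x + ν y) (hmul : ∀ x y, ν (x * y) ≤ ν x * ν y)
    (hnat : ∀ n : ℕ, ν (n : R) ≤ n) (z : R) (Z : ℝ) (hZ : 1 ≤ Z) (hz : ∀ a : ℕ, ν (z ^ a) ≤ Z ^ a)
    (A : ℕ) (B : ℝ) (l : List (R × R)) (hl : ∀ p ∈ l, ν p.1 * A + ν p.2 ≤ B) (a : ℕ) (ha : a ≤ A) :
    ν (qr z l a) ≤ B ^ l.length * Z ^ A := by
  induction l generalizing a with
  | nil => simpa [qr] using (hz a).trans (pow_le_pow_right₀ hZ ha)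
  | cons p l ih =>
    have hl' : ∀ p ∈ l, ν p.1 * A + ν p.2 ≤ B := fun q hq => hl q (by simp [hq])
    have i1 := ih hl' (a - 1) (by omega)
    have i2 := ih hl' a ha
    have hp := hl p (by simp)
    have hB : 0 ≤ B ^ l.length * Z ^ A := (h0 _).trans i2
    have haA : (a : ℝ) ≤ A := by exact_mod_cast ha
    simp only [qr, List.length_cons]
    calc ν (p.1 * a * qr z l (a - 1) + p.2 * qr z l a)
        ≤ ν (p.1 * a * qr z l (a - 1)) + ν (p.2 * qr z l a) := hadd _ _
      _ ≤ (ν p.1 * A) * (B ^ l.length * Z ^ A) + ν p.2 * (B ^ l.length * Z ^ A) := by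
          refine add_le_add ?_ ?_
          · refine (hmul _ _).trans (mul_le_mul ?_ i1 (h0 _) (by have := h0 p.1; positivity))
            exact (hmul _ _).trans (mul_le_mul_of_nonneg_left ((hnat a).trans haA) (h0 _))
          · exact (hmul _ _).trans (mul_le_mul_of_nonneg_left i2 (h0 _))
      _ = (ν p.1 * A + ν p.2) * (B ^ l.length * Z ^ A) := by ring
      _ ≤ B * (B ^ l.length * Z ^ A) := mul_le_mul_of_nonneg_right hp hB
      _ = B ^ (l.length + 1) * Z ^ A := by ring

section
variable {V I : Type*} [AddCommGroup V] [Module ℂ V] [Fintype I]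

/-- Iterated directional derivatives of an exponential polynomial. -/
noncomputable def WW (π : V →ₗ[ℂ] ℂ) (p : I → ℂ) (a : I → ℕ) (η : I → V →ₗ[ℂ] ℂ)
    (vs : List V) (z : V) : ℂ :=
  ∑ i, p i * (qr (π z) (vs.map fun v => (π v, η i v)) (a i) * Complex.exp (η i z))

variable (π : V →ₗ[ℂ] ℂ) (p : I → ℂ) (a : I → ℕ) (η : I → V →ₗ[ℂ] ℂ)

lemma WW_perm {vs vs' : List V} (h : vs.Perm vs') (z : V) :
    WW π p a η vs z = WW π p a η vs' z := by
  unfold WW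
  refine Finset.sum_congr rfl fun i _ => ?_
  rw [qr_perm _ (h.map _)]

lemma WW_lin {J : Type*} [Fintype J] (b : J → ℂ) (x : J → V) (pre post : List V) (z : V) :
    WW π p a η (pre ++ (∑ j, b j • x j) :: post) z =
      ∑ j, b j * WW π p a η (pre ++ x j :: post) z := by
  unfold WW
  simp only [Finset.mul_sum]
  rw [Finset.sum_comm]
  refine Finset.sum_congr rfl fun i _ => ?_
  have := qr_lin (π z) (pre.map fun v => (π v, η i v)) (post.map fun v => (π v, η i v)) b
    (fun j => (π (x j), η i (x j))) (a i)
  simp only [List.map_append, List.map_cons, map_sum, map_smul, smul_eq_mul]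
  rw [this, Finset.sum_mul, Finset.mul_sum]
  refine Finset.sum_congr rfl fun j _ => by ring

lemma WW_basis {J G : Type*} [Fintype J] (X : J → V) (E : G → V) (b : G → J → ℂ)
    (hE : ∀ σ, E σ = ∑ j, b σ j • X j) (κ : ℝ) (hκ : ∀ σ j, ‖b σ j‖ ≤ κ) (z : V) (n : ℕ) (M : ℝ)
    (hM : ∀ f : List J, f.length = n → ‖WW π p a η (f.map X) z‖ ≤ M) (g : List G)
    (hg : g.length = n) :
    ‖WW π p a η (g.map E) z‖ ≤ (Fintype.card J * κ) ^ n * M := by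
  have key : ∀ (g : List G) (f : List J), f.length + g.length = n →
      ‖WW π p a η (f.map X ++ g.map E) z‖ ≤ (Fintype.card J * κ) ^ g.length * M := by
    intro g
    induction g with
    | nil => intro f hf; simpa using hM f (by simpa using hf)
    | cons σ g ih =>
      intro f hf
      rw [List.map_cons, hE σ, WW_lin]
      refine (norm_sum_le _ _).trans ?_
      calc ∑ j, ‖b σ j * WW π p a η (f.map X ++ X j :: g.map E) z‖
          ≤ ∑ j : J, κ * ((Fintype.card J * κ) ^ g.length * M) := by
            refine Finset.sum_le_sum fun j _ => ?_
            rw [norm_mul]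
            have h2 := ih (f ++ [j]) (by simp at hf ⊢; omega)
            simp only [List.map_append, List.map_cons, List.map_nil, List.append_assoc,
              List.cons_append, List.nil_append] at h2
            exact mul_le_mul (hκ σ j) h2 (norm_nonneg _) ((norm_nonneg _).trans (hκ σ j))
        _ = _ := by simp; ring
  have := key g [] (by simpa using hg)
  simpa [hg] using this

lemma qr_deriv (z v c e w : ℂ) (l : List (ℂ × ℂ)) (a : ℕ) (t : ℂ) :
    HasDerivAt (fun t : ℂ => qr (z + t * v) l a * Complex.exp (e + t * c))
      (qr (z + t * v) ((v, c) :: l) a * Complex.exp (e + t * c)) t := by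
  have hexp : HasDerivAt (fun t : ℂ => Complex.exp (e + t * c)) (Complex.exp (e + t * c) * c) t := by
    have h1 : HasDerivAt (fun t : ℂ => e + t * c) c t := by
      simpa using ((hasDerivAt_id t).mul_const c).const_add e
    exact h1.cexp
  have hq : ∀ a, HasDerivAt (fun t : ℂ => qr (z + t * v) l a) (v * a * qr (z + t * v) l (a - 1)) t := by
    induction l with
    | nil =>
      intro a
      have h1 : HasDerivAt (fun t : ℂ => z + t * v) v t := by
        simpa using ((hasDerivAt_id t).mul_const v).const_add z
      convert! h1.fun_pow a using 1
      simp [qr]; ring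
    | cons p l ih =>
      intro a
      simp only [qr]
      refine ((((ih (a-1)).const_mul (p.1 * a)).add ((ih a).const_mul p.2))).congr_deriv ?_
      ring
  refine ((hq a).mul hexp).congr_deriv ?_
  simp only [qr]; ring

lemma WW_deriv (vs : List V) (z v : V) (t : ℂ) :
    HasDerivAt (fun t : ℂ => WW π p a η vs (z + t • v)) (WW π p a η (v :: vs) (z + t • v)) t := by
  unfold WW
  refine HasDerivAt.fun_sum fun i _ => ?_
  refine HasDerivAt.const_mul _ ?_
  simpa using qr_deriv (π z) (π v) (η i v) (η i z) 0 (vs.map fun v => (π v, η i v)) (a i) t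

lemma WW_iter (vs : List V) (z v : V) (n : ℕ) :
    iteratedDeriv n (fun t : ℂ => WW π p a η vs (z + t • v)) =
      fun t => WW π p a η (List.replicate n v ++ vs) (z + t • v) := by
  induction n with
  | zero => simp
  | succ n ih =>
    rw [iteratedDeriv_succ, ih]
    funext t
    rw [(WW_deriv π p a η _ z v t).deriv, List.replicate_succ, List.cons_append]

lemma WW_bound (vs : List V) (z : V) (P Z Q B : ℝ) (A : ℕ) (hP : ∀ i, ‖p i‖ ≤ P)
    (hZ : 1 ≤ Z) (hz : ‖π z‖ ≤ Z) (hA : ∀ i, a i ≤ A) (hB : ∀ v ∈ vs, ∀ i, ‖π v‖ * A + ‖η i v‖ ≤ B)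
    (hQ : ∀ i, ‖η i z‖ ≤ Q) :
    ‖WW π p a η vs z‖ ≤ Fintype.card I * (P * ((B ^ vs.length * Z ^ A) * Real.exp Q)) := by
  unfold WW
  refine (norm_sum_le _ _).trans ?_
  calc _ ≤ ∑ i : I, (P * ((B ^ vs.length * Z ^ A) * Real.exp Q)) := ?_
    _ = _ := by simp
  refine Finset.sum_le_sum fun i _ => ?_
  have hq := qr_bound (fun x : ℂ => ‖x‖) (fun x => norm_nonneg x) norm_add_le
    (fun x y => (norm_mul x y).le) (fun n => by simp) (π z) Z hZ
    (fun a => by rw [norm_pow]; exact pow_le_pow_left₀ (norm_nonneg _) hz a) A B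
    (vs.map fun v => (π v, η i v)) (by
      intro q hq
      obtain ⟨v, hv, rfl⟩ := List.mem_map.1 hq
      exact hB v hv i) (a i) (hA i)
  rw [List.length_map] at hq
  rw [norm_mul, norm_mul]
  have he : ‖Complex.exp (η i z)‖ ≤ Real.exp Q :=
    (Complex.norm_exp_le_exp_norm _).trans (Real.exp_le_exp.2 (hQ i))
  refine mul_le_mul (hP i) (mul_le_mul hq he (norm_nonneg _) ((norm_nonneg _).trans hq))
    (by positivity) ((norm_nonneg _).trans (hP i))
end


lemma entire_factor (M : Multiset ℂ) : ∀ g : ℂ → ℂ, Differentiable ℂ g →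
    (∀ s, ((M.count s : ℕ) : ℕ∞) ≤ analyticOrderAt g s) →
    ∃ h : ℂ → ℂ, Differentiable ℂ h ∧ ∀ t, g t = (M.map fun s => t - s).prod * h t := by
  classical
  induction M using Multiset.induction_on with
  | empty => intro g hg _; exact ⟨g, hg, by simp⟩
  | cons s M ih =>
    intro g hg ho
    have hgs : g s = 0 := by
      apply apply_eq_zero_of_analyticOrderAt_ne_zero (𝕜 := ℂ)
      intro h0
      have := ho s
      rw [h0] at this
      simp at this
    have hd : Differentiable ℂ (dslope g s) := by
      rw [← differentiableOn_univ]
      exact (Complex.differentiableOn_dslope Filter.univ_mem).2 hg.differentiableOn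
    have heq : g = (fun t => t - s) * dslope g s := by
      funext t
      have := sub_smul_dslope g s t
      simp [hgs] at this
      simp [this]
    obtain ⟨h, hh, he⟩ := ih (dslope g s) hd (by
      intro s'
      have h1 := ho s'
      rw [heq, analyticOrderAt_mul (by fun_prop) (hd.analyticAt s')] at h1
      by_cases hs : s' = s
      · subst hs
        have h2 : analyticOrderAt (fun t : ℂ => t - s') s' = 1 := by
          apply AnalyticAt.analyticOrderAt_eq_one_of_zero_deriv_ne_zero (by fun_prop) (by simp)
          simp
        rw [h2, Multiset.count_cons_self, Nat.cast_add, Nat.cast_one, add_comm] at h1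
        exact (ENat.add_le_add_iff_left (by simp)).1 h1
      · have h2 : analyticOrderAt (fun t : ℂ => t - s) s' = 0 := by
          rw [analyticOrderAt_eq_zero]
          right
          simpa [sub_eq_zero] using hs
        rw [h2, Multiset.count_cons_of_ne hs, zero_add] at h1
        exact h1)
    refine ⟨h, hh, fun t => ?_⟩
    conv_lhs => rw [heq]
    simp [he, mul_assoc]

lemma mprod_le (c : ℝ) (hc : 0 ≤ c) (M : Multiset ℂ) (t : ℂ) (h : ∀ s ∈ M, ‖t - s‖ ≤ c) :
    ‖(M.map fun s => t - s).prod‖ ≤ c ^ Multiset.card M := by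
  induction M using Multiset.induction_on with
  | empty => simp
  | cons s M ih =>
    have h1 := ih fun s' hs' => h s' (by simp [hs'])
    have h2 := h s (by simp)
    simp only [Multiset.map_cons, Multiset.prod_cons, norm_mul, Multiset.card_cons]
    rw [pow_succ']
    exact mul_le_mul h2 h1 (norm_nonneg _) hc

lemma le_mprod (c : ℝ) (hc : 0 ≤ c) (M : Multiset ℂ) (t : ℂ) (h : ∀ s ∈ M, c ≤ ‖t - s‖) :
    c ^ Multiset.card M ≤ ‖(M.map fun s => t - s).prod‖ := by
  induction M using Multiset.induction_on with
  | empty => simp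
  | cons s M ih =>
    have h1 := ih fun s' hs' => h s' (by simp [hs'])
    have h2 := h s (by simp)
    simp only [Multiset.map_cons, Multiset.prod_cons, norm_mul, Multiset.card_cons]
    rw [pow_succ']
    exact mul_le_mul h2 h1 (by positivity) (norm_nonneg _)

lemma schwarz (g : ℂ → ℂ) (hg : Differentiable ℂ g) (S : Finset ℂ) (m : ℕ)
    (hS : ∀ s ∈ S, ∀ i < m, iteratedDeriv i g s = 0) (r : ℝ) (hr : 0 ≤ r) (hSr : ∀ s ∈ S, ‖s‖ ≤ r)
    (R : ℝ) (hR : r + 1 ≤ R) (B : ℝ) (hB : ∀ t, ‖t‖ = R → ‖g t‖ ≤ B) (n : ℕ) :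
    ‖iteratedDeriv n g 0‖ ≤ n.factorial * (((r + 1) / (R - r)) ^ (m * S.card) * B) := by
  classical
  have hRr : 0 < R - r := by linarith
  obtain ⟨h, hh, he⟩ := entire_factor (m • S.val) g hg (by
    intro s
    rw [natCast_le_analyticOrderAt_iff_iteratedDeriv_eq_zero (hg.analyticAt s)]
    intro i hi
    by_cases hs : s ∈ S
    · refine hS s hs i (lt_of_lt_of_le hi ?_)
      rw [Multiset.count_nsmul, Multiset.count_eq_one_of_mem S.nodup hs, mul_one]
    · rw [Multiset.count_nsmul, Multiset.count_eq_zero_of_notMem hs] at hi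
      simp at hi)
  have hcard : Multiset.card (m • S.val) = m * S.card := by simp
  have hmem : ∀ s ∈ m • S.val, s ∈ S := by
    intro s hs
    exact Multiset.mem_of_mem_nsmul hs
  have hhB : ∀ t ∈ Metric.sphere (0 : ℂ) R, ‖h t‖ ≤ B / (R - r) ^ (m * S.card) := by
    intro t ht
    have ht' : ‖t‖ = R := by simpa using ht
    have h1 := hB t ht'
    rw [he, norm_mul] at h1
    have h2 := le_mprod (R - r) hRr.le (m • S.val) t (by
      intro s hs
      have := hSr s (hmem s hs)
      have := norm_sub_norm_le t s
      linarith)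
    rw [hcard] at h2
    rw [le_div_iff₀ (by positivity), mul_comm]
    exact (mul_le_mul_of_nonneg_right h2 (norm_nonneg _)).trans h1
  have hh1 : ∀ t, ‖t‖ = 1 → ‖h t‖ ≤ B / (R - r) ^ (m * S.card) := by
    intro t ht
    refine Complex.norm_le_of_forall_mem_frontier_norm_le (U := Metric.ball 0 R)
      Metric.isBounded_ball hh.diffContOnCl ?_ ?_
    · rw [frontier_ball _ (by linarith)]; exact hhB
    · rw [closure_ball _ (by linarith)]; simp; linarith
  have := Complex.norm_iteratedDeriv_le_of_forall_mem_sphere_norm_le (c := 0) (R := 1)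
    (C := ((r + 1) / (R - r)) ^ (m * S.card) * B) n one_pos hg.diffContOnCl (by
    intro t ht
    have ht' : ‖t‖ = 1 := by simpa using ht
    rw [he, norm_mul]
    have h2 := mprod_le (r + 1) (by linarith) (m • S.val) t (by
      intro s hs
      have := hSr s (hmem s hs)
      have := norm_sub_le t s
      linarith)
    rw [hcard] at h2
    refine (mul_le_mul h2 (hh1 t ht') (norm_nonneg _) (by positivity)).trans (le_of_eq ?_)
    rw [div_pow]; field_simp)
  simpa using this

section
variable {V I : Type*} [AddCommGroup V] [Module ℂ V] [Fintype I]
variable (π : V →ₗ[ℂ] ℂ) (p : I → ℂ) (a : I → ℕ) (η : I → V →ₗ[ℂ] ℂ)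

lemma upper {J : Type*} [Fintype J] [Nonempty J] (X : J → V) (f : List J) (z0 : V) (N : ℕ)
    (hv : ∀ j, ∃ m0 : ℕ, m0 < N ∧ ∀ k < N, ∀ f' : List J, f'.length < f.length →
      WW π p a η (f'.map X) (z0 + ((k : ℂ) - m0) • X j) = 0)
    (R B : ℝ) (hR : N + 1 ≤ R)
    (hB : ∀ j, ∀ f' : List J, f'.length ≤ f.length → ∀ t : ℂ, ‖t‖ = R →
      ‖WW π p a η (f'.map X) (z0 + t • X j)‖ ≤ B) :
    ∃ m : ℕ, f.length ≤ Fintype.card J * m ∧ m ≤ f.length ∧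
      ‖WW π p a η (f.map X) z0‖ ≤ m.factorial * (((N + 1 : ℝ) / (R - N)) ^ (m * N) * B) := by
  classical
  obtain ⟨j, hj⟩ : ∃ j, f.length ≤ Fintype.card J * f.count j := by
    by_contra! hcon
    have hs : ∑ j : J, f.count j = f.length := by
      have := Multiset.sum_count_eq_card (s := Finset.univ) (m := (f : Multiset J)) (by simp)
      simpa using this
    have h1 : ∑ j : J, Fintype.card J * f.count j < ∑ j : J, f.length :=
      Finset.sum_lt_sum_of_nonempty Finset.univ_nonempty fun j _ => hcon j
    rw [← Finset.mul_sum, hs] at h1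
    simp at h1
  set m := f.count j with hm
  refine ⟨m, hj, List.count_le_length, ?_⟩
  set rest := f.filter (fun x => !(x == j)) with hrest
  have hperm : (List.replicate m j ++ rest).Perm f := by
    have := List.filter_append_perm (fun x => x == j) f
    rwa [List.filter_beq] at this
  have hlen : m + rest.length = f.length := by
    have := hperm.length_eq
    simpa using this
  set g : ℂ → ℂ := fun t => WW π p a η (rest.map X) (z0 + t • X j) with hgdef
  have hit : ∀ n, iteratedDeriv n g = fun t =>
      WW π p a η ((List.replicate n j ++ rest).map X) (z0 + t • X j) := by
    intro n
    rw [hgdef, WW_iter]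
    simp
  have hgd : Differentiable ℂ g := fun t => (WW_deriv π p a η _ z0 (X j) t).differentiableAt
  obtain ⟨m0, hm0, hk⟩ := hv j
  let S : Finset ℂ := (Finset.range N).image fun k : ℕ => (k : ℂ) - m0
  have hScard : S.card = N := by
    rw [Finset.card_image_of_injective _ (by intro x y h; simpa using h), Finset.card_range]
  have hsch := schwarz g hgd S m (by
    intro s hs i hi
    obtain ⟨k, hk', rfl⟩ := Finset.mem_image.1 hs
    rw [hit]
    refine hk k (Finset.mem_range.1 hk') _ ?_
    simp; omega) N (by positivity) (by
    intro s hs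
    obtain ⟨k, hk', rfl⟩ := Finset.mem_image.1 hs
    have hk'' := Finset.mem_range.1 hk'
    have : ((k : ℂ) - m0) = (((k : ℤ) - m0 : ℤ) : ℂ) := by push_cast; ring
    rw [this, Complex.norm_intCast]
    have : |(k : ℤ) - m0| ≤ N := by rw [abs_le]; omega
    exact_mod_cast this) R hR B (by
    intro t ht
    exact hB j rest (by omega) t ht) m
  rw [hit, hScard] at hsch
  simp only [zero_smul, add_zero] at hsch
  rwa [WW_perm π p a η (hperm.map X)] at hsch
end

open Polynomial in
lemma iter_X_mul (a : ℕ) (P : ℂ[X]) : derivative^[a+1] (X * P) =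
    X * derivative^[a+1] P + ((a : ℂ[X]) + 1) * derivative^[a] P := by
  induction a with
  | zero =>
    rw [Function.iterate_one, Function.iterate_zero_apply, derivative_mul, derivative_X]
    push_cast
    ring
  | succ a ih =>
    rw [Function.iterate_succ_apply' _ (a + 1), ih, derivative_add, derivative_mul, derivative_mul,
      derivative_X, ← Function.iterate_succ_apply' derivative (a + 1), ← Function.iterate_succ_apply' derivative a,
      derivative_add, derivative_natCast, derivative_one]
    push_cast
    ring

open Polynomial in
lemma qr_zero (v w : ℂ) (n a : ℕ) :
    qr 0 (List.replicate n (v, w)) a = v ^ a * eval w (derivative^[a] (X ^ n : ℂ[X])) := by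
  induction n generalizing a with
  | zero =>
    cases a with
    | zero => rw [List.replicate_zero, qr, Function.iterate_zero_apply]; simp
    | succ a =>
      rw [List.replicate_zero, qr, pow_zero, Function.iterate_succ_apply, derivative_one,
        iterate_map_zero]; simp
  | succ n ih =>
    rw [List.replicate_succ, qr, ih, ih]
    cases a with
    | zero =>
      rw [Function.iterate_zero_apply, Function.iterate_zero_apply, eval_pow, eval_pow, eval_X]
      push_cast
      ring
    | succ a =>
      rw [pow_succ' X n, iter_X_mul, eval_add, eval_mul, eval_mul, eval_X, eval_add, eval_natCast,
        eval_one, Nat.add_sub_cancel]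
      push_cast
      ring

open Polynomial in
lemma nonvanish {V Y : Type*} [AddCommGroup V] [Module ℂ V] [Fintype Y] (L : ℕ)
    (π : V →ₗ[ℂ] ℂ) (hπ : π ≠ 0) (η : Y → V →ₗ[ℂ] ℂ) (hη : Function.Injective η)
    (p : Fin L × Y → ℂ)
    (h : ∀ (n : ℕ) (z : V), WW π p (fun i => i.1) (fun i => η i.2) (List.replicate n z) 0 = 0) :
    p = 0 := by
  classical
  obtain ⟨z, hz⟩ := Module.Dual.exists_forall_ne_zero_of_forall_exists (K := ℂ) (M := V)
    (ι := Option {q : Y × Y // q.1 ≠ q.2})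
    (fun o => o.elim π fun q => η q.1.1 - η q.1.2) (by
      intro o
      by_contra! hcon
      cases o with
      | none => exact hπ (LinearMap.ext hcon)
      | some q => exact q.2 (hη (sub_eq_zero.1 (LinearMap.ext hcon))))
  have hz0 : π z ≠ 0 := hz none
  have hzd : ∀ y y', y ≠ y' → η y z ≠ η y' z := by
    intro y y' hy he
    exact hz (some ⟨(y, y'), hy⟩) (by simp [he])
  have hX : ∀ n : ℕ, ∑ i : Fin L × Y, p i * (π z ^ (i.1 : ℕ) *
      eval (η i.2 z) (derivative^[(i.1 : ℕ)] (X ^ n : ℂ[X]))) = 0 := by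
    intro n
    have := h n z
    unfold WW at this
    simpa [qr_zero] using this
  have hP : ∀ P : ℂ[X], ∑ i : Fin L × Y, p i * (π z ^ (i.1 : ℕ) *
      eval (η i.2 z) (derivative^[(i.1 : ℕ)] P)) = 0 := by
    intro P
    induction P using Polynomial.induction_on' with
    | add P Q hP hQ =>
      simp only [iterate_map_add, eval_add, mul_add, Finset.sum_add_distrib, hP, hQ, add_zero]
    | monomial n c =>
      rw [← C_mul_X_pow_eq_monomial]
      simp only [iterate_derivative_C_mul, eval_mul, eval_C]
      have := congrArg (c * ·) (hX n)
      simp only [Finset.mul_sum, mul_zero] at this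
      rw [← this]
      refine Finset.sum_congr rfl fun i _ => by ring
  by_contra hp
  obtain ⟨⟨a1, y0⟩, h1⟩ := Function.ne_iff.1 hp
  obtain ⟨a0, ha0, hmax⟩ := Finset.exists_max_image
    (Finset.univ.filter fun a : Fin L => p (a, y0) ≠ 0) id ⟨a1, by simpa using h1⟩
  simp only [Finset.mem_filter, Finset.mem_univ, true_and, id] at ha0 hmax
  set Q : ℂ[X] := ∏ y ∈ Finset.univ.erase y0, (X - C (η y z)) ^ L with hQ
  have hQ0 : eval (η y0 z) Q ≠ 0 := by
    rw [hQ, eval_prod, Finset.prod_ne_zero_iff]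
    intro y hy
    simp only [eval_pow, eval_sub, eval_X, eval_C]
    exact pow_ne_zero _ (sub_ne_zero.2 (hzd _ _ (Finset.ne_of_mem_erase hy).symm))
  have hvan : ∀ (P : ℂ[X]) (w : ℂ) (n k : ℕ), k < n → (X - C w) ^ n ∣ P →
      eval w (derivative^[k] P) = 0 := by
    intro P w n k hk hd
    have := pow_sub_dvd_iterate_derivative_of_pow_dvd k hd
    exact dvd_iff_isRoot.1 ((dvd_pow_self _ (Nat.sub_ne_zero_of_lt hk)).trans this)
  have := hP ((X - C (η y0 z)) ^ (a0 : ℕ) * Q)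
  rw [Finset.sum_eq_single (a0, y0)] at this
  · have h2 : eval (η y0 z) (derivative^[(a0 : ℕ)] ((X - C (η y0 z)) ^ (a0 : ℕ) * Q)) ≠ 0 := by
      rw [iterate_derivative_mul, eval_finsetSum, Finset.sum_eq_single 0]
      · simp [iterate_derivative_X_sub_pow_self, hQ0, Nat.factorial_ne_zero]
      · intro b hb hb0
        rw [eval_smul, eval_mul, hvan _ (η y0 z) a0 _ _ dvd_rfl]
        · simp
        · have := Finset.mem_range.1 hb
          omega
      · simp
    exact mul_ne_zero ha0 (mul_ne_zero (pow_ne_zero _ hz0) h2) this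
  · rintro ⟨b, y⟩ _ hne
    by_cases hy : y = y0
    · subst hy
      by_cases hb : p (b, y) = 0
      · simp [hb]
      · have hle := hmax b hb
        have hlt : (b : ℕ) < a0 := by
          have : b ≠ a0 := fun h => hne (by rw [h])
          have := lt_of_le_of_ne hle this
          exact this
        simp only
        rw [hvan _ _ a0 b hlt (dvd_mul_right _ _)]
        simp
    · simp only
      rw [hvan _ _ L b b.2 (Dvd.dvd.mul_left (Finset.dvd_prod_of_mem
        (fun y => (X - C (η y z)) ^ L) (by simp [hy])) _)]
      simp
  · simp


/-- Bound for the entries of the linear system. -/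
noncomputable def cA (D κ N L T b : ℕ) : ℝ := (2 * κ * L : ℝ) ^ (D * T) * (κ * N : ℝ) ^ L * (κ : ℝ) ^ b
/-- Bound for the coefficients. -/
noncomputable def cP (D κ N L T b : ℕ) : ℝ := κ * (L : ℝ) ^ (D + 1) * cA D κ N L T b
/-- Bound for the house of the values. -/
noncomputable def cH (D κ N L T b n : ℕ) : ℝ :=
  (L : ℝ) ^ (D + 1) * (cP D κ N L T b * (((2 * κ * L : ℝ) ^ n * (κ * N : ℝ) ^ L) * (κ : ℝ) ^ b))
/-- Bound for the auxiliary function on a big disc. -/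
noncomputable def cB (D κ N L T b n S : ℕ) : ℝ :=
  (L : ℝ) ^ (D + 1) * (cP D κ N L T b * (((2 * κ * L : ℝ) ^ n * (κ * (N + S) : ℝ) ^ L) *
    Real.exp (κ * L * (N + S))))

lemma exists_root (k n : ℕ) (hk : 1 ≤ k) : ∃ S : ℕ, S ^ k ≤ n ∧ n < (S + 1) ^ k := by
  have hex : ∃ S : ℕ, n < (S + 1) ^ k :=
    ⟨n, lt_of_lt_of_le (Nat.lt_succ_self n) (Nat.le_self_pow (by omega) _)⟩
  classical
  refine ⟨Nat.find hex, ?_, Nat.find_spec hex⟩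
  rcases h : Nat.find hex with _ | S
  · rw [zero_pow (by omega)]; exact Nat.zero_le _
  · by_contra! hcon
    exact Nat.find_min hex (m := S) (by omega) hcon

set_option maxHeartbeats 1000000 in
lemma numeric (D κ : ℕ) (hD : 1 ≤ D) (hκ : 1 ≤ κ) : ∃ N s : ℕ, 1 ≤ N ∧ 1 ≤ s ∧
    ∀ n, s ^ (D + 1) ≤ n → ∃ S : ℕ, N + 1 ≤ S ∧ ∀ m, n ≤ D * m → m ≤ n →
      (κ : ℝ) ^ (κ ^ 2 * N * (2 * N * s ^ D)) *
        cH D κ N (2 * N * s ^ D) (s ^ (D + 1)) (κ ^ 2 * N * (2 * N * s ^ D)) n ^ D *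
      ((D * κ : ℝ) ^ n * (m.factorial * (((N + 1 : ℝ) / (S - N)) ^ (m * N) *
        cB D κ N (2 * N * s ^ D) (s ^ (D + 1)) (κ ^ 2 * N * (2 * N * s ^ D)) n S))) < 1 := by
  obtain ⟨eA, h_eA⟩ : ∃ x, x = (D + 1) * D + 1 + 1 := ⟨_, rfl⟩
  obtain ⟨eP, h_eP⟩ : ∃ x, x = 1 + (D + 1) ^ 2 + eA := ⟨_, rfl⟩
  obtain ⟨eH, h_eH⟩ : ∃ x, x = (D + 1) ^ 2 + (eP + (((D + 1) + 1) + 1)) := ⟨_, rfl⟩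
  obtain ⟨eB, h_eB⟩ : ∃ x, x = (D + 1) ^ 2 + (eP + (((D + 1) + 2) + 1)) := ⟨_, rfl⟩
  obtain ⟨C, h_C⟩ : ∃ x, x = 1 + eH * D + (1 + (2 * (D + 1) + eB)) := ⟨_, rfl⟩
  obtain ⟨N', h_N'⟩ : ∃ x, x = D * (C + 1) := ⟨_, rfl⟩
  obtain ⟨N, h_N⟩ : ∃ x, x = 2 * N' := ⟨_, rfl⟩
  have hN' : 1 ≤ N' := h_N' ▸ Nat.mul_pos hD (Nat.succ_pos C)
  have hN : 1 ≤ N := by omega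
  obtain ⟨s1, hs1⟩ := exists_nat_ge (Real.exp (4 * κ * N))
  obtain ⟨s, h_s⟩ : ∃ x, x = 2 + D * κ + 4 * κ * N + 4 * (N + 1) ^ 2 + 2 * κ ^ 2 * N ^ 2 + s1 := ⟨_, rfl⟩
  refine ⟨N, s, hN, by omega, fun n hn => ?_⟩
  obtain ⟨S, hS1, hS2⟩ := exists_root (D + 1) n (by omega)
  have hsS : s ≤ S := by
    by_contra! hcon
    have : (S + 1) ^ (D + 1) ≤ s ^ (D + 1) := Nat.pow_le_pow_left hcon _
    omega
  have q1 : 2 ≤ S := by have : 2 ≤ s := by omega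
                        omega
  have q2 : D * κ ≤ S := le_trans (by omega) hsS
  have q3 : 4 * κ * N ≤ S := le_trans (by omega) hsS
  have q4 : 4 * (N + 1) ^ 2 ≤ S := le_trans (by omega) hsS
  have q5 : 2 * κ ^ 2 * N ^ 2 ≤ S := le_trans (by omega) hsS
  have q6 : Real.exp (4 * κ * N) ≤ S := hs1.trans (by exact_mod_cast le_trans (by omega) hsS)
  have q7 : N + 1 ≤ S := by
    have : N + 1 ≤ (N + 1) ^ 2 := Nat.le_self_pow two_ne_zero _
    omega
  have q3' : 4 * (κ * N) ≤ S := by rw [← mul_assoc]; exact q3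
  have q8 : κ * N ≤ S := by omega
  have q9' : κ ≤ κ * N := Nat.le_mul_of_pos_right _ hN
  have q9 : κ ≤ S := by omega
  have q10 : κ * (N + S) ≤ S ^ 2 := by
    have h2 : 2 * κ ≤ S := by omega
    calc κ * (N + S) ≤ κ * (2 * S) := Nat.mul_le_mul_left _ (by omega)
      _ = (2 * κ) * S := by ring
      _ ≤ S * S := Nat.mul_le_mul_right _ h2
      _ = S ^ 2 := by ring
  have hn1 : 1 ≤ n := le_trans (Nat.one_le_pow _ _ (by omega)) hS1
  refine ⟨S, q7, fun m hm hmn => ?_⟩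
  set L := 2 * N * s ^ D with hL
  set T := s ^ (D + 1) with hT
  set b := κ ^ 2 * N * L with hb
  have hsD : s ^ D ≤ S ^ D := Nat.pow_le_pow_left hsS _
  have l1 : 2 * κ * L ≤ S ^ (D + 1) := by
    calc 2 * κ * L = (4 * κ * N) * s ^ D := by rw [hL]; ring
      _ ≤ S * S ^ D := Nat.mul_le_mul q3 hsD
      _ = S ^ (D + 1) := by ring
  have hL1 : 1 ≤ L := by
    have : 1 ≤ s ^ D := Nat.one_le_pow _ _ (by omega)
    rw [hL]; exact Nat.mul_pos (by omega) this
  have l2 : L ≤ S ^ (D + 1) := le_trans (Nat.le_mul_of_pos_left _ (by omega)) l1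
  have l3 : L ≤ n := l2.trans hS1
  have l4 : b ≤ n := by
    refine le_trans ?_ hS1
    calc b = (2 * κ ^ 2 * N ^ 2) * s ^ D := by rw [hb, hL]; ring
      _ ≤ S * S ^ D := Nat.mul_le_mul q5 hsD
      _ = S ^ (D + 1) := by ring
  have l5 : κ * L * (N + S) ≤ 4 * κ * N * n := by
    calc κ * L * (N + S) ≤ κ * (2 * N * S ^ D) * (S + S) := by
          refine Nat.mul_le_mul (Nat.mul_le_mul_left _ (Nat.mul_le_mul_left _ hsD)) (by omega)
      _ = 4 * κ * N * S ^ (D + 1) := by ring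
      _ ≤ _ := Nat.mul_le_mul_left _ hS1
  have hSr : (2 : ℝ) ≤ S := by exact_mod_cast q1
  have hS1r : (1 : ℝ) ≤ S := by linarith
  -- tool
  have mulb : ∀ {x y : ℝ} {i j : ℕ}, 0 ≤ y → x ≤ (S : ℝ) ^ (i * n) → y ≤ (S : ℝ) ^ (j * n) →
      x * y ≤ (S : ℝ) ^ ((i + j) * n) := by
    intro x y i j hy hx hy'
    rw [add_mul, pow_add]
    exact mul_le_mul hx hy' hy (by positivity)
  have powb : ∀ {x : ℝ} {i k : ℕ}, 0 ≤ x → x ≤ (S : ℝ) ^ i → k ≤ n → x ^ k ≤ (S : ℝ) ^ (i * n) := by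
    intro x i k hx hxi hk
    calc x ^ k ≤ ((S : ℝ) ^ i) ^ k := pow_le_pow_left₀ hx hxi k
      _ = (S : ℝ) ^ (i * k) := by rw [pow_mul]
      _ ≤ _ := pow_le_pow_right₀ hS1r (Nat.mul_le_mul_left _ hk)
  have r1 : (2 * κ * L : ℝ) ≤ (S : ℝ) ^ (D + 1) := by exact_mod_cast l1
  have r2 : (L : ℝ) ≤ (S : ℝ) ^ (D + 1) := by exact_mod_cast l2
  have r3 : (κ * N : ℝ) ≤ (S : ℝ) ^ 1 := by rw [pow_one]; exact_mod_cast q8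
  have r4 : (κ : ℝ) ≤ (S : ℝ) ^ 1 := by rw [pow_one]; exact_mod_cast q9
  have r5 : (κ * (N + S) : ℝ) ≤ (S : ℝ) ^ 2 := by exact_mod_cast q10
  have r6 : (D * κ : ℝ) ≤ (S : ℝ) ^ 1 := by rw [pow_one]; exact_mod_cast q2
  have t1 : (2 * κ * L : ℝ) ^ (D * T) ≤ (S : ℝ) ^ (((D + 1) * D) * n) := by
    rw [pow_mul]
    refine powb (by positivity) ?_ hn
    rw [pow_mul]
    exact pow_le_pow_left₀ (by positivity) r1 _
  have t2 : (κ * N : ℝ) ^ L ≤ (S : ℝ) ^ (1 * n) := powb (by positivity) r3 l3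
  have t3 : (κ : ℝ) ^ b ≤ (S : ℝ) ^ (1 * n) := powb (by positivity) r4 l4
  have tA : cA D κ N L T b ≤ (S : ℝ) ^ (eA * n) := by
    rw [h_eA]
    unfold cA
    exact mulb (by positivity) (mulb (by positivity) t1 t2) t3
  have tA0 : 0 ≤ cA D κ N L T b := by unfold cA; positivity
  have t4 : (L : ℝ) ^ (D + 1) ≤ (S : ℝ) ^ ((D + 1) ^ 2 * n) := by
    calc (L : ℝ) ^ (D + 1) ≤ ((S : ℝ) ^ (D + 1)) ^ (D + 1) := pow_le_pow_left₀ (by positivity) r2 _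
      _ = (S : ℝ) ^ ((D + 1) ^ 2) := by rw [← pow_mul, sq]
      _ ≤ _ := pow_le_pow_right₀ hS1r (Nat.le_mul_of_pos_right _ hn1)
  have t5 : (κ : ℝ) ≤ (S : ℝ) ^ (1 * n) := by
    have := powb (x := κ) (i := 1) (k := 1) (by positivity) r4 hn1
    simpa using this
  have tP : cP D κ N L T b ≤ (S : ℝ) ^ (eP * n) := by
    rw [h_eP]
    unfold cP
    exact mulb tA0 (mulb (by positivity) t5 t4) tA
  have tP0 : 0 ≤ cP D κ N L T b := by unfold cP; positivity
  have t6 : (2 * κ * L : ℝ) ^ n ≤ (S : ℝ) ^ ((D + 1) * n) := powb (by positivity) r1 le_rfl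
  have tH : cH D κ N L T b n ≤ (S : ℝ) ^ (eH * n) := by
    rw [h_eH]
    unfold cH
    exact mulb (by positivity) t4 (mulb (by positivity) tP
      (mulb (by positivity) (mulb (by positivity) t6 t2) t3))
  have tH0 : 0 ≤ cH D κ N L T b n := by unfold cH; positivity
  have t7 : Real.exp (κ * L * (N + S)) ≤ (S : ℝ) ^ (1 * n) := by
    calc Real.exp (κ * L * (N + S)) ≤ Real.exp (n * (4 * κ * N)) := by
          apply Real.exp_le_exp.2
          have : (κ * L * (N + S) : ℝ) ≤ 4 * κ * N * n := by exact_mod_cast l5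
          linarith
      _ = Real.exp (4 * κ * N) ^ n := by rw [Real.exp_nat_mul]
      _ ≤ (S : ℝ) ^ n := pow_le_pow_left₀ (by positivity) q6 _
      _ = _ := by rw [one_mul]
  have t8 : (κ * (N + S) : ℝ) ^ L ≤ (S : ℝ) ^ (2 * n) := powb (by positivity) r5 l3
  have tB : cB D κ N L T b n S ≤ (S : ℝ) ^ (eB * n) := by
    rw [h_eB]
    unfold cB
    exact mulb (by positivity) t4 (mulb (by positivity) tP
      (mulb (by positivity) (mulb (by positivity) t6 t8) t7))
  have tB0 : 0 ≤ cB D κ N L T b n S := by unfold cB; positivity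
  have t9 : (m.factorial : ℝ) ≤ (S : ℝ) ^ ((2 * (D + 1)) * n) := by
    have h1 : m.factorial ≤ n ^ n :=
      (Nat.factorial_le hmn).trans (Nat.factorial_le_pow n)
    have hSS : S + 1 ≤ S ^ 2 := by rw [sq]; exact (by omega : S + 1 ≤ 2 * S).trans (Nat.mul_le_mul_right _ q1)
    have h2 : n ≤ S ^ (2 * (D + 1)) := by
      rw [pow_mul]
      exact hS2.le.trans (Nat.pow_le_pow_left hSS _)
    have h3 : m.factorial ≤ (S ^ (2 * (D + 1))) ^ n := h1.trans (Nat.pow_le_pow_left h2 _)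
    rw [← pow_mul] at h3
    exact_mod_cast h3
  have t10 : (D * κ : ℝ) ^ n ≤ (S : ℝ) ^ (1 * n) := powb (by positivity) r6 le_rfl
  have tHD : cH D κ N L T b n ^ D ≤ (S : ℝ) ^ ((eH * D) * n) := by
    calc _ ≤ ((S : ℝ) ^ (eH * n)) ^ D := pow_le_pow_left₀ tH0 tH _
      _ = _ := by rw [← pow_mul]; congr 1; ring
  have hNr : (N : ℝ) + 1 ≤ S := by exact_mod_cast q7
  have q4r : 4 * ((N : ℝ) + 1) ^ 2 ≤ S := by exact_mod_cast q4
  have hN0 : (0 : ℝ) ≤ N := by positivity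
  have hSN : (0 : ℝ) < S - N := by linarith
  have t11 : ((N + 1 : ℝ) / (S - N)) ^ 2 ≤ 1 / S := by
    rw [div_pow, div_le_div_iff₀ (by positivity) (by linarith)]
    have h2 : (S : ℝ) / 2 ≤ S - N := by nlinarith
    have h3 : ((S : ℝ) / 2) ^ 2 ≤ (S - N) ^ 2 := pow_le_pow_left₀ (by positivity) h2 _
    nlinarith
  have t12 : ((N + 1 : ℝ) / (S - N)) ^ (m * N) ≤ (1 / (S : ℝ)) ^ ((C + 1) * n) := by
    have : m * N = 2 * (m * N') := by rw [h_N]; ring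
    rw [this, pow_mul]
    calc _ ≤ (1 / (S : ℝ)) ^ (m * N') := pow_le_pow_left₀ (by positivity) t11 _
      _ ≤ _ := by
        refine pow_le_pow_of_le_one (by positivity) ?_ ?_
        · rw [div_le_one (by linarith)]; exact hS1r
        · calc (C + 1) * n ≤ (C + 1) * (D * m) := Nat.mul_le_mul_left _ hm
            _ = m * N' := by rw [h_N']; ring
  set q := ((N + 1 : ℝ) / (S - N)) ^ (m * N) with hq
  have hq0 : 0 ≤ q := by rw [hq]; positivity
  have tot : (κ : ℝ) ^ b * cH D κ N L T b n ^ D *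
      ((D * κ : ℝ) ^ n * (m.factorial * cB D κ N L T b n S)) ≤ (S : ℝ) ^ (C * n) := by
    rw [h_C]
    exact mulb (by positivity) (mulb (by positivity) t3 tHD)
      (mulb (by positivity) t10 (mulb (by positivity) t9 tB))
  calc _ = ((κ : ℝ) ^ b * cH D κ N L T b n ^ D *
      ((D * κ : ℝ) ^ n * (m.factorial * cB D κ N L T b n S))) * q := by ring
    _ ≤ (S : ℝ) ^ (C * n) * (1 / (S : ℝ)) ^ ((C + 1) * n) :=
      mul_le_mul tot t12 hq0 (by positivity)
    _ = (1 / (S : ℝ)) ^ n := by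
      rw [add_mul, pow_add, one_mul, ← mul_assoc, ← mul_pow, mul_one_div_cancel (by linarith),
        one_pow, one_mul]
    _ < 1 := by
      refine pow_lt_one₀ (by positivity) ?_ (by omega)
      rw [div_lt_one (by linarith)]; linarith


open NumberField in
theorem siegel_raw (K : Type) [Field K] [NumberField K] : ∃ c : ℝ,
    ∀ (α β : Type) [Fintype α] [Fintype β] (a : Matrix α β (𝓞 K)) (A : ℝ), a ≠ 0 →
      0 < Fintype.card α → Fintype.card α < Fintype.card β →
      (∀ k l, house ((algebraMap (𝓞 K) K) (a k l)) ≤ A) →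
      ∃ ξ : β → 𝓞 K, ξ ≠ 0 ∧ a.mulVec ξ = 0 ∧
        ∀ l, house (ξ l).1 ≤ c * ((c * (Fintype.card β : ℕ) * A) ^
          (((Fintype.card α : ℕ) : ℝ) / ((Fintype.card β : ℕ) - (Fintype.card α : ℕ)))) := by
  classical
  refine ⟨?_, ?_⟩
  swap
  · intro α β _ _ a A ha h0 hlt hA
    exact NumberField.house.exists_ne_zero_int_vec_house_le K a ha h0 hlt rfl hA rfl

open NumberField in
theorem siegel (K : Type) [Field K] [NumberField K] : ∃ c : ℝ, 1 ≤ c ∧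
    ∀ (α β : Type) [Fintype α] [Fintype β] (a : α → β → K) (A : ℝ), 1 ≤ A →
      (∀ k l, IsIntegral ℤ (a k l)) → (∀ k l, house (a k l) ≤ A) →
      2 * Fintype.card α ≤ Fintype.card β → 0 < Fintype.card β →
      ∃ ξ : β → K, ξ ≠ 0 ∧ (∀ l, IsIntegral ℤ (ξ l)) ∧ (∀ k, ∑ l, a k l * ξ l = 0) ∧
        ∀ l, house (ξ l) ≤ c * (Fintype.card β * A) := by
  obtain ⟨c, hc⟩ := siegel_raw K
  obtain ⟨C, hC⟩ : ∃ C, C = max 1 |c| := ⟨_, rfl⟩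
  have hC1 : 1 ≤ C := hC ▸ le_max_left _ _
  have hCc : |c| ≤ C := hC ▸ le_max_right _ _
  refine ⟨C * C, by nlinarith, ?_⟩
  intro α β _ _ a A hA hint hh hcard hβ
  have hβ1 : (1:ℝ) ≤ Fintype.card β := by exact_mod_cast hβ
  by_cases ha : ∀ k l, a k l = 0
  · refine ⟨fun _ => 1, ?_, fun _ => isIntegral_one, by simp [ha], fun l => ?_⟩
    · haveI : Nonempty β := Fintype.card_pos_iff.mp hβ
      intro h
      exact one_ne_zero (congrFun h (Classical.arbitrary β))
    · have h1 : house (1:K) ≤ 1 := by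
        have := house_intCast (K := K) 1
        simp at this
        exact this.le
      have h2 : 1 ≤ C * C := one_le_mul_of_one_le_of_one_le hC1 hC1
      have h3 : 1 ≤ (Fintype.card β : ℝ) * A := one_le_mul_of_one_le_of_one_le hβ1 hA
      exact h1.trans (one_le_mul_of_one_le_of_one_le h2 h3)
  · push Not at ha
    obtain ⟨k0, l0, hkl⟩ := ha
    have hα : 0 < Fintype.card α := Fintype.card_pos_iff.mpr ⟨k0⟩
    obtain ⟨ξ, h1, h2, h3⟩ := hc α β (fun k l => ⟨a k l, hint k l⟩) A
      (by
        intro h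
        have := congrFun (congrFun h k0) l0
        exact hkl (congrArg Subtype.val this))
      hα (by omega) (fun k l => hh k l)
    refine ⟨fun l => (ξ l : K), ?_, fun l => (ξ l).2, ?_, ?_⟩
    · intro h
      apply h1
      funext l
      exact Subtype.ext (congrFun h l)
    · intro k
      have := congrFun h2 k
      have := congrArg (algebraMap (𝓞 K) K) this
      simp only [Matrix.mulVec, dotProduct, map_sum, map_mul, Pi.zero_apply, map_zero] at this
      exact this
    · intro l
      refine (h3 l).trans ?_
      obtain ⟨e, he⟩ : ∃ e : ℝ, e = ((Fintype.card α : ℕ) : ℝ) /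
        ((Fintype.card β : ℕ) - (Fintype.card α : ℕ)) := ⟨_, rfl⟩
      rw [← he]
      have hab : 2 * (Fintype.card α : ℝ) ≤ Fintype.card β := by exact_mod_cast hcard
      have hα1 : (1:ℝ) ≤ Fintype.card α := by exact_mod_cast hα
      have he0 : 0 ≤ e := by rw [he]; apply div_nonneg <;> linarith
      have he1 : e ≤ 1 := by rw [he, div_le_one] <;> linarith
      have hbig : 1 ≤ C * (Fintype.card β * A) :=
        one_le_mul_of_one_le_of_one_le hC1 (one_le_mul_of_one_le_of_one_le hβ1 hA)
      have hbase : |c * (Fintype.card β : ℕ) * A| ≤ C * (Fintype.card β * A) := by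
        rw [abs_mul, abs_mul, Nat.abs_cast, abs_of_nonneg (by linarith : 0 ≤ A), mul_assoc]
        gcongr
      calc _ ≤ |c * (c * (Fintype.card β : ℕ) * A) ^ e| := le_abs_self _
        _ = |c| * |(c * (Fintype.card β : ℕ) * A) ^ e| := abs_mul _ _
        _ ≤ |c| * |c * (Fintype.card β : ℕ) * A| ^ e := by
          gcongr; exact Real.abs_rpow_le_abs_rpow _ _
        _ ≤ C * (C * (Fintype.card β * A)) ^ e := by
          gcongr
        _ ≤ C * (C * (Fintype.card β * A)) ^ (1:ℝ) := by
          gcongr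
          
        _ = _ := by rw [Real.rpow_one]; ring

theorem house_aut {K : Type} [Field K] [NumberField K] (σ : K ≃ₐ[ℚ] K) (y : K) :
    NumberField.house (σ y) ≤ NumberField.house y := by
  unfold NumberField.house
  rw [pi_norm_le_iff_of_nonneg (norm_nonneg _)]
  intro φ
  exact NumberField.norm_embedding_le_house y (φ.comp (σ : K →+* K))

theorem house_sum_box {K : Type} [Field K] [NumberField K] {J : Type} [Fintype J]
    (x : J → K) (m : J → ℕ) (N : ℕ) (hm : ∀ j, m j ≤ N) (κ : ℝ)
    (hκ : ∑ j, NumberField.house (x j) ≤ κ) :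
    NumberField.house (∑ j, (m j : K) * x j) ≤ κ * N := by
  refine (NumberField.house_sum_le_sum_house _ _).trans ?_
  rw [mul_comm]
  refine le_trans ?_ (mul_le_mul_of_nonneg_left hκ (Nat.cast_nonneg N))
  rw [Finset.mul_sum]
  refine Finset.sum_le_sum fun j _ => ?_
  rw [NumberField.house_nat_mul]
  exact mul_le_mul_of_nonneg_right (by exact_mod_cast hm j) (NumberField.house_nonneg _)

theorem liouville {K : Type} [Field K] [NumberField K] (ι : K →+* ℂ) (x : K) (hx : x ≠ 0)
    (hi : IsIntegral ℤ x) (H : ℝ) (hH : NumberField.house x ≤ H) (h1 : 1 ≤ H) :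
    1 ≤ ‖ι x‖ * H ^ (Module.finrank ℚ K) := by
  have h2 := NumberField.norm_norm_le_norm_mul_house_pow x ι
  have h3 : 1 ≤ ‖Algebra.norm ℚ x‖ := by
    have h4 : IsIntegral ℤ (Algebra.norm ℚ x) := Algebra.isIntegral_norm ℚ hi
    obtain ⟨z, hz⟩ := IsIntegrallyClosed.isIntegral_iff.mp h4
    have h5 : Algebra.norm ℚ x ≠ 0 := by rwa [Algebra.norm_ne_zero_iff]
    rw [← hz] at h5 ⊢
    have : z ≠ 0 := by rintro rfl; simp at h5
    rw [eq_intCast, ← Rat.norm_cast_real, Real.norm_eq_abs]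
    push_cast
    exact_mod_cast Int.one_le_abs this
  refine h3.trans (h2.trans ?_)
  gcongr ?_ * ?_
  calc _ ≤ H ^ (Module.finrank ℚ K - 1) := by
        gcongr
        exact NumberField.house_nonneg _
    _ ≤ _ := pow_le_pow_right₀ h1 (Nat.sub_le _ _)


/-- The constant in Siegel's lemma. -/
noncomputable def siegelC (K : Type) [Field K] [NumberField K] : ℝ := Classical.choose (siegel K)

/-- The data of the transcendence construction. -/
structure BD (K G J V : Type) [Field K] [NumberField K] [Fintype G] [Fintype J]
    [AddCommGroup V] [Module ℂ V] where
  ι : K →+* ℂ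
  κ : ℕ
  c : ℕ
  π : V →ₗ[ℂ] ℂ
  X : J → V
  E : G → V
  b : G → J → ℂ
  x : J → K
  e : G → K
  cc : G → (J → ℕ) → K
  η : (J → ℕ) → V →ₗ[ℂ] ℂ
  F : (J → ℕ) → (J → ℕ) → K
  cardG : Fintype.card G = Module.finrank ℚ K
  cardJ : Fintype.card J = Module.finrank ℚ K
  hκ : 1 ≤ κ
  hc : 1 ≤ c
  hcκ : c ≤ κ
  hS : siegelC K ≤ κ
  hE : ∀ σ, E σ = ∑ j, b σ j • X j
  hb : ∀ σ j, ‖b σ j‖ ≤ κ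
  hspan : ∀ z : V, ∃ w : G → ℂ, z = ∑ σ, w σ • E σ
  hx : ∀ j, IsIntegral ℤ (x j)
  hxh : ∑ j, NumberField.house (x j) ≤ κ
  he : ∀ σ, IsIntegral ℤ (e σ)
  heh : ∀ σ, NumberField.house (e σ) ≤ 1
  hcc : ∀ σ l, IsIntegral ℤ (cc σ l)
  hcch : ∀ σ (l : J → ℕ) (L : ℕ), (∀ j, l j ≤ L) → NumberField.house (cc σ l) ≤ κ * L
  hπE : ∀ σ, π (E σ) = ι (e σ)
  hηE : ∀ σ l, η l (E σ) = ι (cc σ l)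
  hπX : ∀ j, π (X j) = ι (x j)
  hηX : ∀ j (l : J → ℕ) (L : ℕ), (∀ j, l j ≤ L) → ‖η l (X j)‖ ≤ κ * L
  hηP : ∀ (m l : J → ℕ) (N L : ℕ), (∀ j, m j ≤ N) → (∀ j, l j ≤ L) → ‖η l (∑ j, (m j : ℂ) • X j)‖ ≤ κ * L * N
  hF : ∀ m l, Complex.exp (η l (∑ j, (m j : ℂ) • X j)) = ι (F m l)
  hFi : ∀ (m l : J → ℕ) (N L : ℕ), (∀ j, m j ≤ N) → (∀ j, l j ≤ L) →
    IsIntegral ℤ ((c : K) ^ (κ ^ 2 * N * L) * F m l) ∧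
    NumberField.house ((c : K) ^ (κ ^ 2 * N * L) * F m l) ≤ (κ : ℝ) ^ (κ ^ 2 * N * L)
  hinj : Function.Injective η
  hπ : π ≠ 0

lemma qr_integral {R : Type*} [CommRing R] (z : R) (hz : IsIntegral ℤ z) (l : List (R × R))
    (hl : ∀ p ∈ l, IsIntegral ℤ p.1 ∧ IsIntegral ℤ p.2) (a : ℕ) : IsIntegral ℤ (qr z l a) := by
  induction l generalizing a with
  | nil => exact hz.pow a
  | cons p l ih =>
    have h1 := hl p (by simp)
    have h2 := ih (fun q hq => hl q (by simp [hq]))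
    exact ((h1.1.mul (isIntegral_natCast a)).mul (h2 _)).add (h1.2.mul (h2 _))

namespace BD

variable {K G J V : Type} [Field K] [NumberField K] [Fintype G] [Fintype J]
    [AddCommGroup V] [Module ℂ V] (S : BD K G J V)

/-- The algebraic integer attached to a lattice point. -/
noncomputable def q (m : J → ℕ) : K := ∑ j, (m j : K) * S.x j

/-- The lattice point. -/
noncomputable def pt (m : J → ℕ) : V := ∑ j, (m j : ℂ) • S.X j

/-- The algebraic value of a basis function. -/
noncomputable def Q (f : List G) (m : J → ℕ) (a : ℕ) (l : J → ℕ) : K :=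
  qr (S.q m) (f.map fun σ => (S.e σ, S.cc σ l)) a * S.F m l

lemma π_pt (m : J → ℕ) : S.π (S.pt m) = S.ι (S.q m) := by
  simp [pt, q, S.hπX]

lemma q_int (m : J → ℕ) : IsIntegral ℤ (S.q m) :=
  IsIntegral.sum _ fun j _ => (isIntegral_natCast _).mul (S.hx j)

lemma q_house (m : J → ℕ) (N : ℕ) (hm : ∀ j, m j ≤ N) :
    NumberField.house (S.q m) ≤ S.κ * N :=
  house_sum_box S.x m N hm S.κ S.hxh

lemma house_natCast_le (n : ℕ) : NumberField.house (n : K) ≤ n := by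
  have := NumberField.house_intCast (K := K) n
  simp at this
  exact this.le

lemma Q_val [DecidableEq J] (L : ℕ) (p : Fin L × (J → Fin L) → K) (f : List G) (m : J → ℕ) :
    WW S.π (fun i => S.ι (p i)) (fun i => (i.1 : ℕ)) (fun i => S.η (fun j => (i.2 j : ℕ)))
      (f.map S.E) (S.pt m) = S.ι (∑ i, p i * S.Q f m i.1 (fun j => (i.2 j : ℕ))) := by
  unfold WW
  rw [map_sum]
  refine Finset.sum_congr rfl fun i _ => ?_
  rw [map_mul, Q, map_mul, qr_map, ← S.hF, S.π_pt, List.map_map, List.map_map]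
  congr 4
  funext σ
  simp [S.hπE, S.hηE]

lemma Q_bound (N L : ℕ) (hN : 1 ≤ N) (f : List G) (m : J → ℕ) (a : ℕ) (l : J → ℕ)
    (hm : ∀ j, m j ≤ N) (hl : ∀ j, l j ≤ L) (ha : a ≤ L) :
    IsIntegral ℤ ((S.c : K) ^ (S.κ ^ 2 * N * L) * S.Q f m a l) ∧
    NumberField.house ((S.c : K) ^ (S.κ ^ 2 * N * L) * S.Q f m a l) ≤
      ((2 * S.κ * L : ℝ) ^ f.length * (S.κ * N : ℝ) ^ L) * (S.κ : ℝ) ^ (S.κ ^ 2 * N * L) := by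
  obtain ⟨h1, h2⟩ := S.hFi m l N L hm hl
  have e1 : (S.c : K) ^ (S.κ ^ 2 * N * L) * S.Q f m a l =
    qr (S.q m) (f.map fun σ => (S.e σ, S.cc σ l)) a * ((S.c : K) ^ (S.κ ^ 2 * N * L) * S.F m l) := by
    unfold Q; ring
  have hκ1 : (1 : ℝ) ≤ S.κ := by exact_mod_cast S.hκ
  have hN1 : (1 : ℝ) ≤ N := by exact_mod_cast hN
  rw [e1]
  constructor
  · refine IsIntegral.mul (qr_integral _ (S.q_int m) _ ?_ a) h1
    intro p hp
    obtain ⟨σ, _, rfl⟩ := List.mem_map.1 hp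
    exact ⟨S.he σ, S.hcc σ l⟩
  · refine (NumberField.house_mul_le _ _).trans ?_
    refine mul_le_mul ?_ h2 (NumberField.house_nonneg _) (by positivity)
    have := qr_bound (fun y : K => NumberField.house y) NumberField.house_nonneg
      NumberField.house_add_le NumberField.house_mul_le house_natCast_le (S.q m) (S.κ * N)
      (one_le_mul_of_one_le_of_one_le hκ1 hN1)
      (fun a => (NumberField.house_pow_le _ _).trans
        (pow_le_pow_left₀ (NumberField.house_nonneg _) (S.q_house m N hm) a)) L (2 * S.κ * L)
      (f.map fun σ => (S.e σ, S.cc σ l)) (by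
        intro p hp
        obtain ⟨σ, _, rfl⟩ := List.mem_map.1 hp
        have k1 := S.hcch σ l L hl
        have k2 : NumberField.house (S.e σ) * L ≤ 1 * L :=
          mul_le_mul_of_nonneg_right (S.heh σ) (Nat.cast_nonneg _)
        have k3 : 1 * (L : ℝ) ≤ S.κ * L := mul_le_mul_of_nonneg_right hκ1 (Nat.cast_nonneg _)
        change NumberField.house (S.e σ) * L + NumberField.house (S.cc σ l) ≤ _
        linarith) a ha
    rwa [List.length_map] at this

lemma exists_word (k : G → ℕ) [DecidableEq G] : ∃ f : List G, ∀ σ, f.count σ = k σ := by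
  refine ⟨(∑ σ, k σ • ({σ} : Multiset G)).toList, fun σ => ?_⟩
  rw [← Multiset.coe_count, Multiset.coe_toList, Multiset.count_sum']
  simp [Multiset.count_singleton]

lemma length_le [DecidableEq G] (f : List G) (T : ℕ) (h : ∀ σ, f.count σ ≤ T) :
    f.length ≤ Fintype.card G * T := by
  have : f.length = ∑ σ : G, f.count σ := by
    have := Multiset.sum_count_eq_card (s := Finset.univ) (m := (f : Multiset G)) (by simp)
    simpa using this.symm
  rw [this]
  exact (Finset.sum_le_card_nsmul _ _ T fun σ _ => h σ).trans (by simp)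

/-- Existence of the auxiliary function. -/
lemma aux [DecidableEq J] (N s D : ℕ) (hD : D = Module.finrank ℚ K) (hN : 1 ≤ N) (hs : 1 ≤ s) (L T B : ℕ)
    (hL : L = 2 * N * s ^ D) (hT : T = s ^ (D + 1)) (hB : B = S.κ ^ 2 * N * L) :
    ∃ p : Fin L × (J → Fin L) → K, p ≠ 0 ∧ (∀ i, IsIntegral ℤ (p i)) ∧
      (∀ i, NumberField.house (p i) ≤ cP D S.κ N L T B) ∧
      ∀ f : List G, f.length < T → ∀ m : J → Fin N,
        WW S.π (fun i => S.ι (p i)) (fun i => (i.1 : ℕ)) (fun i => S.η (fun j => (i.2 j : ℕ)))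
          (f.map S.E) (S.pt fun j => (m j : ℕ)) = 0 := by
  classical
  have hκ1 : (1 : ℝ) ≤ S.κ := by exact_mod_cast S.hκ
  have hN1 : (1 : ℝ) ≤ N := by exact_mod_cast hN
  have hs0 : 1 ≤ s ^ D := Nat.one_le_pow _ _ hs
  have hL0 : 1 ≤ L := by rw [hL]; nlinarith
  have hL1 : (1 : ℝ) ≤ L := by exact_mod_cast hL0
  have hB2 : (1:ℝ) ≤ 2 * S.κ * L := by
    have := one_le_mul_of_one_le_of_one_le hκ1 hL1
    linarith
  have hD0 : 1 ≤ D := hD ▸ Module.finrank_pos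
  choose word hword using fun k : G → ℕ => exists_word k
  obtain ⟨C, hC⟩ : ∃ C, C = siegelC K := ⟨_, rfl⟩
  have hsg := (Classical.choose_spec (siegel K)).2
  have hcA : 1 ≤ cA D S.κ N L T B := by
    unfold cA
    exact one_le_mul_of_one_le_of_one_le (one_le_mul_of_one_le_of_one_le
      (one_le_pow₀ hB2) (one_le_pow₀ (one_le_mul_of_one_le_of_one_le hκ1 hN1))) (one_le_pow₀ hκ1)
  have cα : Fintype.card ((G → Fin T) × (J → Fin N)) = T ^ D * N ^ D := by
    simp [S.cardG, S.cardJ, hD]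
  have cβ : Fintype.card (Fin L × (J → Fin L)) = L ^ (D + 1) := by
    simp [S.cardJ, hD, pow_succ, mul_comm]
  have hbd := fun (k : (G → Fin T) × (J → Fin N)) (i : Fin L × (J → Fin L)) =>
    S.Q_bound N L hN (word fun σ => (k.1 σ : ℕ)) (fun j => (k.2 j : ℕ)) i.1 (fun j => (i.2 j : ℕ))
      (fun j => (k.2 j).2.le) (fun j => (i.2 j).2.le) i.1.2.le
  obtain ⟨p, hp0, hpi, hpe, hph⟩ := hsg ((G → Fin T) × (J → Fin N)) (Fin L × (J → Fin L))
    (fun k i => (S.c : K) ^ (S.κ ^ 2 * N * L) * S.Q (word fun σ => (k.1 σ : ℕ))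
      (fun j => (k.2 j : ℕ)) i.1 (fun j => (i.2 j : ℕ))) (cA D S.κ N L T B) hcA
    (fun k i => (hbd k i).1) (fun k i => (hbd k i).2.trans (by
      unfold cA
      rw [hB]
      have : (word fun σ => (k.1 σ : ℕ)).length ≤ D * T := by
        rw [hD, ← S.cardG]
        exact length_le _ T fun σ => by rw [hword]; exact (k.1 σ).2.le
      gcongr)) (by
      rw [cα, cβ, hT, hL]
      have e1 : (s ^ (D + 1)) ^ D * N ^ D = s ^ (D * D) * s ^ D * N ^ D := by
        rw [← pow_mul, ← pow_add]; congr 2; ring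
      have e2 : (2 * N * s ^ D) ^ (D + 1) =
          (s ^ (D * D) * s ^ D * N ^ D) * (2 * (2 ^ D * N)) := by
        rw [pow_succ, mul_pow, mul_pow, ← pow_mul]; ring
      rw [e1, e2, mul_comm 2]
      refine Nat.mul_le_mul_left _ ?_
      have : 1 ≤ 2 ^ D * N := Nat.mul_pos (by positivity) hN
      omega) (by rw [cβ]; positivity)
  refine ⟨p, hp0, hpi, fun i => (hph i).trans ?_, ?_⟩
  · rw [cβ, cP, mul_assoc]
    push_cast
    have : Classical.choose (siegel K) ≤ S.κ := S.hS
    gcongr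
  · intro f hf m
    have h1 : f.Perm (word fun σ => f.count σ) := by
      rw [List.perm_iff_count]
      intro σ
      rw [hword]
    rw [WW_perm _ _ _ _ (h1.map S.E), S.Q_val]
    have h2 := hpe (fun σ => ⟨f.count σ, List.count_le_length.trans_lt hf⟩, m)
    have hc0 : (S.c : K) ^ (S.κ ^ 2 * N * L) ≠ 0 :=
      pow_ne_zero _ (Nat.cast_ne_zero.2 (by have := S.hc; omega))
    have h3 : (S.c : K) ^ (S.κ ^ 2 * N * L) * (∑ i : Fin L × (J → Fin L), p i *
        S.Q (word fun σ => f.count σ) (fun j => (m j : ℕ)) i.1 (fun j => (i.2 j : ℕ))) = 0 := by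
      rw [← h2, Finset.mul_sum]
      refine Finset.sum_congr rfl fun i _ => ?_
      ring
    rw [(mul_eq_zero.1 h3).resolve_left hc0, map_zero]

end BD


namespace BD

variable {K G J V : Type} [Field K] [NumberField K] [Fintype G] [Fintype J]
    [AddCommGroup V] [Module ℂ V] (S : BD K G J V)

lemma pt_update [DecidableEq J] (m : J → ℕ) (j : J) (k : ℕ) :
    S.pt m + ((k : ℂ) - (m j : ℕ)) • S.X j = S.pt (Function.update m j k) := by
  unfold pt
  rw [← Finset.add_sum_erase _ _ (Finset.mem_univ j), ← Finset.add_sum_erase Finset.univ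
    (fun i => ((Function.update m j k i : ℕ) : ℂ) • S.X i) (Finset.mem_univ j)]
  have : ∑ i ∈ Finset.univ.erase j, ((Function.update m j k i : ℕ) : ℂ) • S.X i =
      ∑ i ∈ Finset.univ.erase j, ((m i : ℕ) : ℂ) • S.X i := by
    refine Finset.sum_congr rfl fun i hi => ?_
    rw [Function.update_of_ne (Finset.ne_of_mem_erase hi)]
  rw [this, Function.update_self]
  module

lemma shorter [DecidableEq J] (L n : ℕ) (p : Fin L × (J → Fin L) → K) (z : V)
    (h : ∀ f : List G, f.length = n → WW S.π (fun i => S.ι (p i)) (fun i => (i.1 : ℕ))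
        (fun i => S.η (fun j => (i.2 j : ℕ))) (f.map S.E) z = 0) {Y : Type} (v : Y → V)
    (g : List Y) (hg : g.length = n) (hY : Finite Y) :
    WW S.π (fun i => S.ι (p i)) (fun i => (i.1 : ℕ))
        (fun i => S.η (fun j => (i.2 j : ℕ))) (g.map v) z = 0 := by
  have := Fintype.ofFinite Y
  choose w hw using fun y => S.hspan (v y)
  have h1 := WW_basis S.π (fun i => S.ι (p i)) (fun i => (i.1 : ℕ))
        (fun i => S.η (fun j => (i.2 j : ℕ))) S.E v w hw (∑ y, ∑ σ, ‖w y σ‖) (fun y σ => by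
        refine (Finset.single_le_sum (f := fun σ => ‖w y σ‖) (fun _ _ => norm_nonneg _)
          (Finset.mem_univ σ)).trans ?_
        exact Finset.single_le_sum (f := fun y => ∑ σ, ‖w y σ‖)
          (fun _ _ => Finset.sum_nonneg fun _ _ => norm_nonneg _) (Finset.mem_univ y))
        z n 0 (fun f hf => by rw [h f hf, norm_zero]) g hg
  rw [mul_zero] at h1
  exact norm_le_zero_iff.1 h1

lemma upper_bd [DecidableEq J] [Nonempty J] (N L T B D : ℕ) (hD : D = Module.finrank ℚ K)
    (hN : 1 ≤ N) (hL : 1 ≤ L) (p : Fin L × (J → Fin L) → K) (n R : ℕ) (hR : N + 1 ≤ R)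
    (hp : ∀ i, NumberField.house (p i) ≤ cP D S.κ N L T B) (m : J → Fin N)
    (hz : ∀ f : List J, f.length < n → ∀ m : J → Fin N,
        WW S.π (fun i => S.ι (p i)) (fun i => (i.1 : ℕ)) (fun i => S.η (fun j => (i.2 j : ℕ)))
          (f.map S.X) (S.pt fun j => (m j : ℕ)) = 0) (f : List J) (hf : f.length = n) :
    ∃ r : ℕ, n ≤ D * r ∧ r ≤ n ∧ 
     ‖WW S.π (fun i => S.ι (p i)) (fun i => (i.1 : ℕ)) (fun i => S.η (fun j => (i.2 j : ℕ)))
          (f.map S.X) (S.pt fun j => (m j : ℕ))‖ ≤ 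
      r.factorial * (((N + 1 : ℝ) / (R - N)) ^ (r * N) * cB D S.κ N L T B n R) := by
  have hκ1 : (1 : ℝ) ≤ S.κ := by exact_mod_cast S.hκ
  have hN1 : (1 : ℝ) ≤ N := by exact_mod_cast hN
  have hL1 : (1 : ℝ) ≤ L := by exact_mod_cast hL
  have hR0 : (N:ℝ) + 1 ≤ R := by exact_mod_cast hR
  have hB2 : (1:ℝ) ≤ 2 * S.κ * L := by
    have := one_le_mul_of_one_le_of_one_le hκ1 hL1
    linarith
  have hP0 : 0 ≤ cP D S.κ N L T B := by
    unfold cP cA; positivity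
  have hπX : ∀ j, ‖S.π (S.X j)‖ ≤ S.κ := fun j => by
    rw [S.hπX]
    refine (NumberField.norm_embedding_le_house _ _).trans (le_trans ?_ S.hxh)
    exact Finset.single_le_sum (f := fun j => NumberField.house (S.x j))
      (fun _ _ => NumberField.house_nonneg _) (Finset.mem_univ j)
  have cβ : (Fintype.card (Fin L × (J → Fin L)) : ℝ) = (L : ℝ) ^ (D + 1) := by
    simp [S.cardJ, hD, pow_succ, mul_comm]
  obtain ⟨r, h1, h2, h3⟩ := upper S.π (fun i => S.ι (p i)) (fun i => (i.1 : ℕ))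
    (fun i => S.η (fun j => (i.2 j : ℕ))) S.X f (S.pt fun j => (m j : ℕ)) N (by
      intro j
      refine ⟨m j, (m j).2, fun k hk f' hf' => ?_⟩
      have h := S.pt_update (fun j => (m j : ℕ)) j k
      rw [h]
      have h' := hz f' (hf ▸ hf') (Function.update m j ⟨k, hk⟩)
      convert h' using 2
      congr 1
      funext i
      by_cases hi : i = j
      · subst hi; simp
      · simp [Function.update_of_ne hi]) R (cB D S.κ N L T B n R) hR0 (by
      intro j f' hf' t ht
      have hπpt : ‖S.π (S.pt fun j => (m j : ℕ))‖ ≤ S.κ * N := by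
        rw [S.π_pt]
        exact (NumberField.norm_embedding_le_house _ _).trans
          (S.q_house _ N fun j => (m j).2.le)
      have hb := WW_bound S.π (fun i => S.ι (p i)) (fun i => (i.1 : ℕ))
        (fun i => S.η (fun j => (i.2 j : ℕ))) (f'.map S.X) ((S.pt fun j => (m j : ℕ)) + t • S.X j)
        (cP D S.κ N L T B) (S.κ * (N + R)) (S.κ * L * (N + R)) (2 * S.κ * L) L
        (fun i => (NumberField.norm_embedding_le_house _ _).trans (hp i))
        (one_le_mul_of_one_le_of_one_le hκ1 (by linarith)) (by
          rw [map_add, map_smul]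
          refine (norm_add_le _ _).trans ?_
          rw [smul_eq_mul, norm_mul, ht]
          have := mul_le_mul_of_nonneg_left (hπX j) (Nat.cast_nonneg (α := ℝ) R)
          linarith) (fun i => i.1.2.le) (by
          intro v hv i
          obtain ⟨j', _, rfl⟩ := List.mem_map.1 hv
          have k1 := S.hηX j' (fun j => (i.2 j : ℕ)) L (fun j => (i.2 j).2.le)
          have k2 := mul_le_mul_of_nonneg_right (hπX j') (Nat.cast_nonneg (α := ℝ) L)
          linarith) (by
          intro i
          have k1 := S.hηX j (fun j => (i.2 j : ℕ)) L (fun j => (i.2 j).2.le)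
          have k2 := S.hηP (fun j => (m j : ℕ)) (fun j => (i.2 j : ℕ)) N L
            (fun j => (m j).2.le) (fun j => (i.2 j).2.le)
          rw [map_add, map_smul]
          refine (norm_add_le _ _).trans ?_
          rw [smul_eq_mul, norm_mul, ht]
          have k3 := mul_le_mul_of_nonneg_left k1 (Nat.cast_nonneg (α := ℝ) R)
          have k4 : ‖S.η (fun j => (i.2 j : ℕ)) (S.pt fun j => (m j : ℕ))‖ ≤ S.κ * L * N := k2
          linarith)
      refine hb.trans ?_
      rw [cβ, List.length_map]
      unfold cB
      have : (2 * S.κ * L : ℝ) ^ f'.length ≤ (2 * S.κ * L : ℝ) ^ n :=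
        pow_le_pow_right₀ hB2 (hf ▸ hf')
      gcongr)
  rw [S.cardJ, ← hD, hf] at h1
  rw [hf] at h2
  exact ⟨r, h1, h2, h3⟩

theorem contra (S : BD K G J V) : False := by
  classical
  obtain ⟨D, hD⟩ : ∃ D, D = Module.finrank ℚ K := ⟨_, rfl⟩
  have hD0 : 1 ≤ D := hD ▸ Module.finrank_pos
  have hJ : Nonempty J := Fintype.card_pos_iff.1 (by rw [S.cardJ, ← hD]; exact hD0)
  obtain ⟨N, s, hN, hs, hnum⟩ := numeric D S.κ hD0 S.hκ
  obtain ⟨L, hL⟩ : ∃ L, L = 2 * N * s ^ D := ⟨_, rfl⟩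
  obtain ⟨T, hT⟩ : ∃ T, T = s ^ (D + 1) := ⟨_, rfl⟩
  obtain ⟨B, hB⟩ : ∃ B, B = S.κ ^ 2 * N * L := ⟨_, rfl⟩
  have hL0 : 1 ≤ L := by
    rw [hL]; exact Nat.mul_pos (Nat.mul_pos two_pos hN) (Nat.pow_pos hs)
  rw [← hL, ← hT, ← hB] at hnum
  obtain ⟨p, hp0, hpi, hph, hpz⟩ := S.aux N s D hD hN hs L T B hL hT hB
  have hex : ∃ n, ∃ f : List G, f.length = n ∧ ∃ m : J → Fin N,
      WW S.π (fun i => S.ι (p i)) (fun i => (i.1 : ℕ)) (fun i => S.η (fun j => (i.2 j : ℕ)))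
          (f.map S.E) (S.pt fun j => (m j : ℕ)) ≠ 0 := by
    by_contra! hall
    apply hp0
    have h1 := nonvanish L S.π S.hπ (fun l : J → Fin L => S.η (fun j => (l j : ℕ))) (by
      intro l l' h
      have := S.hinj h
      funext j
      exact Fin.ext (congrFun this j)) (fun i => S.ι (p i)) (by
      intro n z
      have h2 := S.shorter L n p 0 (fun f hf => by
        have := hall n f hf (fun _ => ⟨0, hN⟩)
        have h0 : S.pt (fun _ => 0) = 0 := by simp [pt]
        rw [← h0]; exact this) (fun _ : Unit => z) (List.replicate n ()) (by simp) inferInstance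
      rwa [List.map_replicate] at h2)
    funext i
    exact (map_eq_zero S.ι).1 (congrFun h1 i)
  obtain ⟨n, hn⟩ : ∃ n, n = Nat.find hex := ⟨_, rfl⟩
  obtain ⟨f, hf, m, hW⟩ := Nat.find_spec hex
  rw [← hn] at hf
  have hlt : ∀ f : List G, f.length < n → ∀ m : J → Fin N,
      WW S.π (fun i => S.ι (p i)) (fun i => (i.1 : ℕ)) (fun i => S.η (fun j => (i.2 j : ℕ)))
          (f.map S.E) (S.pt fun j => (m j : ℕ)) = 0 := by
    intro f hf m
    by_contra h
    exact Nat.find_min hex (hn ▸ hf) ⟨f, rfl, m, h⟩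
  have hTn : T ≤ n := by
    by_contra! h
    exact hW (hpz f (hf ▸ h) m)
  obtain ⟨R, hR, hnum⟩ := hnum n hTn
  have hup := S.upper_bd N L T B D hD hN hL0 p n R hR hph m
    (fun f hf m => S.shorter L f.length p _ (fun g hg => hlt g (hg ▸ hf) m) S.X f rfl inferInstance)
  obtain ⟨r, hr, hmax⟩ := Finset.exists_max_image
    ((Finset.range (n + 1)).filter fun r => n ≤ D * r)
    (fun r => (r.factorial : ℝ) * (((N + 1 : ℝ) / (R - N)) ^ (r * N) * cB D S.κ N L T B n R))
    ⟨n, by simp; nlinarith⟩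
  simp only [Finset.mem_filter, Finset.mem_range] at hr hmax
  have hlast := hnum r hr.2 (by omega)
  have hWb := WW_basis S.π (fun i => S.ι (p i)) (fun i => (i.1 : ℕ))
    (fun i => S.η (fun j => (i.2 j : ℕ))) S.X S.E S.b S.hE S.κ S.hb (S.pt fun j => (m j : ℕ)) n _
    (fun g hg => by
      obtain ⟨r', h1, h2, h3⟩ := hup g hg
      exact h3.trans (hmax r' ⟨by omega, h1⟩)) f hf
  rw [S.cardJ, ← hD] at hWb
  obtain ⟨W, hWd⟩ : ∃ W, W = WW S.π (fun i => S.ι (p i)) (fun i => (i.1 : ℕ))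
    (fun i => S.η (fun j => (i.2 j : ℕ))) (f.map S.E) (S.pt fun j => (m j : ℕ)) := ⟨_, rfl⟩
  rw [← hWd] at hWb hW
  rw [S.Q_val] at hWd
  obtain ⟨ξ, hξ⟩ : ∃ ξ, ξ = ∑ i : Fin L × (J → Fin L), p i * ((S.c : K) ^ B *
    S.Q f (fun j => (m j : ℕ)) i.1 (fun j => (i.2 j : ℕ))) := ⟨_, rfl⟩
  have hξW : S.ι ξ = (S.c : ℂ) ^ B * W := by
    rw [hWd, hξ, map_sum, map_sum, Finset.mul_sum]
    refine Finset.sum_congr rfl fun i _ => ?_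
    simp only [map_mul, map_pow, map_natCast]
    ring
  have hbd := fun i : Fin L × (J → Fin L) =>
    S.Q_bound N L hN f (fun j => (m j : ℕ)) i.1 (fun j => (i.2 j : ℕ))
      (fun j => (m j).2.le) (fun j => (i.2 j).2.le) i.1.2.le
  rw [← hB, hf] at hbd
  have hξi : IsIntegral ℤ ξ := by
    rw [hξ]; exact IsIntegral.sum _ fun i _ => (hpi i).mul (hbd i).1
  have cβ : (Fintype.card (Fin L × (J → Fin L)) : ℝ) = (L : ℝ) ^ (D + 1) := by
    simp [S.cardJ, hD, pow_succ, mul_comm]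
  have hP0 : 0 ≤ cP D S.κ N L T B := by
    unfold cP cA; positivity
  have hξh : NumberField.house ξ ≤ cH D S.κ N L T B n := by
    rw [hξ]
    refine (NumberField.house_sum_le_sum_house _ _).trans ?_
    unfold cH
    rw [← cβ]
    refine (Finset.sum_le_card_nsmul _ _ _ fun i _ => (NumberField.house_mul_le _ _).trans
      (mul_le_mul (hph i) (hbd i).2 (NumberField.house_nonneg _) hP0)).trans ?_
    rw [nsmul_eq_mul, Finset.card_univ]
  have hc0 : (S.c : ℂ) ^ B ≠ 0 :=
    pow_ne_zero _ (Nat.cast_ne_zero.2 (by have := S.hc; omega))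
  have hξ0 : ξ ≠ 0 := by
    intro h
    rw [h, map_zero] at hξW
    exact mul_ne_zero hc0 hW hξW.symm
  have hH1 := (NumberField.one_le_house_of_isIntegral hξi hξ0).trans hξh
  have hlio := liouville S.ι ξ hξ0 hξi _ hξh hH1
  rw [← hD, hξW, norm_mul, norm_pow, Complex.norm_natCast] at hlio
  have hcκ : (S.c : ℝ) ^ B ≤ (S.κ : ℝ) ^ B := by
    have : (S.c : ℝ) ≤ S.κ := by exact_mod_cast S.hcκ
    gcongr
  refine absurd hlast (not_lt.2 (hlio.trans ?_))
  calc (S.c : ℝ) ^ B * ‖W‖ * cH D S.κ N L T B n ^ D 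
      ≤ (S.κ : ℝ) ^ B * ((D * S.κ : ℝ) ^ n * (r.factorial * (((N + 1 : ℝ) / (R - N)) ^ (r * N) *
        cB D S.κ N L T B n R))) * cH D S.κ N L T B n ^ D := by gcongr
    _ = _ := by ring

end BD


section
variable {K : Type} [Field K] [NumberField K]

open Classical in
lemma aut_indep (ι : K →+* ℂ) (a : (K ≃ₐ[ℚ] K) → ℂ)
    (h : ∀ x : K, ∑ σ, a σ * ι (σ x) = 0) : a = 0 := by
  have h1 := linearIndependent_monoidHom K ℂ
  have h2 := h1.comp (fun σ : K ≃ₐ[ℚ] K => ((ι.comp (σ : K →+* K) : K →+* ℂ) : K →* ℂ)) (by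
    intro σ τ hst
    ext x
    have := DFunLike.congr_fun hst x
    exact ι.injective this)
  rw [Fintype.linearIndependent_iff] at h2
  funext σ
  refine h2 a ?_ σ
  funext x
  simpa using h x

open Classical in
lemma span_pt (ι : K →+* ℂ) {J : Type} [Fintype J] (B : Module.Basis J ℚ K)
    (z : (K ≃ₐ[ℚ] K) → ℂ) : ∃ w : J → ℂ, z = ∑ j, w j • (fun σ => ι (σ (B j))) := by
  have htop : Submodule.span ℂ (Set.range fun j => (fun σ : K ≃ₐ[ℚ] K => ι (σ (B j)))) = ⊤ := by
    by_contra hne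
    obtain ⟨f, hf0, hf⟩ := Submodule.exists_le_ker_of_lt_top _ (lt_top_iff_ne_top.2 hne)
    apply hf0
    have key : ∀ v, f v = ∑ σ, f (Pi.single σ 1) * v σ := by
      intro v
      conv_lhs => rw [← Finset.univ_sum_single v]
      rw [map_sum]
      refine Finset.sum_congr rfl fun σ _ => ?_
      have : Pi.single σ (v σ) = v σ • (Pi.single σ 1 : (K ≃ₐ[ℚ] K) → ℂ) := by
        rw [← Pi.single_smul, smul_eq_mul, mul_one]
      rw [this, map_smul, smul_eq_mul, mul_comm]
    have h1 := aut_indep ι (fun σ => f (Pi.single σ 1)) (by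
      intro x
      have h2 : ∀ j, ∑ σ : K ≃ₐ[ℚ] K, f (Pi.single σ 1) * ι (σ (B j)) = 0 := by
        intro j
        rw [← key (fun σ => ι (σ (B j)))]
        exact hf (Submodule.subset_span ⟨j, rfl⟩)
      rw [← B.sum_repr x]
      simp only [map_sum, Finset.mul_sum]
      rw [Finset.sum_comm]
      refine Finset.sum_eq_zero fun j _ => ?_
      have : ∀ σ : K ≃ₐ[ℚ] K, f (Pi.single σ 1) * ι (σ ((B.repr x) j • B j)) =
          ((B.repr x j : ℚ) : ℂ) * (f (Pi.single σ 1) * ι (σ (B j))) := by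
        intro σ
        rw [Rat.smul_def, map_mul, map_mul, map_ratCast, map_ratCast]
        ring
      simp only [this]
      rw [← Finset.mul_sum, h2, mul_zero])
    ext σ
    have := congrFun h1 σ
    simpa using this
  have hz : z ∈ Submodule.span ℂ (Set.range fun j => (fun σ : K ≃ₐ[ℚ] K => ι (σ (B j)))) := by
    rw [htop]; trivial
  obtain ⟨w, hw⟩ := (Submodule.mem_span_range_iff_exists_fun ℂ).1 hz
  exact ⟨w, hw.symm⟩

open Classical in
theorem core [IsGalois ℚ K] (ι : K →+* ℂ) (u : (K ≃ₐ[ℚ] K) → ℂ) (b0 : K)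
    (hb0 : IsIntegral ℤ b0) (hu1 : u 1 = ι b0) (hu : ∃ σ, u σ ≠ 0) (Ex : K → K)
    (hEx : ∀ x, IsIntegral ℤ x → Complex.exp (∑ σ, u σ * ι (σ x)) = ι (Ex x))
    (c κ0 : ℕ) (hc : 1 ≤ c)
    (hE : ∀ (b : ℕ) (x : K), IsIntegral ℤ x → NumberField.house x ≤ b →
      IsIntegral ℤ ((c : K) ^ b * Ex x) ∧ NumberField.house ((c : K) ^ b * Ex x) ≤ (κ0 : ℝ) ^ b) :
    False := by
  obtain ⟨J, _, B, hBi⟩ : ∃ (J : Type) (_ : Fintype J) (B : Module.Basis J ℚ K),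
      ∀ j, IsIntegral ℤ (B j) :=
    ⟨_, inferInstance, NumberField.integralBasis K, fun j => by
      rw [NumberField.integralBasis_apply]; exact NumberField.RingOfIntegers.isIntegral_coe _⟩
  obtain ⟨y, hy⟩ : ∃ y : (J → ℕ) → K, ∀ l, y l = ∑ j, (l j : K) * B j := ⟨_, fun _ => rfl⟩
  have hyi : ∀ l, IsIntegral ℤ (y l) := fun l => by
    rw [hy]; exact IsIntegral.sum _ fun j _ => (isIntegral_natCast _).mul (hBi j)
  obtain ⟨A, hA⟩ : ∃ A, A = ∑ j, NumberField.house (B j) := ⟨_, rfl⟩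
  have hA0 : 0 ≤ A := hA ▸ Finset.sum_nonneg fun _ _ => NumberField.house_nonneg _
  have hyh : ∀ (l : J → ℕ) (L : ℕ), (∀ j, l j ≤ L) → NumberField.house (y l) ≤ A * L := by
    intro l L hl
    rw [hy]
    exact house_sum_box B l L hl A hA.ge
  have hBA : ∀ j, NumberField.house (B j) ≤ A := fun j => by
    rw [hA]
    exact Finset.single_le_sum (f := fun j => NumberField.house (B j))
      (fun _ _ => NumberField.house_nonneg _) (Finset.mem_univ j)
  obtain ⟨U, hU⟩ : ∃ U, U = ∑ σ, ‖u σ‖ := ⟨_, rfl⟩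
  have hU0 : 0 ≤ U := hU ▸ Finset.sum_nonneg fun _ _ => norm_nonneg _
  obtain ⟨η, hη⟩ : ∃ η : (J → ℕ) → ((K ≃ₐ[ℚ] K) → ℂ) →ₗ[ℂ] ℂ,
      ∀ l z, η l z = ∑ σ, u σ * ι (σ (y l)) * z σ :=
    ⟨fun l => ∑ σ, (u σ * ι (σ (y l))) • LinearMap.proj σ, fun l z => by simp⟩
  obtain ⟨X, hX⟩ : ∃ X : J → (K ≃ₐ[ℚ] K) → ℂ, X = fun j σ => ι (σ (B j)) := ⟨_, rfl⟩
  have hpt : ∀ m : J → ℕ, ∑ j, (m j : ℂ) • X j = fun σ => ι (σ (y m)) := by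
    intro m
    funext σ
    simp [hX, hy]
  have hηpt : ∀ m l : J → ℕ, η l (∑ j, (m j : ℂ) • X j) = ∑ σ, u σ * ι (σ (y m * y l)) := by
    intro m l
    rw [hη, hpt]
    refine Finset.sum_congr rfl fun σ _ => ?_
    rw [map_mul, map_mul]; ring
  have hηb : ∀ (l : J → ℕ) (x : K) (a : ℝ), NumberField.house (x * y l) ≤ a →
      ‖∑ σ, u σ * ι (σ (x * y l))‖ ≤ U * a := by
    intro l x a ha
    refine (norm_sum_le _ _).trans ?_
    rw [hU, Finset.sum_mul]
    refine Finset.sum_le_sum fun σ _ => ?_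
    rw [norm_mul]
    exact mul_le_mul_of_nonneg_left ((NumberField.norm_embedding_le_house _ _).trans
      ((house_aut σ _).trans ha)) (norm_nonneg _)
  obtain ⟨w, hw⟩ : ∃ w : (K ≃ₐ[ℚ] K) → ℂ, ∀ σ, w σ = if σ = 1 then 1 else if u σ = 0 then 1 else u σ :=
    ⟨_, fun _ => rfl⟩
  have hw0 : ∀ σ, w σ ≠ 0 := by
    intro σ
    rw [hw]
    split_ifs with h1 h2
    · exact one_ne_zero
    · exact one_ne_zero
    · exact h2
  obtain ⟨E, hEd⟩ : ∃ E : (K ≃ₐ[ℚ] K) → (K ≃ₐ[ℚ] K) → ℂ, ∀ σ, E σ = Pi.single σ (w σ)⁻¹ :=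
    ⟨_, fun _ => rfl⟩
  choose b hb using fun σ => span_pt ι B (E σ)
  obtain ⟨Sb, hSb⟩ : ∃ Sb, Sb = ∑ σ, ∑ j, ‖b σ j‖ := ⟨_, rfl⟩
  have hSb0 : 0 ≤ Sb := hSb ▸ Finset.sum_nonneg fun _ _ => Finset.sum_nonneg fun _ _ => norm_nonneg _
  have hbS : ∀ σ j, ‖b σ j‖ ≤ Sb := by
    intro σ j
    rw [hSb]
    refine (Finset.single_le_sum (f := fun j => ‖b σ j‖) (fun _ _ => norm_nonneg _)
      (Finset.mem_univ j)).trans ?_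
    exact Finset.single_le_sum (f := fun σ => ∑ j, ‖b σ j‖)
      (fun _ _ => Finset.sum_nonneg fun _ _ => norm_nonneg _) (Finset.mem_univ σ)
  have hC1 : 1 ≤ siegelC K := (Classical.choose_spec (siegel K)).1
  have hh0 := NumberField.house_nonneg b0
  have hc0 : (0:ℝ) ≤ c := Nat.cast_nonneg c
  have hκ00 : (0:ℝ) ≤ κ0 := Nat.cast_nonneg κ0
  have p1 : 0 ≤ NumberField.house b0 * A := mul_nonneg hh0 hA0
  have p2 : 0 ≤ U * (A * A) := mul_nonneg hU0 (mul_nonneg hA0 hA0)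
  obtain ⟨κ, hκ⟩ := exists_nat_ge (A + NumberField.house b0 * A + U * (A * A) + c + κ0 +
    siegelC K + Sb)
  have hκA : A ≤ κ := by linarith
  have hκ1 : (1:ℝ) ≤ κ := by linarith
  refine BD.contra (K := K) (G := K ≃ₐ[ℚ] K) (J := J) (V := (K ≃ₐ[ℚ] K) → ℂ)
    { ι := ι, κ := κ, c := c, π := LinearMap.proj 1, X := X, E := E, b := b, x := B
      e := fun σ => if σ = 1 then 1 else 0
      cc := fun σ l => if σ = 1 then b0 * y l else if u σ = 0 then 0 else σ (y l)
      η := η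
      F := fun m l => Ex (y m * y l)
      cardG := ?_
      cardJ := (Module.finrank_eq_card_basis B).symm
      hκ := by exact_mod_cast hκ1
      hc := hc
      hcκ := by
        have : (c:ℝ) ≤ κ := by linarith
        exact_mod_cast this
      hS := by linarith
      hE := by rw [hX]; exact hb
      hb := fun σ j => (hbS σ j).trans (by linarith)
      hspan := ?_
      hx := hBi
      hxh := by rw [← hA]; exact hκA
      he := ?_
      heh := ?_
      hcc := ?_
      hcch := ?_
      hπE := ?_
      hηE := ?_
      hπX := by intro j; simp [hX]
      hηX := ?_
      hηP := ?_
      hF := ?_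
      hFi := ?_
      hinj := ?_
      hπ := ?_ }
  · rw [← Nat.card_eq_fintype_card, IsGalois.card_aut_eq_finrank]
  · intro z
    refine ⟨fun σ => w σ * z σ, ?_⟩
    funext τ
    simp only [hEd, Finset.sum_apply, Pi.smul_apply, smul_eq_mul]
    rw [Finset.sum_eq_single τ]
    · rw [Pi.single_eq_same]; field_simp [hw0 τ]
    · intro σ _ hne
      rw [Pi.single_eq_of_ne hne.symm, mul_zero]
    · simp
  · intro σ
    split_ifs
    · exact isIntegral_one
    · exact isIntegral_zero
  · intro σ
    split_ifs
    · simpa using BD.house_natCast_le (K := K) 1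
    · simpa using (BD.house_natCast_le (K := K) 0).trans (by simp)
  · intro σ l
    split_ifs
    · exact hb0.mul (hyi l)
    · exact isIntegral_zero
    · exact (hyi l).map ((σ : K →+* K).toIntAlgHom)
  · intro σ l L hl
    have h1 := hyh l L hl
    have hL0 : (0:ℝ) ≤ L := Nat.cast_nonneg L
    split_ifs
    · refine (NumberField.house_mul_le _ _).trans ?_
      refine (mul_le_mul_of_nonneg_left h1 hh0).trans ?_
      rw [← mul_assoc]
      exact mul_le_mul_of_nonneg_right (by linarith) hL0
    · have := (BD.house_natCast_le (K := K) 0)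
      simp only [Nat.cast_zero] at this
      exact this.trans (mul_nonneg (by linarith) hL0)
    · exact (house_aut σ _).trans (h1.trans (mul_le_mul_of_nonneg_right hκA hL0))
  · intro σ
    simp only [LinearMap.proj_apply, hEd]
    by_cases h : σ = 1
    · subst h; simp [hw]
    · rw [if_neg h, Pi.single_eq_of_ne (Ne.symm h), map_zero]
  · intro σ l
    rw [hη, hEd, Finset.sum_eq_single σ]
    · rw [Pi.single_eq_same]
      have h0 := hw0 σ
      rw [hw] at h0 ⊢
      by_cases h : σ = 1
      · subst h; simp [hu1]
      · by_cases h2 : u σ = 0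
        · simp [h, h2]
        · simp only [h, h2, if_false]
          field_simp
    · intro τ _ hne
      rw [Pi.single_eq_of_ne hne, mul_zero]
    · simp
  · intro j l L hl
    have h1 := hηb l (B j) (A * (A * L)) ((NumberField.house_mul_le _ _).trans
      (mul_le_mul (hBA j) (hyh l L hl) (NumberField.house_nonneg _) hA0))
    have e1 : η l (X j) = ∑ σ, u σ * ι (σ (B j * y l)) := by
      rw [hη, hX]
      refine Finset.sum_congr rfl fun σ _ => ?_
      rw [map_mul, map_mul]; ring
    rw [e1]
    refine h1.trans ?_
    have : U * (A * (A * L)) = U * (A * A) * L := by ring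
    rw [this]
    exact mul_le_mul_of_nonneg_right (by linarith) (Nat.cast_nonneg L)
  · intro m l N L hm hl
    have h1 := hηb l (y m) (A * N * (A * L)) ((NumberField.house_mul_le _ _).trans
      (mul_le_mul (hyh m N hm) (hyh l L hl) (NumberField.house_nonneg _)
        (mul_nonneg hA0 (Nat.cast_nonneg N))))
    rw [hηpt]
    refine h1.trans ?_
    have : U * (A * N * (A * L)) = U * (A * A) * (L * N) := by ring
    rw [this, mul_assoc (κ:ℝ)]
    exact mul_le_mul_of_nonneg_right (by linarith) (by positivity)
  · intro m l
    rw [hηpt, hEx _ ((hyi m).mul (hyi l))]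
  · intro m l N L hm hl
    have h1 := hE (κ ^ 2 * N * L) (y m * y l) ((hyi m).mul (hyi l)) (by
      refine (NumberField.house_mul_le _ _).trans ?_
      refine (mul_le_mul (hyh m N hm) (hyh l L hl) (NumberField.house_nonneg _)
        (mul_nonneg hA0 (Nat.cast_nonneg N))).trans ?_
      push_cast
      calc A * N * (A * L) ≤ κ * N * (κ * L) := by gcongr
        _ = _ := by ring)
    refine ⟨h1.1, h1.2.trans ?_⟩
    have : (κ0 : ℝ) ≤ κ := by linarith
    gcongr
  · intro l l' h
    obtain ⟨σ, hσ⟩ := hu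
    have h1 : ∀ l, η l (Pi.single σ 1) = u σ * ι (σ (y l)) := by
      intro l
      rw [hη, Finset.sum_eq_single σ]
      · simp
      · intro τ _ hne
        rw [Pi.single_eq_of_ne hne, mul_zero]
      · simp
    have h2 : u σ * ι (σ (y l)) = u σ * ι (σ (y l')) := by rw [← h1, ← h1, h]
    have h3 : y l = y l' := σ.injective (ι.injective (mul_left_cancel₀ hσ h2))
    have h4 : ∀ l j, B.repr (y l) j = l j := by
      intro l j
      have : y l = ∑ j, ((l j : ℕ) : ℚ) • B j := by
        rw [hy]
        refine Finset.sum_congr rfl fun j _ => ?_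
        rw [Algebra.smul_def]; simp
      rw [this, B.repr_sum_self]
    funext j
    have := h4 l j
    rw [h3, h4] at this
    exact_mod_cast this.symm
  · intro h
    have := LinearMap.congr_fun h (fun _ => 1)
    simp at this
end


lemma galois_aux (L : Type) [Field L] [CharZero L] (inst : Algebra ℚ L) (p : Polynomial ℚ)
    (h : @Polynomial.IsSplittingField ℚ L _ _ inst p) :
    Polynomial.IsSplittingField ℚ L p := by
  have : inst = DivisionRing.toRatAlgebra := Subsingleton.elim _ _
  subst this
  exact h

lemma field_ex (S : Finset ℂ) (hS : ∀ a ∈ S, IsAlgebraic ℚ a) :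
    ∃ (K : Type) (_ : Field K) (_ : NumberField K) (_ : IsGalois ℚ K) (ι : K →+* ℂ),
      ∀ a ∈ S, ∃ k, ι k = a := by
  classical
  obtain ⟨p, hp⟩ : ∃ p : Polynomial ℚ, p = ∏ a ∈ S, minpoly ℚ a := ⟨_, rfl⟩
  have hp0 : p ≠ 0 := by
    rw [hp, Finset.prod_ne_zero_iff]
    exact fun a ha => minpoly.ne_zero (hS a ha).isIntegral
  obtain ⟨L, _, hz, hs⟩ : ∃ (L : Type) (_ : Field L) (_ : CharZero L),
      Polynomial.IsSplittingField ℚ L p := by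
    have hz : CharZero p.SplittingField := charZero_of_injective_algebraMap
      (FaithfulSMul.algebraMap_injective ℚ p.SplittingField)
    exact ⟨p.SplittingField, inferInstance, hz,
      galois_aux p.SplittingField _ p (Polynomial.IsSplittingField.splittingField p)⟩
  have hnf : NumberField L :=
    { to_charZero := hz
      to_finiteDimensional := Polynomial.IsSplittingField.finiteDimensional _ p }
  have hnorm : Normal ℚ L := Normal.of_isSplittingField p
  have hgal : IsGalois ℚ L := { }
  let ι : L →+* ℂ :=
    (Polynomial.IsSplittingField.lift L p (IsAlgClosed.splits _) :
      L →ₐ[ℚ] ℂ)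
  refine ⟨L, inferInstance, hnf, hgal, ι, fun a ha => ?_⟩
  have h1 := hs.splits
  have h2 := h1.mem_range_of_isRoot (Polynomial.map_ne_zero hp0) (i := ι) (x := a) (by
    rw [Polynomial.map_map, Polynomial.IsRoot, Polynomial.eval_map]
    have : (ι.comp (algebraMap ℚ L)) = algebraMap ℚ ℂ := Subsingleton.elim _ _
    rw [this, ← Polynomial.aeval_def]
    rw [hp, map_prod]
    exact Finset.prod_eq_zero ha (minpoly.aeval _ _))
  obtain ⟨k, hk⟩ := h2
  exact ⟨k, hk⟩

section
variable {K : Type} [Field K] [NumberField K]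

lemma zpow_bound (a : K) (ha : a ≠ 0) (d : ℕ) (hi : IsIntegral ℤ ((d : K) * a))
    (hi' : IsIntegral ℤ ((d : K) * a⁻¹)) (H : ℝ) (h1 : (d:ℝ) ≤ H)
    (h2 : NumberField.house ((d : K) * a) ≤ H) (h3 : NumberField.house ((d : K) * a⁻¹) ≤ H)
    (M : ℕ) (t : ℤ) (ht : t.natAbs ≤ M) :
    IsIntegral ℤ ((d : K) ^ M * a ^ t) ∧ NumberField.house ((d : K) ^ M * a ^ t) ≤ H ^ M := by
  have key : ∀ (a' : K) (r : ℕ), r ≤ M → IsIntegral ℤ ((d : K) * a') →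
      NumberField.house ((d : K) * a') ≤ H →
      IsIntegral ℤ ((d : K) ^ M * a' ^ r) ∧ NumberField.house ((d : K) ^ M * a' ^ r) ≤ H ^ M := by
    intro a' r hr hi hh
    have e : (d : K) ^ M * a' ^ r = (d : K) ^ (M - r) * ((d : K) * a') ^ r := by
      rw [mul_pow, ← mul_assoc, ← pow_add, Nat.sub_add_cancel hr]
    rw [e]
    refine ⟨((isIntegral_natCast d).pow _).mul (hi.pow _), ?_⟩
    refine (NumberField.house_mul_le _ _).trans ?_
    have e2 : H ^ M = H ^ (M - r) * H ^ r := by rw [← pow_add, Nat.sub_add_cancel hr]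
    rw [e2]
    have hd := (BD.house_natCast_le (K := K) d).trans h1
    have g1 := (NumberField.house_pow_le (d : K) (M - r)).trans
      (pow_le_pow_left₀ (NumberField.house_nonneg _) hd (M - r))
    have g2 := (NumberField.house_pow_le ((d : K) * a') r).trans
      (pow_le_pow_left₀ (NumberField.house_nonneg _) hh r)
    have hH : 0 ≤ H := (Nat.cast_nonneg d).trans h1
    exact mul_le_mul g1 g2 (NumberField.house_nonneg _) (pow_nonneg hH _)
  rcases Int.natAbs_eq t with h | h
  · rw [h, zpow_natCast]
    exact key a _ ht hi h2
  · rw [h, zpow_neg, zpow_natCast, ← inv_pow]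
    exact key a⁻¹ _ ht hi' h3

lemma house_prod_le' {n : ℕ} (f : Fin n → K) :
    NumberField.house (∏ i, f i) ≤ ∏ i, NumberField.house (f i) := by
  unfold NumberField.house
  rw [map_prod]
  exact Finset.norm_prod_le _ _

lemma exists_denom (S : Finset K) : ∃ d : ℕ, 1 ≤ d ∧ ∀ x ∈ S, IsIntegral ℤ ((d : K) * x) := by
  obtain ⟨y, hy, h⟩ := exists_integral_multiples ℤ ℚ S
  refine ⟨y.natAbs, Nat.pos_of_ne_zero (Int.natAbs_ne_zero.2 hy), fun x hx => ?_⟩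
  have h1 := h x hx
  rw [zsmul_eq_mul] at h1
  have h3 : ((y.natAbs : ℕ) : K) = (((y.natAbs : ℕ) : ℤ) : K) := (Int.cast_natCast _).symm
  rcases Int.natAbs_eq y with h2 | h2
  · rw [h3, ← h2]; exact h1
  · have h4 : ((y.natAbs : ℕ) : ℤ) = -y := by omega
    rw [h3, h4, Int.cast_neg, neg_mul]
    exact h1.neg

theorem nf [IsGalois ℚ K] (ι : K →+* ℂ) (n : ℕ) (α β : Fin n → K) (b0 : K) (lam : Fin n → ℂ)
    (hα : ∀ i, α i ≠ 0) (hlam : ∀ i, Complex.exp (lam i) = ι (α i))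
    (hli : ∀ c : Fin n → ℚ, ∑ i, (c i : ℂ) * lam i = 0 → ∀ i, c i = 0)
    (hβ : ∀ i, IsIntegral ℤ (β i)) (hb0 : IsIntegral ℤ b0)
    (hrel : ∑ i, ι (β i) * lam i = ι b0) : ∀ i, β i = 0 := by
  classical
  by_contra hne
  obtain ⟨u, hu⟩ : ∃ u : (K ≃ₐ[ℚ] K) → ℂ, ∀ σ, u σ = ∑ i, ι (σ (β i)) * lam i := ⟨_, fun _ => rfl⟩
  have htr : ∀ x : K, ∑ σ : K ≃ₐ[ℚ] K, ι (σ x) = ((Algebra.trace ℚ K x : ℚ) : ℂ) := by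
    intro x
    rw [← map_sum, ← trace_eq_sum_automorphisms, eq_ratCast, map_ratCast]
  have hΛ : ∀ x : K, ∑ σ, u σ * ι (σ x) =
      ∑ i, ((Algebra.trace ℚ K (β i * x) : ℚ) : ℂ) * lam i := by
    intro x
    simp only [hu, Finset.sum_mul]
    rw [Finset.sum_comm]
    refine Finset.sum_congr rfl fun i _ => ?_
    rw [← htr, Finset.sum_mul]
    refine Finset.sum_congr rfl fun σ _ => ?_
    rw [map_mul, map_mul]; ring
  have hu0 : ∃ σ, u σ ≠ 0 := by
    by_contra! h
    apply hne
    intro i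
    have h1 : ∀ x, Algebra.trace ℚ K (β i * x) = 0 := by
      intro x
      refine hli (fun i => Algebra.trace ℚ K (β i * x)) ?_ i
      rw [← hΛ]
      simp [h]
    have h2 := traceForm_nondegenerate ℚ K
    exact h2.1 (β i) h1
  obtain ⟨t, htd⟩ : ∃ t : K → Fin n → ℤ, ∀ x i, t x i = ⌊Algebra.trace ℚ K (β i * x)⌋ :=
    ⟨_, fun _ _ => rfl⟩
  have ht : ∀ x, IsIntegral ℤ x → ∀ i, Algebra.trace ℚ K (β i * x) = t x i := by
    intro x hx i
    have h1 : IsIntegral ℤ (Algebra.trace ℚ K (β i * x)) :=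
      Algebra.isIntegral_trace ((hβ i).mul hx)
    obtain ⟨z, hz⟩ := IsIntegrallyClosed.isIntegral_iff.mp h1
    rw [htd, ← hz]; simp
  obtain ⟨h, hh⟩ := exists_nat_ge (∑ i, Fintype.card (K ≃ₐ[ℚ] K) * NumberField.house (β i))
  have htb : ∀ x, IsIntegral ℤ x → ∀ b : ℕ, NumberField.house x ≤ b → ∀ i,
      (t x i).natAbs ≤ h * b := by
    intro x hx b hb i
    have h1 : ‖∑ σ : K ≃ₐ[ℚ] K, ι (σ (β i * x))‖ ≤ 
        ∑ σ : K ≃ₐ[ℚ] K, NumberField.house (β i) * b := by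
      refine (norm_sum_le _ _).trans (Finset.sum_le_sum fun σ _ => ?_)
      refine (NumberField.norm_embedding_le_house _ _).trans ((house_aut σ _).trans ?_)
      exact (NumberField.house_mul_le _ _).trans
        (mul_le_mul_of_nonneg_left hb (NumberField.house_nonneg _))
    rw [htr, ht x hx i, Finset.sum_const, nsmul_eq_mul, Finset.card_univ, ← mul_assoc] at h1
    have h2 : (Fintype.card (K ≃ₐ[ℚ] K) : ℝ) * NumberField.house (β i) ≤ h :=
      (Finset.single_le_sum (f := fun i => (Fintype.card (K ≃ₐ[ℚ] K) : ℝ) * NumberField.house (β i))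
        (fun _ _ => mul_nonneg (Nat.cast_nonneg _) (NumberField.house_nonneg _))
        (Finset.mem_univ i)).trans hh
    have h3 := h1.trans (mul_le_mul_of_nonneg_right h2 (Nat.cast_nonneg b))
    rw [Rat.cast_intCast, Complex.norm_intCast, ← Int.cast_abs, Int.abs_eq_natAbs] at h3
    exact_mod_cast h3
  obtain ⟨d, hd, hdi⟩ := exists_denom (Finset.univ.image α ∪ Finset.univ.image fun i => (α i)⁻¹)
  obtain ⟨H, hH⟩ := exists_nat_ge ((d:ℝ) + ∑ i, NumberField.house ((d : K) * α i) +
    ∑ i, NumberField.house ((d : K) * (α i)⁻¹))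
  have s1 : ∀ i, NumberField.house ((d : K) * α i) ≤ ∑ i, NumberField.house ((d : K) * α i) :=
    fun i => Finset.single_le_sum (f := fun i => NumberField.house ((d : K) * α i))
      (fun _ _ => NumberField.house_nonneg _) (Finset.mem_univ i)
  have s2 : ∀ i, NumberField.house ((d : K) * (α i)⁻¹) ≤
      ∑ i, NumberField.house ((d : K) * (α i)⁻¹) :=
    fun i => Finset.single_le_sum (f := fun i => NumberField.house ((d : K) * (α i)⁻¹))
      (fun _ _ => NumberField.house_nonneg _) (Finset.mem_univ i)
  have s3 : 0 ≤ ∑ i, NumberField.house ((d : K) * α i) :=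
    Finset.sum_nonneg fun _ _ => NumberField.house_nonneg _
  have s4 : 0 ≤ ∑ i, NumberField.house ((d : K) * (α i)⁻¹) :=
    Finset.sum_nonneg fun _ _ => NumberField.house_nonneg _
  have s5 : (0:ℝ) ≤ d := Nat.cast_nonneg d
  refine core ι u b0 hb0 ?_ hu0 (fun x => ∏ i, α i ^ (t x i)) ?_ (d ^ (h * n)) (H ^ (h * n))
    (Nat.one_le_pow _ _ hd) ?_
  · rw [hu, ← hrel]; rfl
  · intro x hx
    rw [hΛ, Complex.exp_sum, map_prod]
    refine Finset.prod_congr rfl fun i _ => ?_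
    rw [ht x hx i, Rat.cast_intCast, Complex.exp_int_mul, hlam, map_zpow₀]
  · intro b x hx hb
    have hz := fun i => zpow_bound (α i) (hα i) d
      (hdi _ (Finset.mem_union_left _ (Finset.mem_image_of_mem _ (Finset.mem_univ i))))
      (hdi _ (Finset.mem_union_right _
        (Finset.mem_image_of_mem (fun i => (α i)⁻¹) (Finset.mem_univ i))))
      H (by linarith) ((s1 i).trans (by linarith)) ((s2 i).trans (by linarith)) (h * b) (t x i)
      (htb x hx b hb i)
    have e : (((d ^ (h * n) : ℕ)) : K) ^ b * ∏ i, α i ^ (t x i) =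
        ∏ i, ((d : K) ^ (h * b) * α i ^ (t x i)) := by
      rw [Finset.prod_mul_distrib, Finset.prod_const, Finset.card_univ, Fintype.card_fin]
      push_cast
      rw [← pow_mul, ← pow_mul]
      congr 2
      ring
    rw [e]
    refine ⟨IsIntegral.prod _ fun i _ => (hz i).1, (house_prod_le' _).trans ?_⟩
    refine (Finset.prod_le_prod (fun i _ => NumberField.house_nonneg _)
      (fun i _ => (hz i).2)).trans (le_of_eq ?_)
    rw [Finset.prod_const, Finset.card_univ, Fintype.card_fin]
    push_cast
    rw [← pow_mul, ← pow_mul]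
    congr 1
    ring
end

/-- (Baker) If `α₁, …, α_n` are non-zero algebraic numbers whose logarithms are linearly
independent over `ℚ`, then `1, log α₁, …, log α_n` are linearly independent over the field
of algebraic numbers. -/
theorem stmt7 (n : ℕ) (α : Fin n → ℂ)
    (h0 : ∀ i, α i ≠ 0) (halg : ∀ i, IsAlgebraic ℚ (α i))
    (hli : ∀ c : Fin n → ℚ, ∑ i, (c i : ℂ) * Complex.log (α i) = 0 → ∀ i, c i = 0) :
    ∀ (β₀ : ℂ) (β : Fin n → ℂ), IsAlgebraic ℚ β₀ → (∀ i, IsAlgebraic ℚ (β i)) →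
      β₀ + ∑ i, β i * Complex.log (α i) = 0 → β₀ = 0 ∧ ∀ i, β i = 0 := by
  classical
  intro β₀ β hβ₀ hβ hrel
  obtain ⟨K, _, _, _, ι, hι⟩ := field_ex
    (insert β₀ (Finset.univ.image α ∪ Finset.univ.image β)) (by
      intro a ha
      simp only [Finset.mem_insert, Finset.mem_union, Finset.mem_image, Finset.mem_univ,
        true_and] at ha
      rcases ha with rfl | ⟨i, rfl⟩ | ⟨i, rfl⟩
      · exact hβ₀
      · exact halg i
      · exact hβ i)
  obtain ⟨b0, hb0⟩ := hι β₀ (by simp)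
  choose a ha using fun i => hι (α i) (by simp)
  choose b hb using fun i => hι (β i) (by simp)
  obtain ⟨d, hd, hdi⟩ := exists_denom (insert b0 (Finset.univ.image b))
  have hd0 : (d : K) ≠ 0 := Nat.cast_ne_zero.2 (by omega)
  have hz := nf ι n a (fun i => (d : K) * b i) (-((d : K) * b0)) (fun i => Complex.log (α i))
    (fun i h => h0 i (by rw [← ha, h, map_zero]))
    (fun i => by rw [Complex.exp_log (h0 i), ha]) hli (fun i => hdi _ (by simp))
    (hdi _ (by simp)).neg (by
      simp only [map_mul, map_neg, map_natCast, hb, hb0]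
      have : ∑ i, β i * Complex.log (α i) = -β₀ := by linear_combination hrel
      simp only [mul_assoc]
      rw [← Finset.mul_sum, this]
      ring)
  have hβz : ∀ i, β i = 0 := by
    intro i
    rw [← hb, (mul_eq_zero.1 (hz i)).resolve_left hd0, map_zero]
  refine ⟨?_, hβz⟩
  simpa [hβz] using hrel
end

section
/- Let q > 1 be a prime power and let f₁, …, f_n be even, algebraic-valued, Dirichlet-type periodic functions with period q. Then L'(0,f₁), …, L'(0,f_n) are linearly independent over the field of algebraic numbers if and only if the functions f₁, …, f_n are linearly independent over the field of algebraic numbers. -/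
open scoped Real

/-- The value at `s = 0` of the derivative of the analytic continuation of
`L(s,f) = ∑_{n ≥ 1} f(n)/n^s`, given via `L(s,f) = q^{-s} ∑_{a=1}^q f(a) ζ(s, a/q)`
with `ζ` the Hurwitz zeta function. -/
noncomputable def Lderiv0 (q : ℕ) (f : ℤ → ℂ) : ℂ :=
  deriv (fun s : ℂ =>
    (q : ℂ) ^ (-s) *
      ∑ a ∈ Finset.Icc 1 q, f a * HurwitzZeta.hurwitzZeta (((a : ℝ) / q : ℝ) : UnitAddCircle) s) 0

section BakerPart

lemma bk_div_one (f : ℂ → ℂ) (hf : Differentiable ℂ f) (a : ℂ) (S : ℕ)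
    (h : (S : ℕ∞) ≤ analyticOrderAt f a) :
    ∃ G : ℂ → ℂ, Differentiable ℂ G ∧ ∀ z, f z = (z - a) ^ S * G z := by
  induction S generalizing f with
  | zero => exact ⟨f, hf, by simp⟩
  | succ S ih =>
    have hfa : f a = 0 := by
      apply apply_eq_zero_of_analyticOrderAt_ne_zero
      intro h0
      rw [h0] at h
      simp at h
    have hd : Differentiable ℂ (dslope f a) := by
      rw [← differentiableOn_univ] at hf ⊢
      exact (Complex.differentiableOn_dslope Filter.univ_mem).2 hf
    have hfac : ∀ z, f z = (z - a) * dslope f a z := by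
      intro z
      have := sub_smul_dslope f a z
      simp only [smul_eq_mul, hfa, sub_zero] at this
      exact this.symm
    have ho : (S : ℕ∞) ≤ analyticOrderAt (dslope f a) a := by
      have e : f = (fun z => z - a) * dslope f a := by
        ext z; simpa using hfac z
      rw [e, analyticOrderAt_mul (by fun_prop) (hd.analyticAt a)] at h
      have : analyticOrderAt (fun z : ℂ => z - a) a = 1 := analyticOrderAt_id_sub_const_self
      rw [this, add_comm] at h
      push_cast at h
      exact (ENat.add_le_add_iff_left (by simp : (1:ℕ∞) ≠ ⊤)).1 h
    obtain ⟨G, hG, hG'⟩ := ih _ hd ho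
    refine ⟨G, hG, fun z => ?_⟩
    rw [hfac, hG', pow_succ]; ring

lemma bk_div_all (f : ℂ → ℂ) (hf : Differentiable ℂ f) (X S : ℕ)
    (h : ∀ l < X, (S : ℕ∞) ≤ analyticOrderAt f (l : ℂ)) :
    ∃ G : ℂ → ℂ, Differentiable ℂ G ∧ ∀ z, f z = (∏ l ∈ Finset.range X, (z - l) ^ S) * G z := by
  induction X with
  | zero => exact ⟨f, hf, by simp⟩
  | succ X ih =>
    obtain ⟨G, hG, hG'⟩ := ih (fun l hl => h l (by omega))
    have hX := h X (by omega)
    have e : f = (fun z : ℂ => ∏ l ∈ Finset.range X, (z - (l:ℂ)) ^ S) * G := by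
      ext z; simpa using hG' z
    have hP : Differentiable ℂ (fun z : ℂ => ∏ l ∈ Finset.range X, (z - l) ^ S) := by fun_prop
    rw [e, analyticOrderAt_mul (hP.analyticAt _) (hG.analyticAt _)] at hX
    have h0 : analyticOrderAt (fun z : ℂ => ∏ l ∈ Finset.range X, (z - l) ^ S) (X : ℂ) = 0 := by
      rw [(hP.analyticAt _).analyticOrderAt_eq_zero]
      rw [Finset.prod_ne_zero_iff]
      intro l hl
      apply pow_ne_zero
      rw [sub_ne_zero]
      have := Finset.mem_range.1 hl
      exact_mod_cast this.ne'
    rw [h0, zero_add] at hX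
    obtain ⟨H, hH, hH'⟩ := bk_div_one G hG X S hX
    refine ⟨H, hH, fun z => ?_⟩
    rw [hG', hH', Finset.prod_range_succ]; ring

lemma bk_schwarz (f : ℂ → ℂ) (hf : Differentiable ℂ f) (X S : ℕ)
    (h : ∀ l < X, ∀ s < S, iteratedDeriv s f (l : ℂ) = 0) (R B M : ℝ) (w : ℂ) (hM : 0 < M)
    (hB : ∀ z, ‖z‖ ≤ R → ‖f z‖ ≤ B) (hw : ∀ l < X, ‖w - (l : ℂ)‖ ≤ M) (hR : X + 2 * M ≤ R)
    (hwR : ‖w‖ ≤ R) : ‖f w‖ * 2 ^ (X * S) ≤ B := by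
  obtain ⟨G, hG, hG'⟩ := bk_div_all f hf X S (fun l hl =>
    (natCast_le_analyticOrderAt_iff_iteratedDeriv_eq_zero (hf.analyticAt _)).2 (h l hl))
  have hR0 : 0 < R := by
    have : (0:ℝ) ≤ X := by positivity
    linarith
  have key : ‖G w‖ ≤ B / (2 * M) ^ (X * S) := by
    apply Complex.norm_le_of_forall_mem_frontier_norm_le (U := Metric.ball 0 R)
      Metric.isBounded_ball hG.diffContOnCl
    · intro z hz
      rw [frontier_ball _ hR0.ne'] at hz
      have hzR : ‖z‖ = R := by simpa using hz
      rw [le_div_iff₀ (by positivity)]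
      have h1 := hB z hzR.le
      rw [hG', norm_mul, norm_prod] at h1
      have h2 : (2 * M) ^ (X * S) ≤ ∏ l ∈ Finset.range X, ‖(z - l) ^ S‖ := by
        calc (2 * M) ^ (X * S) = ∏ l ∈ Finset.range X, (2 * M) ^ S := by
              rw [Finset.prod_const, Finset.card_range, ← pow_mul, mul_comm X S]
          _ ≤ _ := by
              apply Finset.prod_le_prod
              · intros; positivity
              · intro l hl
                rw [norm_pow]
                gcongr
                have h3 : ‖z‖ - ‖(l:ℂ)‖ ≤ ‖z - l‖ := norm_sub_norm_le _ _
                have h4 : (l:ℝ) ≤ X := by exact_mod_cast (Finset.mem_range.1 hl).le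
                simp only [Complex.norm_natCast] at h3
                linarith
      calc ‖G z‖ * (2 * M) ^ (X * S) ≤ ‖G z‖ * ∏ l ∈ Finset.range X, ‖(z - l) ^ S‖ := by gcongr
        _ ≤ B := by rw [mul_comm]; exact h1
    · rw [closure_ball _ hR0.ne']; simpa using hwR
  rw [le_div_iff₀ (by positivity)] at key
  calc ‖f w‖ * 2 ^ (X * S) ≤ (M ^ (X * S) * ‖G w‖) * 2 ^ (X * S) := by
        gcongr
        rw [hG', norm_mul, norm_prod]
        gcongr
        calc _ ≤ ∏ l ∈ Finset.range X, M ^ S := by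
              apply Finset.prod_le_prod
              · intros; positivity
              · intro l hl
                rw [norm_pow]
                gcongr
                exact hw l (Finset.mem_range.1 hl)
          _ = _ := by rw [Finset.prod_const, Finset.card_range, ← pow_mul, mul_comm X S]
    _ = ‖G w‖ * (2 * M) ^ (X * S) := by rw [mul_pow]; ring
    _ ≤ B := key
open NumberField
lemma bk_siegel (K : Type) [Field K] [NumberField K] : ∃ C : ℝ, 1 ≤ C ∧
    ∀ (α β : Type) [Fintype α] [Fintype β] (a : Matrix α β (𝓞 K)) (A : ℝ), 1 ≤ A →
      a ≠ 0 → 0 < Fintype.card α → 2 * Fintype.card α ≤ Fintype.card β →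
      (∀ i j, house (a i j : K) ≤ A) →
      ∃ ξ : β → 𝓞 K, ξ ≠ 0 ∧ a.mulVec ξ = 0 ∧ ∀ l, house (ξ l : K) ≤ C * Fintype.card β * A := by
  classical
  have haux : ∃ c₁ : ℝ, ∀ (α β : Type) [Fintype α] [Fintype β] (a : Matrix α β (𝓞 K)) (A : ℝ),
      a ≠ 0 → 0 < Fintype.card α → Fintype.card α < Fintype.card β →
      (∀ i j, house (a i j : K) ≤ A) →
      ∃ ξ : β → 𝓞 K, ξ ≠ 0 ∧ a.mulVec ξ = 0 ∧ ∀ l, house (ξ l : K) ≤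
        c₁ * (c₁ * Fintype.card β * A) ^
          ((Fintype.card α : ℝ) / (Fintype.card β - Fintype.card α)) :=
    ⟨_, fun α β _ _ a A ha h0 hpq hb =>
      NumberField.house.exists_ne_zero_int_vec_house_le K a ha h0 hpq rfl hb rfl⟩
  obtain ⟨c₁, haux⟩ := haux
  set c := |c₁| with hc
  have hc0 : 0 ≤ c := abs_nonneg _
  refine ⟨c * (1 + c) + 1, by nlinarith, ?_⟩
  intro α β _ _ a A hA ha h0 hcard hb
  obtain ⟨ξ, h1, h2, h3⟩ := haux α β a A ha h0 (by omega) hb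
  refine ⟨ξ, h1, h2, fun l => (h3 l).trans ?_⟩
  set p : ℝ := (Fintype.card α : ℝ) with hp
  set q : ℝ := (Fintype.card β : ℝ) with hq
  have hp1 : 1 ≤ p := by rw [hp]; exact_mod_cast h0
  have hpq : 2 * p ≤ q := by rw [hp, hq]; exact_mod_cast hcard
  have he : p / (q - p) ≤ 1 := by rw [div_le_one (by linarith)]; linarith
  have he0 : 0 ≤ p / (q - p) := div_nonneg (by linarith) (by linarith)
  set b := c₁ * q * A
  have hbb : |b ^ (p / (q - p))| ≤ 1 + |b| := by
    refine (Real.abs_rpow_le_abs_rpow _ _).trans ?_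
    rcases le_total (|b|) 1 with h | h
    · exact (Real.rpow_le_one (abs_nonneg _) h he0).trans (by linarith [abs_nonneg b])
    · exact (Real.rpow_le_rpow_of_exponent_le h he).trans (by rw [Real.rpow_one]; linarith)
  have hbe : |b| = c * q * A := by
    simp only [b, abs_mul, abs_of_nonneg (by linarith : 0 ≤ q), abs_of_nonneg (by linarith : 0 ≤ A), hc]
  calc _ ≤ |c₁ * b ^ (p / (q - p))| := le_abs_self _
    _ = c * |b ^ (p / (q - p))| := by rw [abs_mul]
    _ ≤ c * (1 + c * q * A) := by rw [← hbe]; gcongr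
    _ ≤ (c * (1 + c) + 1) * q * A := by
      have : 1 ≤ q * A := by nlinarith
      nlinarith [mul_nonneg hc0 (by linarith : 0 ≤ q * A - 1)]

open NumberField
lemma bk_liouville (K : Type) [Field K] [NumberField K] (σ : K →+* ℂ) (x : 𝓞 K) (hx : x ≠ 0) :
    1 ≤ ‖σ x‖ * house (x : K) ^ (Module.finrank ℚ K - 1) := by
  refine le_trans ?_ (norm_norm_le_norm_mul_house_pow (x : K) σ)
  have h1 : Algebra.norm ℤ x ≠ 0 := Algebra.norm_ne_zero_iff.2 hx
  have h2 := Algebra.coe_norm_int x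
  rw [← h2]
  have h3 : (1:ℤ) ≤ |Algebra.norm ℤ x| := Int.one_le_abs h1
  have h4 : (1:ℝ) ≤ |(Algebra.norm ℤ x : ℝ)| := by exact_mod_cast h3
  simpa [← Rat.norm_cast_real] using h4


/-- abstract data -/
noncomputable def bkF {K I ι : Type} [Field K] [NumberField K] [Fintype I]
    (σ : K →+* ℂ) (p : I → 𝓞 K) (c : (ι → ℕ) → I → 𝓞 K) (w : I → ℂ)
    (m : ι → ℕ) (z : ℂ) : ℂ := ∑ k, σ (p k) * σ (c m k) * Complex.exp (w k * z)

lemma bkF_diff {K I ι : Type} [Field K] [NumberField K] [Fintype I]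
    (σ : K →+* ℂ) (p : I → 𝓞 K) (c : (ι → ℕ) → I → 𝓞 K) (w : I → ℂ) (m : ι → ℕ) :
    Differentiable ℂ (bkF σ p c w m) := by
  unfold bkF; fun_prop

lemma bkF_deriv {K I ι : Type} [Field K] [NumberField K] [Fintype I] [Fintype ι] [DecidableEq ι]
    (σ : K →+* ℂ) (p : I → 𝓞 K) (c : (ι → ℕ) → I → 𝓞 K) (w : I → ℂ) (b : I → ι → ℂ) (lam : ι → ℂ)
    (hw : ∀ k, w k = ∑ r, b k r * lam r)
    (hc : ∀ m k r, σ (c (m + Pi.single r 1) k) = σ (c m k) * b k r) (m : ι → ℕ) :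
    deriv (bkF σ p c w m) = fun z => ∑ r, lam r * bkF σ p c w (m + Pi.single r 1) z := by
  ext z
  have h : HasDerivAt (bkF σ p c w m)
      (∑ k, σ (p k) * σ (c m k) * (Complex.exp (w k * z) * w k)) z := by
    unfold bkF
    apply HasDerivAt.fun_sum
    intro k _
    apply HasDerivAt.const_mul
    have := ((hasDerivAt_id z).const_mul (w k)).cexp
    simpa using this
  rw [h.deriv]
  simp only [bkF, hc, Finset.mul_sum]
  rw [Finset.sum_comm]
  refine Finset.sum_congr rfl fun k _ => ?_
  rw [hw k, Finset.mul_sum, Finset.mul_sum]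
  refine Finset.sum_congr rfl fun r _ => ?_
  ring

lemma bkF_iter {K I ι : Type} [Field K] [NumberField K] [Fintype I] [Fintype ι] [DecidableEq ι]
    (σ : K →+* ℂ) (p : I → 𝓞 K) (c : (ι → ℕ) → I → 𝓞 K) (w : I → ℂ) (b : I → ι → ℂ) (lam : ι → ℂ)
    (hw : ∀ k, w k = ∑ r, b k r * lam r)
    (hc : ∀ m k r, σ (c (m + Pi.single r 1) k) = σ (c m k) * b k r) (T : ℕ) (z : ℂ)
    (hz : ∀ m : ι → ℕ, (∀ r, m r < T) → bkF σ p c w m z = 0) (s : ℕ) :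
    ∀ m : ι → ℕ, (∀ r, m r + s < T) → iteratedDeriv s (bkF σ p c w m) z = 0 := by
  induction s with
  | zero => intro m hm; rw [iteratedDeriv_zero]; exact hz m (by simpa using hm)
  | succ s ih =>
    intro m hm
    rw [iteratedDeriv_succ', bkF_deriv σ p c w b lam hw hc]
    rw [iteratedDeriv_fun_sum (fun r _ => by
      have : Differentiable ℂ (fun z => lam r * bkF σ p c w (m + Pi.single r 1) z) :=
        (bkF_diff σ p c w _).const_mul _
      exact this.contDiff.contDiffAt)]
    refine Finset.sum_eq_zero fun r _ => ?_
    rw [iteratedDeriv_const_mul_field, ih, mul_zero]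
    intro r'
    have := hm r'
    simp only [Pi.add_apply]
    by_cases h : r' = r
    · subst h; simp; omega
    · simp [h]; omega

lemma bkF_nat {K I ι : Type} [Field K] [NumberField K] [Fintype I]
    (σ : K →+* ℂ) (p : I → 𝓞 K) (c : (ι → ℕ) → I → 𝓞 K) (w : I → ℂ) (u : I → 𝓞 K)
    (hu : ∀ k, Complex.exp (w k) = σ (u k)) (m : ι → ℕ) (l : ℕ) :
    bkF σ p c w m l = σ ((∑ k, p k * c m k * u k ^ l : 𝓞 K) : K) := by
  simp only [bkF, map_sum, map_mul, map_pow]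
  refine Finset.sum_congr rfl fun k _ => ?_
  rw [mul_comm (w k), Complex.exp_nat_mul, hu]

lemma bk_step {K I ι : Type} [Field K] [NumberField K] [Fintype I] [Fintype ι] [DecidableEq ι]
    (σ : K →+* ℂ) (p : I → 𝓞 K) (c : (ι → ℕ) → I → 𝓞 K) (w : I → ℂ) (b : I → ι → ℂ) (lam : ι → ℂ)
    (u : I → 𝓞 K)
    (hw : ∀ k, w k = ∑ r, b k r * lam r)
    (hc : ∀ m k r, σ (c (m + Pi.single r 1) k) = σ (c m k) * b k r)
    (hu : ∀ k, Complex.exp (w k) = σ (u k)) (T S X X' : ℕ) (E : ℝ) (hXX : X ≤ X') (hX' : 0 < X')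
    (hz : ∀ m : ι → ℕ, (∀ r, m r < T + S) → ∀ l < X, bkF σ p c w m l = 0)
    (hcard : (Fintype.card I : ℝ) ≤ Real.exp E)
    (hp : ∀ k, house (p k : K) ≤ Real.exp E)
    (hcb : ∀ m : ι → ℕ, (∀ r, m r < T + S) → ∀ k, house (c m k : K) ≤ Real.exp E)
    (hub : ∀ k, ∀ l < X', house (u k : K) ^ l ≤ Real.exp E)
    (hwb : ∀ k, ‖w k‖ * (3 * X') ≤ E)
    (hE : 4 * E * Module.finrank ℚ K < X * S * Real.log 2) :
    ∀ m : ι → ℕ, (∀ r, m r < T) → ∀ l < X', bkF σ p c w m l = 0 := by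
  intro m hm l hl
  have hm' : ∀ r, m r < T + S := fun r => (hm r).trans_le (by omega)
  rw [bkF_nat σ p c w u hu]
  set x : 𝓞 K := ∑ k, p k * c m k * u k ^ l with hx
  by_contra hne
  have hx0 : x ≠ 0 := by
    rintro h; apply hne; rw [h]; simp
  have hL := bk_liouville K σ x hx0
  have hexp4 : Real.exp (4 * E) = Real.exp E * (Real.exp E * Real.exp E * Real.exp E) := by
    rw [← Real.exp_add, ← Real.exp_add, ← Real.exp_add]; congr 1; ring
  have hhouse : house (x : K) ≤ Real.exp (4 * E) := by
    have : (x : K) = ∑ k, (p k : K) * (c m k : K) * (u k : K) ^ l := by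
      rw [hx]; simp
    rw [this]
    refine (house_sum_le_sum_house _ _).trans ?_
    refine (Finset.sum_le_card_nsmul _ _ (Real.exp E * Real.exp E * Real.exp E) ?_).trans ?_
    · intro k _
      refine (house_mul_le _ _).trans ?_
      have := house_nonneg (c m k : K)
      have h4 := house_nonneg ((u k : K) ^ l)
      have h5 := house_nonneg ((p k : K))
      gcongr
      · refine (house_mul_le _ _).trans ?_
        gcongr
        · exact hp k
        · exact hcb m hm' k
      · exact (house_pow_le _ _).trans (hub k l hl)
    · rw [nsmul_eq_mul, hexp4, Finset.card_univ]
      gcongr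
  have hF : ∀ z : ℂ, ‖z‖ ≤ 3 * X' → ‖bkF σ p c w m z‖ ≤ Real.exp (4 * E) := by
    intro z hz'
    unfold bkF
    refine (norm_sum_le_of_le _ (fun k _ => ?_) : _ ≤ ∑ k : I, Real.exp E * Real.exp E * Real.exp E).trans ?_
    · rw [norm_mul, norm_mul]
      gcongr
      · exact (norm_embedding_le_house _ _).trans (hp k)
      · exact (norm_embedding_le_house _ _).trans (hcb m hm' k)
      · rw [Complex.norm_exp]
        apply Real.exp_le_exp.2
        refine (Complex.re_le_norm _).trans ?_
        rw [norm_mul]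
        refine le_trans ?_ (hwb k)
        gcongr
    · rw [Finset.sum_const, nsmul_eq_mul, hexp4, Finset.card_univ]
      gcongr
  have hXr : (X:ℝ) ≤ X' := by exact_mod_cast hXX
  have hX'r : (0:ℝ) < X' := by exact_mod_cast hX'
  have hlr : (l:ℝ) ≤ X' := by exact_mod_cast hl.le
  have hsch := bk_schwarz (bkF σ p c w m) (bkF_diff σ p c w m) X S (by
      intro l' hl' s hs
      exact bkF_iter σ p c w b lam hw hc (T + S) l' (fun m' hm' => hz m' hm' l' hl') s m
        (fun r => by have := hm r; omega)) (3 * X') (Real.exp (4 * E)) X' l hX'r hF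
    (by
      intro l' hl'
      have h1 : ((l:ℂ) - l') = (((l:ℝ) - (l':ℝ) : ℝ) : ℂ) := by push_cast; rfl
      rw [h1, Complex.norm_real, Real.norm_eq_abs, abs_le]
      have : (l':ℝ) ≤ X' := by exact_mod_cast (hl'.le.trans hXX)
      constructor <;> linarith [Nat.cast_nonneg (α := ℝ) l, Nat.cast_nonneg (α := ℝ) l'])
    (by linarith) (by rw [Complex.norm_natCast]; linarith)
  rw [bkF_nat σ p c w u hu, ← hx] at hsch
  have hd : 0 < Module.finrank ℚ K := Module.finrank_pos
  have hfin : (2:ℝ) ^ (X * S) ≤ Real.exp (4 * E) ^ (Module.finrank ℚ K) := by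
    calc (2:ℝ) ^ (X * S) = 1 * 2 ^ (X * S) := by ring
      _ ≤ (‖σ x‖ * house (x : K) ^ (Module.finrank ℚ K - 1)) * 2 ^ (X * S) := by gcongr
      _ = (‖σ x‖ * 2 ^ (X * S)) * house (x : K) ^ (Module.finrank ℚ K - 1) := by ring
      _ ≤ Real.exp (4 * E) * Real.exp (4 * E) ^ (Module.finrank ℚ K - 1) := by
        have := house_nonneg (x : K)
        gcongr
      _ = _ := by rw [← pow_succ']; congr 1; omega
  rw [← Real.exp_nat_mul, ← Real.log_le_log_iff (by positivity) (by positivity), Real.log_exp,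
    Real.log_pow] at hfin
  push_cast at hfin
  linarith


noncomputable def bkC {K ι : Type} [Field K] [NumberField K] [Fintype ι] (β : ι → 𝓞 K) (L : ℕ)
    (m : ι → ℕ) (k : Fin L × (ι → Fin L)) : 𝓞 K :=
  ∏ r, (((k.2 r : ℕ) : 𝓞 K) + ((k.1 : ℕ) : 𝓞 K) * β r) ^ (m r)

noncomputable def bkU {K ι : Type} [Field K] [NumberField K] [Fintype ι] (a0 : 𝓞 K) (a : ι → 𝓞 K)
    (L : ℕ) (k : Fin L × (ι → Fin L)) : 𝓞 K := a0 ^ (k.1 : ℕ) * ∏ r, a r ^ (k.2 r : ℕ)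

noncomputable def bkB {K ι : Type} [Field K] [NumberField K] (σ : K →+* ℂ) (β : ι → 𝓞 K)
    (L : ℕ) (k : Fin L × (ι → Fin L)) (r : ι) : ℂ := (k.2 r : ℕ) + (k.1 : ℕ) * σ (β r)

lemma bk_house_prod {K ι : Type} [Field K] [NumberField K] (s : Finset ι) (f : ι → K) :
    house (∏ i ∈ s, f i) ≤ ∏ i ∈ s, house (f i) := by
  simpa [house, map_prod] using Finset.norm_prod_le s (fun i => canonicalEmbedding K (f i))

lemma bkC_house {K ι : Type} [Field K] [NumberField K] [Fintype ι] (β : ι → 𝓞 K) (L T : ℕ)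
    (A : ℝ) (hA : 1 ≤ A) (hβ : ∀ r, house (β r : K) ≤ A) (hL : 1 ≤ L)
    (m : ι → ℕ) (hm : ∀ r, m r < T) (k : Fin L × (ι → Fin L)) :
    house (bkC β L m k : K) ≤ (L * (1 + A)) ^ (T * Fintype.card ι) := by
  have hLr : (1:ℝ) ≤ L := by exact_mod_cast hL
  unfold bkC
  change house (algebraMap (𝓞 K) K _) ≤ _
  rw [map_prod]
  refine (bk_house_prod _ _).trans ?_
  calc _ ≤ ∏ r : ι, (L * (1 + A)) ^ T := by
        apply Finset.prod_le_prod
        · intros; exact house_nonneg _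
        intro r _
        rw [map_pow]
        refine (house_pow_le _ _).trans ?_
        have h1 : house (algebraMap (𝓞 K) K (((k.2 r : ℕ) : 𝓞 K) + ((k.1 : ℕ) : 𝓞 K) * β r))
            ≤ L * (1 + A) := by
          rw [map_add, map_mul, map_natCast, map_natCast]
          refine (house_add_le _ _).trans ?_
          rw [house_nat_mul]
          have h2 : house (((k.2 r : ℕ) : K)) = (k.2 r : ℕ) := by
            have := house_intCast (K := K) ((k.2 r : ℕ) : ℤ)
            simpa using this
          rw [h2, mul_add, mul_one]
          have h3 : ((k.2 r : ℕ) : ℝ) ≤ L := by exact_mod_cast (k.2 r).2.le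
          have h4 : ((k.1 : ℕ) : ℝ) ≤ L := by exact_mod_cast (k.1).2.le
          have := hβ r
          have h5 := house_nonneg (β r : K)
          gcongr
        calc _ ≤ (L * (1 + A)) ^ (m r) := by
              have := house_nonneg (algebraMap (𝓞 K) K (((k.2 r : ℕ) : 𝓞 K) + ((k.1 : ℕ) : 𝓞 K) * β r))
              gcongr
          _ ≤ _ := by
              apply pow_le_pow_right₀
              · nlinarith
              · exact (hm r).le
    _ = _ := by rw [Finset.prod_const, Finset.card_univ, ← pow_mul]

lemma bkU_house {K ι : Type} [Field K] [NumberField K] [Fintype ι] (a0 : 𝓞 K) (a : ι → 𝓞 K) (L : ℕ)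
    (A : ℝ) (hA : 1 ≤ A) (h0 : house (a0 : K) ≤ A) (ha : ∀ r, house (a r : K) ≤ A)
    (k : Fin L × (ι → Fin L)) :
    house (bkU a0 a L k : K) ≤ A ^ (L * (Fintype.card ι + 1)) := by
  have key : ∀ (x : 𝓞 K) (i : Fin L), house (x : K) ≤ A → house ((x : K) ^ (i : ℕ)) ≤ A ^ L := by
    intro x i hx
    refine (house_pow_le _ _).trans ?_
    have := house_nonneg (x : K)
    calc house (x : K) ^ (i:ℕ) ≤ A ^ (i:ℕ) := by gcongr
      _ ≤ A ^ L := pow_le_pow_right₀ hA i.2.le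
  unfold bkU
  change house (algebraMap (𝓞 K) K _) ≤ _
  rw [map_mul, map_prod, map_pow]
  refine (house_mul_le _ _).trans ?_
  have h2 : house (∏ r, algebraMap (𝓞 K) K (a r ^ (k.2 r : ℕ))) ≤ (A ^ L) ^ Fintype.card ι := by
    refine (bk_house_prod _ _).trans ?_
    calc _ ≤ ∏ r : ι, A ^ L := by
          apply Finset.prod_le_prod
          · intros; exact house_nonneg _
          intro r _
          rw [map_pow]
          exact key (a r) (k.2 r) (ha r)
      _ = _ := by rw [Finset.prod_const, Finset.card_univ]
  calc _ ≤ A ^ L * (A ^ L) ^ Fintype.card ι := by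
        have := house_nonneg (∏ r, algebraMap (𝓞 K) K (a r ^ (k.2 r : ℕ)))
        gcongr
        exact key a0 k.1 h0
    _ = _ := by rw [← pow_succ', ← pow_mul]

lemma bkB_bound {K ι : Type} [Field K] [NumberField K] [Fintype ι] (σ : K →+* ℂ) (β : ι → 𝓞 K)
    (lam : ι → ℂ) (L : ℕ) (A : ℝ) (hA : 1 ≤ A) (hβ : ∀ r, house (β r : K) ≤ A)
    (hlam : ∀ r, ‖lam r‖ ≤ A) (k : Fin L × (ι → Fin L)) :
    ‖∑ r, bkB σ β L k r * lam r‖ ≤ Fintype.card ι * (L * (1 + A) * A) := by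
  refine (norm_sum_le_of_le _ (fun r _ => ?_) :
    _ ≤ ∑ r : ι, (L * (1 + A) * A : ℝ)).trans (by rw [Finset.sum_const, nsmul_eq_mul, Finset.card_univ])
  rw [norm_mul]
  gcongr
  · unfold bkB
    refine (norm_add_le _ _).trans ?_
    rw [norm_mul, Complex.norm_natCast, Complex.norm_natCast, mul_add, mul_one]
    have h3 : ((k.2 r : ℕ) : ℝ) ≤ L := by exact_mod_cast (k.2 r).2.le
    have h4 : ((k.1 : ℕ) : ℝ) ≤ L := by exact_mod_cast (k.1).2.le
    have := (norm_embedding_le_house (β r : K) σ).trans (hβ r)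
    gcongr
  · exact hlam r

lemma bk_vander {I : Type} [Fintype I] (v w : I → ℂ) (hw : Function.Injective w)
    (h : ∀ l < Fintype.card I, ∑ k, v k * w k ^ l = 0) : v = 0 := by
  have e := (Fintype.equivFin I).symm
  have := Matrix.eq_zero_of_forall_pow_sum_mul_pow_eq_zero (f := w ∘ e) (v := v ∘ e)
    (hw.comp e.injective) (fun i => by
      rw [← h i i.2]
      exact Fintype.sum_equiv e _ _ (fun _ => rfl))
  ext k
  have h2 := congrFun this (e.symm k)
  simpa using h2
set_option maxHeartbeats 2000000 in
lemma bk_core {K ι : Type} [Field K] [NumberField K] [Fintype ι] [DecidableEq ι] (σ : K →+* ℂ)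
    (a0 : 𝓞 K) (a β : ι → 𝓞 K) (lam : ι → ℂ) (ha : ∀ r, Complex.exp (lam r) = σ (a r))
    (ha0 : Complex.exp (∑ r, σ (β r) * lam r) = σ a0)
    (hinj : ∀ L, Function.Injective (fun k : Fin L × (ι → Fin L) => σ (bkU a0 a L k))) : False := by
  obtain ⟨C₁, hC₁, hsiegel⟩ := bk_siegel K
  set n := Fintype.card ι with hn
  set A : ℝ := 1 + house (a0 : K) + ∑ r, house (a r : K) + ∑ r, house (β r : K) + ∑ r, ‖lam r‖
    with hAdef
  have hs1 : 0 ≤ ∑ r, house (a r : K) := Finset.sum_nonneg fun r _ => house_nonneg _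
  have hs2 : 0 ≤ ∑ r, house (β r : K) := Finset.sum_nonneg fun r _ => house_nonneg _
  have hs3 : 0 ≤ ∑ r, ‖lam r‖ := Finset.sum_nonneg fun r _ => norm_nonneg _
  have hs4 := house_nonneg (a0 : K)
  have hA : 1 ≤ A := by linarith
  have hAa0 : house (a0 : K) ≤ A := by linarith
  have hAa : ∀ r, house (a r : K) ≤ A := fun r => by
    have := Finset.single_le_sum (f := fun r => house (a r : K))
      (fun r _ => house_nonneg _) (Finset.mem_univ r)
    linarith
  have hAβ : ∀ r, house (β r : K) ≤ A := fun r => by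
    have := Finset.single_le_sum (f := fun r => house (β r : K))
      (fun r _ => house_nonneg _) (Finset.mem_univ r)
    linarith
  have hAl : ∀ r, ‖lam r‖ ≤ A := fun r => by
    have := Finset.single_le_sum (f := fun r => ‖lam r‖)
      (fun r _ => norm_nonneg _) (Finset.mem_univ r)
    linarith
  clear_value A
  obtain ⟨J, hJ⟩ : ∃ x : ℕ, x = 4 * (n + 1) ^ 2 := ⟨_, rfl⟩
  have hJ1 : 1 ≤ J := by rw [hJ]; nlinarith [sq_nonneg n]
  obtain ⟨Cu, hCu⟩ : ∃ x : ℝ, x = A * (n + 1) := ⟨_, rfl⟩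
  obtain ⟨Cc, hCc⟩ : ∃ x : ℝ, x = (4 * n + 5) * (J * n) := ⟨_, rfl⟩
  obtain ⟨Cd, hCd⟩ : ∃ x : ℝ, x = (4 * n + 4) * (n + 1) := ⟨_, rfl⟩
  obtain ⟨Cw, hCw⟩ : ∃ x : ℝ, x = 3 * n * (1 + A) * A := ⟨_, rfl⟩
  have hCu0 : 0 ≤ Cu := by rw [hCu]; positivity
  have hCc0 : 0 ≤ Cc := by rw [hCc]; positivity
  have hCd0 : 0 ≤ Cd := by rw [hCd]; positivity
  have hCw0 : 0 ≤ Cw := by rw [hCw]; positivity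
  obtain ⟨C, hC⟩ : ∃ x : ℝ, x = Cu + Cc + Cd + Cw + C₁ := ⟨_, rfl⟩
  have hC0 : 0 ≤ C := by rw [hC]; positivity
  set d : ℕ := Module.finrank ℚ K with hd
  have hlog2 : 0 < Real.log 2 := Real.log_pos (by norm_num)
  -- choose g
  obtain ⟨g, hg⟩ := exists_nat_gt ((2 * J ^ n : ℝ) + (1 + A) + 4 * C * d / Real.log 2)
  have hJn : (0:ℝ) ≤ 2 * J ^ n := by positivity
  have hq0 : 0 ≤ 4 * C * d / Real.log 2 := by positivity
  have hgA : 1 + A ≤ g := by linarith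
  have hgJr : (2 * J ^ n : ℝ) ≤ g := by linarith
  have hgJ : 2 * J ^ n ≤ g := by exact_mod_cast hgJr
  have hgd : 4 * C * d < g * Real.log 2 := by
    rw [← div_lt_iff₀ hlog2]; linarith
  have hg1r : (1:ℝ) ≤ g := by linarith
  have hg1 : 1 ≤ g := by exact_mod_cast hg1r
  have hgexp : (g:ℝ) ≤ Real.exp g := by linarith [Real.add_one_le_exp (g:ℝ)]
  obtain ⟨L, hL⟩ : ∃ x : ℕ, x = g ^ (4 * n + 4) := ⟨_, rfl⟩
  obtain ⟨S, hS⟩ : ∃ x : ℕ, x = g ^ (4 * n + 6) := ⟨_, rfl⟩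
  obtain ⟨X, hX⟩ : ∃ x : ℕ → ℕ, ∀ j, x j = g ^ (2 * n + 2 + j) := ⟨_, fun _ => rfl⟩
  obtain ⟨Y, hY⟩ : ∃ x : ℕ → ℝ, ∀ j, x j = (g:ℝ) ^ (4 * n + 5) * X j := ⟨_, fun _ => rfl⟩
  have hL1 : 1 ≤ L := hL ▸ Nat.one_le_pow _ _ hg1
  have hS1 : 1 ≤ S := hS ▸ Nat.one_le_pow _ _ hg1
  have hX1 : ∀ j, 1 ≤ X j := fun j => hX j ▸ Nat.one_le_pow _ _ hg1
  have hYg : ∀ j, (g:ℝ) ^ (4 * n + 7) ≤ Y j := by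
    intro j
    simp only [hY, hX]
    push_cast
    rw [← pow_add]
    exact pow_le_pow_right₀ hg1r (by omega)
  have hXle : ∀ i j, i ≤ j → X i ≤ X j := fun i j h => by
    rw [hX, hX]; exact Nat.pow_le_pow_right hg1 (by omega)
  have hY1 : ∀ j, 1 ≤ Y j := fun j => (one_le_pow₀ hg1r).trans (hYg j)
  have hYg1 : ∀ j, (g:ℝ) ≤ Y j := fun j =>
    (le_self_pow₀ hg1r (by omega)).trans (hYg j)
  have hY0 : ∀ j, Y 0 ≤ Y j := by
    intro j
    rw [hY, hY]
    have : (X 0 : ℝ) ≤ X j := by exact_mod_cast hXle 0 j (Nat.zero_le _)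
    gcongr
  have hcardI : Fintype.card (Fin L × (ι → Fin L)) = L ^ (n + 1) := by
    rw [Fintype.card_prod, Fintype.card_fun, Fintype.card_fin, ← hn, pow_succ']
  have bcard : ∀ j, (Fintype.card (Fin L × (ι → Fin L)) : ℝ) ≤ Real.exp (Cd * Y j) := by
    intro j
    rw [hcardI, hL]
    push_cast
    rw [← pow_mul]
    calc (g:ℝ) ^ ((4 * n + 4) * (n + 1)) ≤ Real.exp g ^ ((4 * n + 4) * (n + 1)) := by gcongr
      _ = Real.exp (Cd * g) := by
        rw [← Real.exp_nat_mul, hCd]; push_cast; rfl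
      _ ≤ _ := by
        apply Real.exp_le_exp.2
        gcongr
        exact hYg1 j
  have bc : ∀ j, ∀ m : ι → ℕ, (∀ r, m r < J * S) → ∀ k : (Fin L × (ι → Fin L)),
      house (bkC β L m k : K) ≤ Real.exp (Cc * Y j) := by
    intro j m hm k
    refine (bkC_house β L (J * S) A hA hAβ hL1 m hm k).trans ?_
    calc ((L:ℝ) * (1 + A)) ^ (J * S * n) ≤ ((L:ℝ) * g) ^ (J * S * n) := by gcongr
      _ = (g:ℝ) ^ ((4 * n + 5) * (J * S * n)) := by
        rw [hL]; push_cast; rw [← pow_succ, ← pow_mul]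
      _ ≤ Real.exp g ^ ((4 * n + 5) * (J * S * n)) := by gcongr
      _ = Real.exp (Cc * (g:ℝ) ^ (4 * n + 7)) := by
        rw [← Real.exp_nat_mul, hCc, hS]; push_cast; congr 1; ring
      _ ≤ _ := by
        apply Real.exp_le_exp.2
        gcongr
        exact hYg j
  have bu : ∀ j, ∀ k : (Fin L × (ι → Fin L)), ∀ l < X (j + 1), house (bkU a0 a L k : K) ^ l ≤ Real.exp (Cu * Y j) := by
    intro j k l hl
    have hlr : (l:ℝ) ≤ X (j + 1) := by exact_mod_cast hl.le
    have h1 := bkU_house a0 a L A hA hAa0 hAa k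
    have h2 := house_nonneg (bkU a0 a L k : K)
    calc _ ≤ (A ^ (L * (n + 1))) ^ l := by gcongr
      _ ≤ (Real.exp A ^ (L * (n + 1))) ^ l := by
        gcongr; linarith [Real.add_one_le_exp A]
      _ = Real.exp (Cu * (L * l)) := by
        rw [← pow_mul, ← Real.exp_nat_mul, hCu]; push_cast; congr 1; ring
      _ ≤ _ := by
        apply Real.exp_le_exp.2
        gcongr
        calc (L:ℝ) * l ≤ L * X (j + 1) := by gcongr
          _ = Y j := by simp only [hL, hX, hY]; push_cast; ring
  -- Siegel
  have hT1 : 1 ≤ J * S := Nat.mul_pos hJ1 hS1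
  obtain ⟨p, hp0, hpz, hpb⟩ := hsiegel ((ι → Fin (J * S)) × Fin (X 0)) (Fin L × (ι → Fin L))
    (Matrix.of fun ml k => bkC β L (fun r => (ml.1 r : ℕ)) k * bkU a0 a L k ^ (ml.2 : ℕ))
    (Real.exp (Cc * Y 0) * Real.exp (Cu * Y 0))
    (by
      rw [← Real.exp_add]
      apply Real.one_le_exp
      have := hY1 0
      positivity)
    (by
      intro h
      have h1 := congrFun (congrFun h (fun _ => ⟨0, hT1⟩, ⟨0, hX1 0⟩)) (⟨0, hL1⟩, fun _ => ⟨0, hL1⟩)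
      simp [bkC] at h1)
    (by
      rw [Fintype.card_pos_iff]
      exact ⟨(fun _ => ⟨0, hT1⟩, ⟨0, hX1 0⟩)⟩)
    (by
      rw [hcardI, Fintype.card_prod, Fintype.card_fun, Fintype.card_fin, Fintype.card_fin, ← hn]
      calc 2 * ((J * S) ^ n * X 0) = (2 * J ^ n) * g ^ ((4 * n + 6) * n + (2 * n + 2)) := by
            simp only [hS, hX, mul_pow, ← pow_mul, pow_add]; ring
        _ ≤ g ^ 2 * g ^ ((4 * n + 6) * n + (2 * n + 2)) := by
            gcongr
            exact hgJ.trans (by nlinarith)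
        _ = L ^ (n + 1) := by
            rw [hL, ← pow_mul, ← pow_add]; congr 1; ring)
    (by
      intro ml k
      simp only [Matrix.of_apply]
      change house (algebraMap (𝓞 K) K _) ≤ _
      rw [map_mul, map_pow]
      refine (house_mul_le _ _).trans ?_
      have h1 := bc 0 (fun r => (ml.1 r : ℕ)) (fun r => (ml.1 r).2) k
      have h2 := bu 0 k ml.2 (ml.2.2.trans_le (hXle _ _ (Nat.zero_le _)))
      have h3 := house_nonneg ((algebraMap (𝓞 K) K) (bkU a0 a L k) ^ (ml.2:ℕ))
      gcongr
      exact (house_pow_le _ _).trans h2)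
  have bp : ∀ j k, house (p k : K) ≤ Real.exp (C * Y j) := by
    intro j k
    refine (hpb k).trans ?_
    have h1 := bcard 0
    have hY10 := hY1 0
    calc _ ≤ Real.exp (C₁ * Y 0) * Real.exp (Cd * Y 0) * (Real.exp (Cc * Y 0) * Real.exp (Cu * Y 0)) := by
          gcongr
          have := Real.add_one_le_exp (C₁ * Y 0)
          nlinarith
      _ = Real.exp ((C₁ + Cd + Cc + Cu) * Y 0) := by
          rw [← Real.exp_add, ← Real.exp_add, ← Real.exp_add]; congr 1; ring
      _ ≤ _ := by
          apply Real.exp_le_exp.2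
          have := hY0 j
          gcongr
          rw [hC]; linarith
  -- the data
  obtain ⟨w, hw⟩ : ∃ w : (Fin L × (ι → Fin L)) → ℂ, ∀ k, w k = ∑ r, bkB σ β L k r * lam r := ⟨_, fun _ => rfl⟩
  have hcstep : ∀ (m : ι → ℕ) (k : (Fin L × (ι → Fin L))) (r : ι), σ (bkC β L (m + Pi.single r 1) k) =
      σ (bkC β L m k) * bkB σ β L k r := by
    intro m k r
    have : bkC β L (m + Pi.single r 1) k = bkC β L m k *
        (((k.2 r : ℕ) : 𝓞 K) + ((k.1 : ℕ) : 𝓞 K) * β r) := by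
      unfold bkC
      simp only [Pi.add_apply, pow_add, Finset.prod_mul_distrib]
      congr 1
      rw [Finset.prod_eq_single r]
      · simp
      · intro r' _ h; simp [h]
      · simp
    rw [this]
    simp [bkB]
  have hexpw : ∀ k : (Fin L × (ι → Fin L)), Complex.exp (w k) = σ (bkU a0 a L k) := by
    intro k
    have h1 : w k = (k.1 : ℕ) * (∑ r, σ (β r) * lam r) + ∑ r, ((k.2 r : ℕ) : ℂ) * lam r := by
      simp only [hw, bkB, Finset.mul_sum, ← Finset.sum_add_distrib]
      refine Finset.sum_congr rfl fun r _ => ?_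
      ring
    rw [h1, Complex.exp_add, Complex.exp_nat_mul, ha0, Complex.exp_sum]
    simp only [Complex.exp_nat_mul, ha]
    simp [bkU]
  have main : ∀ j, j < J → ∀ m : ι → ℕ, (∀ r, m r < (J - j) * S) → ∀ l < X j,
      bkF σ p (bkC β L) w m l = 0 := by
    intro j
    induction j with
    | zero =>
      intro _ m hm l hl
      rw [bkF_nat σ p (bkC β L) w (bkU a0 a L) hexpw]
      have h1 := congrFun hpz (fun r => ⟨m r, by simpa using hm r⟩, ⟨l, hl⟩)
      simp only [Matrix.mulVec, dotProduct, Matrix.of_apply, Pi.zero_apply] at h1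
      have h2 : (∑ k, p k * bkC β L m k * bkU a0 a L k ^ l : 𝓞 K) = 0 := by
        rw [← h1]
        refine Finset.sum_congr rfl fun k _ => ?_
        ring
      rw [h2]; simp
    | succ j ih =>
      intro hj
      have hsplit : (J - j) * S = (J - (j + 1)) * S + S := by
        have : J - j = (J - (j + 1)) + 1 := by omega
        rw [this, add_mul, one_mul]
      have hle : ∀ x, x < (J - (j + 1)) * S + S → x < J * S := by
        intro x hx
        rw [← hsplit] at hx
        exact hx.trans_le (Nat.mul_le_mul_right _ (by omega))
      have hYj := hY1 j
      refine bk_step σ p (bkC β L) w (bkB σ β L) lam (bkU a0 a L) hw hcstep hexpw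
        ((J - (j + 1)) * S) S (X j) (X (j + 1)) (C * Y j)
        (hXle _ _ (Nat.le_succ _)) (hX1 _) ?_ ?_ (bp j) ?_ ?_ ?_ ?_
      · rw [← hsplit]; exact ih (by omega)
      · refine (bcard j).trans (Real.exp_le_exp.2 ?_)
        gcongr; rw [hC]; linarith
      · intro m hm k
        refine (bc j m (fun r => hle _ (hm r)) k).trans (Real.exp_le_exp.2 ?_)
        gcongr; rw [hC]; linarith
      · intro k l hl
        refine (bu j k l hl).trans (Real.exp_le_exp.2 ?_)
        gcongr; rw [hC]; linarith
      · intro k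
        have h1 := bkB_bound σ β lam L A hA hAβ hAl k
        rw [← hw, ← hn] at h1
        calc ‖w k‖ * (3 * (X (j + 1) : ℝ)) ≤ (n * (L * (1 + A) * A)) * (3 * (X (j + 1) : ℝ)) := by
              gcongr
          _ = Cw * Y j := by simp only [hCw, hL, hX, hY]; push_cast; ring
          _ ≤ C * Y j := by gcongr; rw [hC]; linarith
      · have h1 : (X j : ℝ) * S = g * Y j := by simp only [hS, hY]; push_cast; ring
        rw [h1]
        have : 0 < Y j := by linarith
        nlinarith
  have hfin := main (J - 1) (by omega) 0 (by
    intro r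
    have : J - (J - 1) = 1 := by omega
    rw [this, one_mul]; exact hS1)
  apply hp0
  have hv := bk_vander (fun k : (Fin L × (ι → Fin L)) => σ (p k)) (fun k => σ (bkU a0 a L k)) (hinj L) (by
    intro l hl
    have h1 := hfin l (hl.trans_le (by
      rw [hcardI, hX, hL, ← pow_mul]
      apply Nat.pow_le_pow_right hg1
      have : (4 * n + 4) * (n + 1) = J := by rw [hJ]; ring
      omega))
    rw [bkF_nat σ p (bkC β L) w (bkU a0 a L) hexpw] at h1
    rw [← h1]
    simp [bkC])
  ext k
  have := congrFun hv k
  simpa using this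
lemma bk_baker {ι : Type} [Fintype ι] [DecidableEq ι] (α : ι → ℝ) (hpos : ∀ i, 0 < α i)
    (hint : ∀ i, IsIntegral ℤ ((α i : ℂ)))
    (hind : ∀ g : ι → ℤ, ∑ i, (g i : ℝ) * Real.log (α i) = 0 → ∀ i, g i = 0)
    (b : ι → ℂ) (hb : ∀ i, IsAlgebraic ℚ (b i))
    (h : ∑ i, b i * (Real.log (α i) : ℂ) = 0) : ∀ i, b i = 0 := by
  by_contra! hcon
  obtain ⟨i0, hi0⟩ := hcon
  -- coefficients
  have hβalg : ∀ r, IsAlgebraic ℤ (-(b r) / b i0) := fun r =>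
    (IsFractionRing.isAlgebraic_iff ℤ ℚ ℂ).2 (by
      rw [div_eq_mul_inv]; exact (hb r).neg.mul (hb i0).inv)
  have hy : ∀ r, ∃ y : ℤ, y ≠ 0 ∧ IsIntegral ℤ (y • (-(b r) / b i0)) := fun r => by
    obtain ⟨y, hy0, hy⟩ := (hβalg r).exists_integral_multiple
    exact ⟨y, hy0, hy⟩
  choose y hy0 hyint using hy
  obtain ⟨D, hD⟩ : ∃ D : ℕ, D = (∏ r, y r).natAbs := ⟨_, rfl⟩
  have hDpos : 0 < D := by
    rw [hD]; exact Int.natAbs_pos.2 (Finset.prod_ne_zero_iff.2 fun r _ => hy0 r)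
  have hDint : ∀ r, IsIntegral ℤ ((D : ℂ) * (-(b r) / b i0)) := by
    intro r
    have h1 : (y r : ℤ) ∣ (D : ℤ) := by
      rw [hD]; exact Int.dvd_natAbs.2 (Finset.dvd_prod_of_mem _ (Finset.mem_univ r))
    obtain ⟨e, he⟩ := h1
    have h2 : (D : ℂ) = (e : ℂ) * (y r : ℂ) := by
      have : (D : ℂ) = ((D : ℤ) : ℂ) := by simp
      rw [this, he]; push_cast; ring
    rw [h2, mul_assoc]
    apply IsIntegral.mul
    · exact (isIntegral_algebraMap (R := ℤ) (A := ℂ) (x := e))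
    · have := hyint r
      rwa [zsmul_eq_mul] at this
  set T : Set ℂ := Set.range (fun i => (α i : ℂ)) ∪ Set.range (fun r => (D : ℂ) * (-(b r) / b i0))
    with hT
  have hTint : ∀ x ∈ T, IsIntegral ℤ x := by
    rintro x (⟨i, rfl⟩ | ⟨i, rfl⟩)
    · exact hint i
    · exact hDint i
  let K : IntermediateField ℚ ℂ := IntermediateField.adjoin ℚ T
  have hTfin : T.Finite := (Set.finite_range _).union (Set.finite_range _)
  have : Finite T := hTfin
  have : FiniteDimensional ℚ K :=
    IntermediateField.finiteDimensional_adjoin (fun x hx => (hTint x hx).tower_top)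
  have : NumberField K := ⟨⟩
  have hmem : ∀ x ∈ T, x ∈ K := fun x hx => IntermediateField.subset_adjoin ℚ T hx
  let σ : K →+* ℂ := algebraMap K ℂ
  have hlift : ∀ x ∈ T, ∃ z : 𝓞 K, σ (z : K) = x := by
    intro x hx
    have : IsIntegral ℤ (⟨x, hmem x hx⟩ : K) := by
      rw [← isIntegral_algebraMap_iff (A := K) (B := ℂ) (algebraMap K ℂ).injective]
      exact hTint x hx
    exact ⟨⟨⟨x, hmem x hx⟩, this⟩, rfl⟩
  have hl1 : ∀ i, ∃ z : 𝓞 K, σ (z : K) = α i := fun i => hlift _ (Or.inl ⟨i, rfl⟩)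
  have hl2 : ∀ r, ∃ z : 𝓞 K, σ (z : K) = (D : ℂ) * (-(b r) / b i0) :=
    fun r => hlift _ (Or.inr ⟨r, rfl⟩)
  choose a ha using hl1
  choose β hβ using hl2
  have hexp : ∀ i, Complex.exp (Real.log (α i) : ℂ) = α i := fun i => by
    rw [← Complex.ofReal_exp, Real.exp_log (hpos i)]
  refine bk_core (ι := {r : ι // r ≠ i0}) σ (a i0 ^ D) (fun r => a r) (fun r => β r)
    (fun r => (Real.log (α r) : ℂ)) (fun r => by rw [ha, hexp]) ?_ ?_
  · have hsum : ∑ r : {r : ι // r ≠ i0}, σ (β r) * (Real.log (α r) : ℂ) =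
        D * (Real.log (α i0) : ℂ) := by
      simp only [hβ]
      have h3 : ∑ r : {r : ι // r ≠ i0}, b r * (Real.log (α r) : ℂ) = - (b i0 * Real.log (α i0)) := by
        rw [Fintype.sum_eq_add_sum_subtype_ne _ i0] at h
        linear_combination h
      have h4 : ∀ r : {r : ι // r ≠ i0}, (D : ℂ) * (-(b r) / b i0) * (Real.log (α r) : ℂ) =
          (-(D : ℂ) / b i0) * (b r * (Real.log (α r) : ℂ)) := fun r => by ring
      simp only [h4, ← Finset.mul_sum, h3]
      field_simp
    rw [hsum, Complex.exp_nat_mul, hexp]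
    simp [ha]
  · intro L k k' hkk
    have hval : ∀ k : Fin L × ({r : ι // r ≠ i0} → Fin L),
        σ (bkU (a i0 ^ D) (fun r : {r : ι // r ≠ i0} => a r) L k) =
        ((Real.exp ((k.1 : ℕ) * D * Real.log (α i0) + ∑ r : {r : ι // r ≠ i0},
          (k.2 r : ℕ) * Real.log (α r)) : ℝ) : ℂ) := by
      intro k
      rw [Real.exp_add, Real.exp_sum]
      have e1 : Real.exp ((k.1 : ℕ) * D * Real.log (α i0)) = α i0 ^ (D * (k.1 : ℕ)) := by
        rw [← Real.exp_log (hpos i0), ← Real.exp_nat_mul, Real.log_exp]; push_cast; congr 1; ring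
      have e2 : ∀ r, Real.exp ((k.2 r : ℕ) * Real.log (α r)) = α r ^ (k.2 r : ℕ) := fun r => by
        rw [Real.exp_nat_mul, Real.exp_log (hpos r)]
      rw [e1]
      simp only [e2]
      unfold bkU
      simp [ha, pow_mul]
    simp only [hval] at hkk
    have h5 := Real.exp_injective (Complex.ofReal_injective hkk)
    have h6 := hind (fun i => if hi : i = i0 then (((k.1 : ℕ) : ℤ) - ((k'.1 : ℕ) : ℤ)) * D else
        ((k.2 ⟨i, hi⟩ : ℕ) : ℤ) - ((k'.2 ⟨i, hi⟩ : ℕ) : ℤ)) (by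
      rw [Fintype.sum_eq_add_sum_subtype_ne _ i0]
      have h7 : ∀ r : {r : ι // r ≠ i0}, (r : ι) ≠ i0 := fun r => r.2
      simp only [dif_pos, h7, dif_neg, not_false_eq_true]
      push_cast
      simp only [sub_mul, Finset.sum_sub_distrib]
      linear_combination h5)
    apply Prod.ext
    · have := h6 i0
      simp only [dif_pos] at this
      have hD' : (D : ℤ) ≠ 0 := by exact_mod_cast hDpos.ne'
      have := (mul_eq_zero.1 this).resolve_right hD'
      apply Fin.ext; omega
    · funext r
      have := h6 r
      have hr := r.2
      rw [dif_neg hr] at this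
      change ((k.2 r : ℕ) : ℤ) - ((k'.2 r : ℕ) : ℤ) = 0 at this
      apply Fin.ext; omega

end BakerPart

open Filter Topology in
lemma lz_parts (z : ℂ) (hz : ‖z‖ = 1) (hz1 : z ≠ 1) (c : ℕ → ℂ) (hc : Tendsto c atTop (𝓝 0))
    (hs : Summable fun n => ‖c n - c (n + 1)‖) :
    Tendsto (fun N => ∑ n ∈ Finset.range N, c n * z ^ n) atTop
      (𝓝 (∑' n, (c n - c (n + 1)) * ∑ i ∈ Finset.range (n + 1), z ^ i)) := by
  have hG : ∀ n, ‖∑ i ∈ Finset.range n, z ^ i‖ ≤ 2 / ‖z - 1‖ := by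
    intro n
    rw [geom_sum_eq hz1, norm_div]
    gcongr
    refine (norm_sub_le _ _).trans ?_
    simp [hz]; norm_num
  have hsum : Summable fun n => (c n - c (n + 1)) * ∑ i ∈ Finset.range (n + 1), z ^ i := by
    refine Summable.of_norm_bounded (hs.mul_right (2 / ‖z - 1‖)) fun n => ?_
    rw [norm_mul]
    gcongr
    exact hG _
  rw [← tendsto_add_atTop_iff_nat 1]
  have key : ∀ N, ∑ n ∈ Finset.range (N + 1), c n * z ^ n =
      c N * (∑ i ∈ Finset.range (N + 1), z ^ i) +
      ∑ n ∈ Finset.range N, (c n - c (n + 1)) * ∑ i ∈ Finset.range (n + 1), z ^ i := by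
    intro N
    have := Finset.sum_range_by_parts c (fun n => z ^ n) (N + 1)
    simp only [smul_eq_mul, Nat.add_sub_cancel] at this
    rw [this, sub_eq_add_neg, ← Finset.sum_neg_distrib]
    congr 1
    refine Finset.sum_congr rfl fun n _ => by ring
  simp only [key]
  rw [← zero_add (∑' n, _)]
  refine Tendsto.add ?_ hsum.hasSum.tendsto_sum_nat
  refine squeeze_zero_norm (a := fun N => ‖c N‖ * (2 / ‖z - 1‖)) (fun N => ?_) ?_
  · rw [norm_mul]; gcongr; exact hG _
  · simpa using hc.norm.mul_const (2 / ‖z - 1‖)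

lemma lz_bound (s : ℝ) (h1 : 1 ≤ s) (h2 : s ≤ 2) (n : ℕ) :
    ‖(1 / ((n : ℝ) ^ s) - 1 / (((n + 1 : ℕ) : ℝ) ^ s) : ℝ)‖ ≤ 4 / ((n : ℝ) + 1) ^ 2 := by
  rcases Nat.eq_zero_or_pos n with rfl | hn
  · simp [Real.zero_rpow (show s ≠ 0 by linarith)]
  have hn' : (1:ℝ) ≤ n := by exact_mod_cast hn
  have hn0 : (0:ℝ) < n := by linarith
  push_cast
  have hb := one_add_mul_self_le_rpow_one_add (s := -1 / ((n:ℝ) + 1)) (by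
    rw [le_div_iff₀ (by positivity)]; linarith) h1
  have e1 : 1 + -1 / ((n:ℝ) + 1) = n / (n + 1) := by field_simp; ring
  rw [e1, Real.div_rpow (by positivity) (by positivity)] at hb
  have hp : 0 < (n:ℝ) ^ s := by positivity
  have hp1 : 0 < ((n:ℝ) + 1) ^ s := by positivity
  have hle : (n:ℝ) ≤ (n:ℝ) ^ s := by
    conv_lhs => rw [← Real.rpow_one (n:ℝ)]
    exact Real.rpow_le_rpow_of_exponent_le hn' h1
  have hmono : (n:ℝ) ^ s ≤ ((n:ℝ) + 1) ^ s := by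
    apply Real.rpow_le_rpow <;> linarith
  have e2 : 1 / (n:ℝ) ^ s - 1 / ((n:ℝ) + 1) ^ s = (1 / (n:ℝ) ^ s) * (1 - (n:ℝ) ^ s / ((n:ℝ) + 1) ^ s) := by
    field_simp
  have h3 : 1 - (n:ℝ) ^ s / ((n:ℝ) + 1) ^ s ≤ 2 / (n + 1) := by
    have : s * (-1 / ((n:ℝ) + 1)) ≥ - (2 / (n + 1)) := by
      rw [ge_iff_le, neg_div', mul_div_assoc', div_le_div_iff_of_pos_right (by positivity)]; linarith
    linarith
  have h4 : 0 ≤ 1 - (n:ℝ) ^ s / ((n:ℝ) + 1) ^ s := by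
    rw [sub_nonneg, div_le_one hp1]; exact hmono
  rw [e2, Real.norm_of_nonneg (by positivity)]
  calc (1 / (n:ℝ) ^ s) * (1 - (n:ℝ) ^ s / ((n:ℝ) + 1) ^ s) ≤ (1 / n) * (2 / (n + 1)) := by
        gcongr
    _ ≤ 4 / ((n:ℝ) + 1) ^ 2 := by
        rw [div_mul_div_comm, div_le_div_iff₀ (by positivity) (by positivity)]
        nlinarith

lemma lz_slit (z : ℂ) (hzn : ‖z‖ = 1) (hz1 : z ≠ 1) : (1 - z) ∈ Complex.slitPlane := by
  rw [Complex.mem_slitPlane_iff]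
  left
  have h1 : z.re ≤ 1 := hzn ▸ Complex.re_le_norm z
  have h2 : z.re ≠ 1 := by
    intro h
    apply hz1
    have h3 : z.re ^ 2 + z.im ^ 2 = 1 := by
      have := Complex.sq_norm z
      rw [hzn, Complex.normSq_apply] at this; nlinarith
    have h4 : z.im = 0 := by rw [h] at h3; nlinarith
    exact Complex.ext h h4
  simp only [Complex.sub_re, Complex.one_re]
  have := lt_of_le_of_ne h1 h2
  linarith
lemma lz_basic (x : ℝ) (hx : (x : UnitAddCircle) ≠ 0) :
    ‖Complex.exp (2 * π * Complex.I * x)‖ = 1 ∧ Complex.exp (2 * π * Complex.I * x) ≠ 1 := by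
  set z := Complex.exp (2 * π * Complex.I * x) with hzdef
  have hzn : ‖z‖ = 1 := by
    have : (2 * π * Complex.I * x : ℂ) = ((2 * π * x : ℝ) : ℂ) * Complex.I := by push_cast; ring
    rw [hzdef, this, Complex.norm_exp_ofReal_mul_I]
  have hz1 : z ≠ 1 := by
    intro h
    apply hx
    rw [hzdef, Complex.exp_eq_one_iff] at h
    obtain ⟨n, hn⟩ := h
    rw [AddCircle.coe_eq_zero_iff]
    refine ⟨n, ?_⟩
    have h2 : (2 * π * Complex.I : ℂ) ≠ 0 := Complex.two_pi_I_ne_zero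
    have : (x:ℂ) = n := by
      apply mul_left_cancel₀ h2; rw [hn]; ring
    have h3 : x = n := by exact_mod_cast this
    simp [h3]
  exact ⟨hzn, hz1⟩

open Filter Topology HurwitzZeta in
lemma lz_expZeta_one (x : ℝ) (hx : (x : UnitAddCircle) ≠ 0) :
    expZeta x 1 = - Complex.log (1 - Complex.exp (2 * π * Complex.I * x)) := by
  set z := Complex.exp (2 * π * Complex.I * x) with hzdef
  obtain ⟨hzn, hz1⟩ := lz_basic x hx
  -- c
  let c : ℝ → ℕ → ℂ := fun s n => ((1 / ((n : ℝ) ^ s) : ℝ) : ℂ)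
  have hcd : ∀ s n, c s n - c s (n + 1) = ((1 / ((n : ℝ) ^ s) - 1 / (((n + 1 : ℕ) : ℝ) ^ s) : ℝ) : ℂ) := by
    intro s n; simp only [c]; push_cast; ring
  have hcb : ∀ s, 1 ≤ s → s ≤ 2 → ∀ n, ‖c s n - c s (n + 1)‖ ≤ 4 / ((n : ℝ) + 1) ^ 2 := by
    intro s h1 h2 n
    rw [hcd, Complex.norm_real]
    exact lz_bound s h1 h2 n
  have hbs : Summable fun n : ℕ => 4 / ((n : ℝ) + 1) ^ 2 := by
    have h1 := (summable_nat_add_iff 1).2 (Real.summable_one_div_nat_pow.2 (show 1 < 2 by norm_num))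
    have := h1.mul_left 4
    refine this.congr fun n => ?_
    push_cast; ring
  have hcs : ∀ s, 1 ≤ s → s ≤ 2 → Summable fun n => ‖c s n - c s (n + 1)‖ := fun s h1 h2 =>
    hbs.of_nonneg_of_le (fun n => norm_nonneg _) (hcb s h1 h2)
  have hc0 : ∀ s, 1 ≤ s → Tendsto (c s) atTop (𝓝 0) := by
    intro s h1
    have h2 := (tendsto_rpow_neg_atTop (show 0 < s by linarith)).comp tendsto_natCast_atTop_atTop
    have h3 := (Complex.continuous_ofReal.tendsto 0).comp h2
    rw [Complex.ofReal_zero] at h3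
    refine h3.congr fun n => ?_
    simp only [Function.comp, c, one_div, Real.rpow_neg (Nat.cast_nonneg n)]
  have hT := fun s h1 h2 => lz_parts z hzn hz1 (c s) (hc0 s h1) (hcs s h1 h2)
  -- value for s > 1
  have hval : ∀ s : ℝ, 1 < s → s ≤ 2 → expZeta x s =
      ∑' n, (c s n - c s (n + 1)) * ∑ i ∈ Finset.range (n + 1), z ^ i := by
    intro s h1 h2
    have hh := (hasSum_expZeta_of_one_lt_re x (s := (s:ℂ)) (by simpa using h1)).tendsto_sum_nat
    refine tendsto_nhds_unique hh ((hT s h1.le h2).congr fun N => ?_)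
    refine Finset.sum_congr rfl fun n _ => ?_
    simp only [c]
    rw [hzdef, ← Complex.exp_nat_mul, Complex.ofReal_div, Complex.ofReal_cpow (Nat.cast_nonneg n)]
    push_cast
    rw [one_div_mul_eq_div, mul_comm (n:ℂ)]
  have hlim1 : Tendsto (fun s : ℝ => expZeta x s) (𝓝[>] 1) (𝓝 (expZeta x 1)) := by
    have := ((differentiable_expZeta_of_ne_zero hx).continuous.comp Complex.continuous_ofReal).tendsto 1
    simp only [Function.comp_def, Complex.ofReal_one] at this
    exact this.mono_left nhdsWithin_le_nhds
  have hlim2 : Tendsto (fun s : ℝ => ∑' n, (c s n - c s (n + 1)) * ∑ i ∈ Finset.range (n + 1), z ^ i)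
      (𝓝[>] 1) (𝓝 (∑' n, (c 1 n - c 1 (n + 1)) * ∑ i ∈ Finset.range (n + 1), z ^ i)) := by
    have hnh : ∀ᶠ s : ℝ in 𝓝[>] 1, 1 < s ∧ s ≤ 2 := by
      have : Set.Ioc (1:ℝ) 2 ∈ 𝓝[>] (1:ℝ) := Ioc_mem_nhdsGT (by norm_num)
      filter_upwards [this] with s hs using hs
    refine tendsto_tsum_of_dominated_convergence (bound := fun n : ℕ => 4 / ((n : ℝ) + 1) ^ 2 * (2 / ‖z - 1‖))
      (hbs.mul_right _) ?_ ?_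
    · intro n
      apply Tendsto.mul_const
      have hcont : ∀ n, Tendsto (fun s => c s n) (𝓝[>] 1) (𝓝 (c 1 n)) := by
        intro n
        refine Tendsto.mono_left ?_ nhdsWithin_le_nhds
        refine (Complex.continuous_ofReal.tendsto _).comp ?_
        rcases Nat.eq_zero_or_pos n with rfl | hn
        · have : ∀ᶠ s : ℝ in 𝓝 1, 1 / (((0:ℕ):ℝ) ^ s) = 1 / (((0:ℕ):ℝ) ^ (1:ℝ)) := by
            filter_upwards [lt_mem_nhds (show (0:ℝ) < 1 by norm_num)] with s hs
            simp [Real.zero_rpow hs.ne']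
          exact tendsto_nhds_of_eventually_eq this
        · have hn0 : (0:ℝ) < n := by exact_mod_cast hn
          have hcn : Continuous fun s : ℝ => 1 / ((n:ℝ) ^ s) :=
            continuous_const.div (Real.continuous_const_rpow hn0.ne') (fun s => by positivity)
          exact hcn.tendsto 1
      exact (hcont n).sub (hcont (n + 1))
    · filter_upwards [hnh] with s hs n
      rw [norm_mul]
      gcongr
      · exact hcb s hs.1.le hs.2 n
      · rw [geom_sum_eq hz1, norm_div]
        gcongr
        refine (norm_sub_le _ _).trans ?_
        simp [hzn]; norm_num
  have heq : expZeta x 1 = ∑' n, (c 1 n - c 1 (n + 1)) * ∑ i ∈ Finset.range (n + 1), z ^ i := by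
    refine tendsto_nhds_unique hlim1 (hlim2.congr' ?_)
    have : Set.Ioc (1:ℝ) 2 ∈ 𝓝[>] (1:ℝ) := Ioc_mem_nhdsGT (by norm_num)
    filter_upwards [this] with s hs
    rw [hval s hs.1 hs.2]
  have hA := hT 1 le_rfl (by norm_num)
  rw [← heq] at hA
  have hAbel := Complex.tendsto_tsum_powerSeries_nhdsWithin_lt hA
  have hslit := lz_slit z hzn hz1
  have hL : Tendsto (fun r : ℝ => - Complex.log (1 - z * r)) (𝓝[<] 1) (𝓝 (- Complex.log (1 - z))) := by
    refine Tendsto.mono_left ?_ nhdsWithin_le_nhds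
    have : ContinuousAt (fun r : ℝ => - Complex.log (1 - z * r)) 1 := by
      refine ContinuousAt.neg (ContinuousAt.clog (by fun_prop) ?_)
      simpa using hslit
    simpa [ContinuousAt] using this
  have hAbel' := tendsto_map'_iff.1 hAbel
  refine tendsto_nhds_unique hAbel' (hL.congr' ?_)
  have : Set.Ioo (0:ℝ) 1 ∈ 𝓝[<] (1:ℝ) := Ioo_mem_nhdsLT (by norm_num)
  filter_upwards [this] with r hr
  have hn : ‖z * r‖ < 1 := by
    rw [norm_mul, hzn, one_mul, Complex.norm_real, Real.norm_of_nonneg hr.1.le]; exact hr.2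
  rw [← (Complex.hasSum_taylorSeries_neg_log hn).tsum_eq]
  simp only [Function.comp_def]
  refine tsum_congr fun n => ?_
  simp only [c, Real.rpow_one, mul_pow]
  push_cast
  ring

open HurwitzZeta in
lemma lz_cosZeta_one (x : ℝ) (hx : (x : UnitAddCircle) ≠ 0) :
    cosZeta x 1 = - (Real.log ‖1 - Complex.exp (2 * π * Complex.I * x)‖ : ℂ) := by
  rw [cosZeta_eq]
  have h2 : ((-x : ℝ) : UnitAddCircle) ≠ 0 := by simpa using hx
  have := lz_expZeta_one (-x) h2
  rw [AddCircle.coe_neg] at this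
  rw [this, lz_expZeta_one x hx]
  set z := Complex.exp (2 * π * Complex.I * x) with hz
  have h3 : Complex.exp (2 * π * Complex.I * ((-x : ℝ) : ℂ)) = (starRingEnd ℂ) z := by
    rw [hz, ← Complex.exp_conj]
    congr 1
    simp [Complex.conj_ofNat]
  have h4 : (1 - (starRingEnd ℂ) z) = (starRingEnd ℂ) (1 - z) := by simp
  obtain ⟨hzn, hz1⟩ := lz_basic x hx
  have h5 := Complex.slitPlane_arg_ne_pi (lz_slit z hzn hz1)
  rw [h3, h4, Complex.log_conj _ h5, ← Complex.log_ofReal_re]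
  apply Complex.ext
  · simp [Complex.log_re]
  · simp
open HurwitzZeta in
lemma lz_hurwitz_deriv (a : UnitAddCircle) (ha : a ≠ 0) :
    HasDerivAt (hurwitzZetaEven a) (cosZeta a 1 / 2) 0 := by
  have hd : HasDerivAt (fun s : ℂ => (2 * (2 * π : ℂ) ^ (-s) * Complex.Gamma s * cosZeta a s) *
      Complex.cos (π * s / 2)) (-(cosZeta a 1 / 2)) 1 := by
    have h1 : DifferentiableAt ℂ (fun s : ℂ => 2 * (2 * π : ℂ) ^ (-s) * Complex.Gamma s * cosZeta a s) 1 := by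
      have hpi : (2 * π : ℂ) ≠ 0 := by
        have := Real.pi_ne_zero
        simp [this]
      refine DifferentiableAt.mul (DifferentiableAt.mul (DifferentiableAt.mul ?_ ?_) ?_) ?_
      · fun_prop
      · exact (differentiableAt_id.neg).const_cpow (Or.inl hpi)
      · apply Complex.differentiableAt_Gamma
        intro m h
        have := congrArg Complex.re h
        simp at this
        have h2 : (0:ℝ) ≤ m := Nat.cast_nonneg m
        linarith
      · exact differentiable_cosZeta_of_ne_zero ha 1
    have h2 : HasDerivAt (fun s : ℂ => Complex.cos (π * s / 2)) (-Complex.sin (π * 1 / 2) * (π * 1 / 2)) 1 := by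
      have := (((hasDerivAt_id (1:ℂ)).const_mul (π:ℂ)).div_const 2).ccos
      simpa using this
    have h3 := h1.hasDerivAt.mul h2
    refine h3.congr_deriv ?_
    simp only [mul_one, Complex.cos_pi_div_two, Complex.sin_pi_div_two, mul_zero, zero_add,
      Complex.Gamma_one, Complex.cpow_neg_one]
    have : (π:ℂ) ≠ 0 := by exact_mod_cast Real.pi_ne_zero
    field_simp
  have hev : (fun s : ℂ => hurwitzZetaEven a (1 - s)) =ᶠ[nhds 1]
      (fun s : ℂ => (2 * (2 * π : ℂ) ^ (-s) * Complex.Gamma s * cosZeta a s) *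
      Complex.cos (π * s / 2)) := by
    have : ∀ᶠ s : ℂ in nhds 1, 0 < s.re :=
      Complex.continuous_re.continuousAt.eventually_const_lt (by simp)
    filter_upwards [this] with s hs
    rw [hurwitzZetaEven_one_sub a _ (Or.inl ha)]
    · ring
    · intro n h
      rw [h] at hs
      simp at hs
      have h2 : (0:ℝ) ≤ n := Nat.cast_nonneg n
      linarith
  have h4 := hd.congr_of_eventuallyEq hev
  have h5 : HasDerivAt (fun s : ℂ => 1 - s) (-1) (0:ℂ) := by
    simpa using (hasDerivAt_id (0:ℂ)).const_sub 1
  have h6 := HasDerivAt.comp (0:ℂ) (h₂ := fun s : ℂ => hurwitzZetaEven a (1 - s)) (h := fun s : ℂ => 1 - s)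
    (by simpa using h4) h5
  refine (h6.congr_of_eventuallyEq ?_).congr_deriv (by ring)
  filter_upwards with s
  simp

/-- log of `|1 - e(j/q)|` -/
noncomputable def zl (q : ℕ) [NeZero q] (j : ZMod q) : ℝ := Real.log ‖1 - ZMod.stdAddChar j‖

open HurwitzZeta in
lemma lz_LFunction_deriv (q : ℕ) [NeZero q] (Φ : ZMod q → ℂ) (he : ∀ j, Φ (-j) = Φ j) (h0 : Φ 0 = 0) :
    HasDerivAt (ZMod.LFunction Φ) (-(∑ j, Φ j * (zl q j : ℂ)) / 2) 0 := by
  have hfun : ZMod.LFunction Φ = fun s => (q:ℂ) ^ (-s) *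
      ∑ j : ZMod q, Φ j * hurwitzZetaEven (ZMod.toAddCircle j) s := by
    funext s; exact ZMod.LFunction_def_even he s
  rw [hfun]
  have hq0 : (q:ℂ) ≠ 0 := by exact_mod_cast NeZero.ne q
  have hne : ∀ j : ZMod q, j ≠ 0 → ZMod.toAddCircle j ≠ 0 := by
    intro j hj h
    apply hj
    apply ZMod.toAddCircle_injective q
    simpa using h
  have hterm : ∀ j : ZMod q, HasDerivAt (fun s => Φ j * hurwitzZetaEven (ZMod.toAddCircle j) s)
      (Φ j * (-(zl q j : ℂ) / 2)) 0 := by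
    intro j
    rcases eq_or_ne j 0 with rfl | hj
    · simp [h0, hasDerivAt_const]
    have h1 := lz_hurwitz_deriv _ (hne j hj)
    have h2 : cosZeta (ZMod.toAddCircle j) 1 = -(zl q j : ℂ) := by
      have h3 := hne j hj
      rw [ZMod.toAddCircle_apply] at h3 ⊢
      rw [lz_cosZeta_one _ h3, zl, ZMod.stdAddChar_apply, ZMod.toCircle_apply]
      congr 6
      push_cast
      ring
    rw [h2] at h1
    exact h1.const_mul _
  have hsum := HasDerivAt.fun_sum (u := Finset.univ) (fun j _ => hterm j)
  have hpow : HasDerivAt (fun s : ℂ => (q:ℂ) ^ (-s)) _ 0 :=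
    ((hasDerivAt_id (0:ℂ)).neg).const_cpow (Or.inl hq0)
  have := hpow.mul hsum
  refine this.congr_deriv ?_
  have hz : ∑ j : ZMod q, Φ j * hurwitzZetaEven (ZMod.toAddCircle j) 0 = 0 := by
    refine Finset.sum_eq_zero fun j _ => ?_
    rcases eq_or_ne j 0 with rfl | hj
    · simp [h0]
    · rw [hurwitzZetaEven_apply_zero, if_neg (hne j hj), mul_zero]
  rw [hz]
  simp only [neg_zero, Complex.cpow_zero, mul_zero, zero_add, one_mul]
  simp [Finset.sum_neg_distrib, Finset.sum_div, mul_div_assoc, neg_div]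

lemma lz_sum_zmod (q : ℕ) [NeZero q] (G : ZMod q → ℂ) :
    ∑ a ∈ Finset.Icc 1 q, G (a : ZMod q) = ∑ j, G j := by
  have hq : 0 < q := NeZero.pos q
  refine Finset.sum_nbij (fun a => (a : ZMod q)) (fun a _ => Finset.mem_univ _) ?_ ?_ (fun a _ => rfl)
  · intro a ha b hb hab
    simp only [Finset.coe_Icc, Set.mem_Icc] at ha hb
    have := (ZMod.natCast_eq_natCast_iff' a b q).1 hab
    rcases eq_or_lt_of_le ha.2 with h1 | h1 <;> rcases eq_or_lt_of_le hb.2 with h2 | h2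
    · omega
    · rw [h1, Nat.mod_self, Nat.mod_eq_of_lt h2] at this; omega
    · rw [h2, Nat.mod_self, Nat.mod_eq_of_lt h1] at this; omega
    · rwa [Nat.mod_eq_of_lt h1, Nat.mod_eq_of_lt h2] at this
  · intro j _
    by_cases h : j = 0
    · exact ⟨q, by simp; omega, by simp [h]⟩
    · refine ⟨j.val, ?_, by simp⟩
      have h1 := ZMod.val_lt j
      have h2 : j.val ≠ 0 := by rwa [Ne, ZMod.val_eq_zero]
      simp only [Finset.coe_Icc, Set.mem_Icc]; omega

lemma lz_periodic (q : ℕ) [NeZero q] (f : ℤ → ℂ) (hper : ∀ m : ℤ, f (m + q) = f m) (m : ℤ) :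
    f m = f ((m : ZMod q).val : ℤ) := by
  rw [ZMod.val_intCast]
  have hp : Function.Periodic f (q : ℤ) := hper
  have := hp.int_mul (m / q) (m % q)
  rw [← this]
  congr 1
  have := Int.emod_add_mul_ediv m q
  simp only [Int.cast_id]
  linarith

lemma lz_Lderiv0 (q : ℕ) [NeZero q] (hq : 1 < q) (f : ℤ → ℂ) (hper : ∀ m : ℤ, f (m + q) = f m)
    (heven : ∀ m : ℤ, f (-m) = f m) (hdir : ∀ m : ℤ, Int.gcd m q ≠ 1 → f m = 0) :
    Lderiv0 q f = -(∑ j : ZMod q, f (j.val : ℤ) * (zl q j : ℂ)) / 2 := by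
  have h := lz_LFunction_deriv q (fun j => f (j.val : ℤ)) (by
    intro j
    have h1 := lz_periodic q f hper (-(j.val : ℤ))
    rw [heven] at h1
    rw [h1]
    simp) (by simp only [ZMod.val_zero]; apply hdir; simp; omega)
  rw [← h.deriv]
  unfold Lderiv0
  congr 1
  funext s
  rw [ZMod.LFunction, ← lz_sum_zmod q]
  congr 1
  refine Finset.sum_congr rfl fun a _ => ?_
  rw [lz_periodic q f hper a, ZMod.toAddCircle_natCast]
  simp

open Filter Topology in
lemma lz_char_ne (q : ℕ) [NeZero q] (hq1 : 1 < q) (hq : IsPrimePow q) (χ : DirichletCharacter ℂ q)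
    (hχ : χ.Even) : ∑ j, χ j * (zl q j : ℂ) ≠ 0 := by
  obtain ⟨p, k, hp, hk, hqdef⟩ := (isPrimePow_nat_iff q).1 hq
  replace hqdef := hqdef.symm
  have hpf : q.primeFactors = {p} := by
    rw [hqdef, Nat.primeFactors_pow _ hk.ne', hp.primeFactors]
  have : Fact (1 < q) := ⟨hq1⟩
  have hD : HasDerivAt χ.LFunction (-(∑ j, χ j * (zl q j : ℂ)) / 2) 0 :=
    lz_LFunction_deriv q (fun j => χ j) (fun j => DirichletCharacter.Even.eval_neg χ j hχ) (MulChar.map_zero χ)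
  intro hzero
  rw [hzero] at hD
  simp only [neg_zero, zero_div] at hD
  by_cases h1 : χ = 1
  · subst h1
    have hp0 : (p:ℂ) ≠ 0 := by exact_mod_cast hp.ne_zero
    have hpow : HasDerivAt (fun s : ℂ => 1 - (p:ℂ) ^ (-s)) (Complex.log p) 0 := by
      have := (((hasDerivAt_id (0:ℂ)).neg).const_cpow (c := (p:ℂ)) (Or.inl hp0)).const_sub 1
      simpa using this
    have hz : DifferentiableAt ℂ riemannZeta 0 := differentiableAt_riemannZeta (by norm_num)
    have h2 := hpow.mul hz.hasDerivAt
    have h3 : HasDerivAt (DirichletCharacter.LFunction (1 : DirichletCharacter ℂ q)) _ 0 :=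
      h2.congr_of_eventuallyEq (by
        have : ∀ᶠ s : ℂ in 𝓝 0, s ≠ 1 := isOpen_ne.mem_nhds (by norm_num)
        filter_upwards [this] with s hs
        have := DirichletCharacter.LFunctionTrivChar_eq_mul_riemannZeta (N := q) hs
        rw [hpf, Finset.prod_singleton] at this
        exact this)
    have h4 := hD.unique h3
    simp only [riemannZeta_zero, neg_zero, Complex.cpow_zero, sub_self, zero_mul, add_zero] at h4
    have h5 : Complex.log p ≠ 0 := by
      rw [← Complex.natCast_log]
      have := Real.log_pos (show (1:ℝ) < p by exact_mod_cast hp.one_lt)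
      exact_mod_cast this.ne'
    have : (-1 / 2 : ℂ) ≠ 0 := by norm_num
    exact (mul_ne_zero h5 this) h4.symm
  · set ψ := χ⁻¹ with hψ
    set ψ₀ := ψ.primitiveCharacter with hψ₀
    have hψ1 : ψ ≠ 1 := by rw [hψ]; simpa using h1
    have : NeZero ψ.conductor := ⟨ψ.conductor_ne_zero⟩
    have hcl : DirichletCharacter.changeLevel ψ.conductor_dvd_level ψ₀ = ψ :=
      ψ.changeLevel_primitiveCharacter
    have hψ₀1 : ψ₀ ≠ 1 := by
      intro h; rw [h, DirichletCharacter.changeLevel_one] at hcl; exact hψ1 hcl.symm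
    have hcl' : DirichletCharacter.changeLevel ψ.conductor_dvd_level ψ₀⁻¹ = χ := by
      rw [map_inv, hcl, hψ, inv_inv]
    have hcond1 : ψ.conductor ≠ 1 := by
      intro h
      apply hψ1
      exact (DirichletCharacter.eq_one_iff_conductor_eq_one (χ := ψ)).2 h
    have hpc : p ∣ ψ.conductor := by
      obtain ⟨m, hm, hm'⟩ := (Nat.dvd_prime_pow hp).1 (ψ.conductor_dvd_level.trans hqdef.dvd)
      rw [hm']
      apply dvd_pow_self
      rintro rfl
      exact hcond1 (by simpa using hm')
    have hpz : ψ₀⁻¹ (p : ZMod ψ.conductor) = 0 := by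
      apply MulChar.map_nonunit
      rw [ZMod.isUnit_iff_coprime, hp.coprime_iff_not_dvd]
      exact fun h => h hpc
    have hL : χ.LFunction = ψ₀⁻¹.LFunction := by
      funext s
      conv_lhs => rw [← hcl']
      rw [DirichletCharacter.LFunction_changeLevel _ _ (Or.inl (by simpa using hψ₀1)), hpf,
        Finset.prod_singleton, hpz]
      simp
    have hψe : ψ₀.Even := by
      have h2 := ψ.primitiveCharacter_apply_of_isCoprime (a := -1) (isCoprime_one_left.neg_left)
      have h3 : ψ (-1) = 1 := by
        rw [hψ, MulChar.inv_apply_eq_inv', hχ, inv_one]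
      rw [DirichletCharacter.Even, hψ₀]
      simpa [h3] using h2
    have hψe' : (ψ₀⁻¹).Even := by
      rw [DirichletCharacter.Even, MulChar.inv_apply_eq_inv', hψe, inv_one]
    have hne1 : DirichletCharacter.completedLFunction ψ₀ 1 ≠ 0 := by
      intro h
      have h2 := DirichletCharacter.LFunction_eq_completed_div_gammaFactor ψ₀ 1 (Or.inl one_ne_zero)
      rw [h, zero_div] at h2
      exact DirichletCharacter.LFunction_apply_one_ne_zero hψ₀1 h2
    have hne0 : DirichletCharacter.completedLFunction ψ₀⁻¹ 0 ≠ 0 := by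
      intro h
      apply hne1
      have h2 := DirichletCharacter.IsPrimitive.completedLFunction_one_sub
        (DirichletCharacter.primitiveCharacter_isPrimitive ψ) 0
      rw [sub_zero, ← hψ₀, h, mul_zero] at h2
      exact h2
    rw [hL, hasDerivAt_iff_tendsto_slope] at hD
    have hcont : Tendsto (DirichletCharacter.completedLFunction ψ₀⁻¹) (𝓝[≠] 0)
        (𝓝 (DirichletCharacter.completedLFunction ψ₀⁻¹ 0)) :=
      ((DirichletCharacter.differentiable_completedLFunction (by simpa using hψ₀1)).continuous.tendsto
        0).mono_left nhdsWithin_le_nhds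
    have hG := Complex.Gammaℝ_residue_zero.inv₀ two_ne_zero
    have hlim := hcont.mul hG
    have hval : ∀ s : ℂ, ψ₀⁻¹.LFunction s =
        DirichletCharacter.completedLFunction ψ₀⁻¹ s / Complex.Gammaℝ s := by
      intro s
      rw [DirichletCharacter.LFunction_eq_completed_div_gammaFactor _ _ (Or.inr hcond1),
        hψe'.gammaFactor_def]
    have h0 : ψ₀⁻¹.LFunction 0 = 0 := by
      rw [hval]
      have : Complex.Gammaℝ 0 = 0 := Complex.Gammaℝ_eq_zero_iff.2 ⟨0, by simp⟩
      rw [this, div_zero]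
    have heq := tendsto_nhds_unique hD (hlim.congr' (by
      filter_upwards [self_mem_nhdsWithin] with s hs
      rw [slope_def_field, h0, hval]
      simp only [sub_zero]
      rw [mul_inv, div_div, div_eq_mul_inv, mul_inv, mul_comm s⁻¹]))
    exact (mul_ne_zero hne0 (by norm_num)) heq.symm

lemma zl_ne (q : ℕ) [NeZero q] (hq1 : 1 < q) (a : (ZMod q)ˣ) :
    (1 : ℂ) - ZMod.stdAddChar (a : ZMod q) ≠ 0 := by
  have : Fact (1 < q) := ⟨hq1⟩
  intro h
  have h1 : ZMod.stdAddChar (a : ZMod q) = ZMod.stdAddChar (0 : ZMod q) := by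
    rw [AddChar.map_zero_eq_one]; exact (sub_eq_zero.1 h).symm
  exact a.ne_zero (ZMod.injective_stdAddChar h1)

lemma zl_sq (q : ℕ) [NeZero q] (a : ZMod q) :
    (1 - ZMod.stdAddChar a) * (1 - ZMod.stdAddChar (-a)) = ((‖1 - ZMod.stdAddChar a‖ ^ 2 : ℝ) : ℂ) := by
  rw [AddChar.map_neg_eq_conj]
  have : 1 - (starRingEnd ℂ) (ZMod.stdAddChar a) = (starRingEnd ℂ) (1 - ZMod.stdAddChar a) := by simp
  rw [this, Complex.mul_conj, Complex.normSq_eq_norm_sq]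

lemma zl_neg (q : ℕ) [NeZero q] (a : ZMod q) : zl q (-a) = zl q a := by
  unfold zl
  rw [AddChar.map_neg_eq_conj]
  have : 1 - (starRingEnd ℂ) (ZMod.stdAddChar a) = (starRingEnd ℂ) (1 - ZMod.stdAddChar a) := by simp
  rw [this, RCLike.norm_conj]

lemma zl_prim (q : ℕ) [NeZero q] : IsPrimitiveRoot (ZMod.stdAddChar (1 : ZMod q)) q := by
  have h := Complex.isPrimitiveRoot_exp q (NeZero.ne q)
  have h2 := ZMod.stdAddChar_coe (N := q) 1
  rw [Int.cast_one] at h2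
  rw [h2]
  simpa using h

lemma zl_pow (q : ℕ) [NeZero q] (a : ZMod q) (m : ℕ) :
    (ZMod.stdAddChar a : ℂ) ^ m = ZMod.stdAddChar (a * (m : ZMod q)) := by
  rw [← AddChar.map_nsmul_eq_pow, nsmul_eq_mul, mul_comm]

lemma zl_conj_pos (q : ℕ) [NeZero q] (hq1 : 1 < q) (g h : (ZMod q)ˣ → ℕ)
    (hgh : ∑ a, (g a : ℝ) * zl q a = ∑ a, (h a : ℝ) * zl q a) (b : (ZMod q)ˣ) :
    ∑ a, (g a : ℝ) * zl q (b * a : (ZMod q)ˣ) = ∑ a, (h a : ℝ) * zl q (b * a : (ZMod q)ˣ) := by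
  have hpos : ∀ a : (ZMod q)ˣ, 0 < ‖1 - ZMod.stdAddChar (a : ZMod q)‖ := fun a =>
    norm_pos_iff.2 (zl_ne q hq1 a)
  have hprod : ∀ (k : (ZMod q)ˣ → ℕ) (b : (ZMod q)ˣ), ∑ a, (k a : ℝ) * zl q (b * a : (ZMod q)ˣ) =
      Real.log (∏ a, ‖1 - ZMod.stdAddChar ((b * a : (ZMod q)ˣ) : ZMod q)‖ ^ k a) := by
    intro k b
    rw [Real.log_prod (fun a _ => (pow_pos (hpos _) _).ne')]
    refine Finset.sum_congr rfl fun a _ => ?_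
    rw [Real.log_pow, zl]
  have hppos : ∀ (k : (ZMod q)ˣ → ℕ) (b : (ZMod q)ˣ),
      0 < ∏ a, ‖1 - ZMod.stdAddChar ((b * a : (ZMod q)ˣ) : ZMod q)‖ ^ k a := fun k b =>
    Finset.prod_pos fun a _ => pow_pos (hpos _) _
  let P : ((ZMod q)ˣ → ℕ) → Polynomial ℤ := fun k =>
    ∏ a : (ZMod q)ˣ, ((1 - Polynomial.X ^ (a : ZMod q).val) *
      (1 - Polynomial.X ^ (-(a : ZMod q)).val)) ^ k a
  have hP : ∀ (k : (ZMod q)ˣ → ℕ) (b : (ZMod q)ˣ), Polynomial.aeval (ZMod.stdAddChar (b : ZMod q)) (P k) =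
      (((∏ a, ‖1 - ZMod.stdAddChar ((b * a : (ZMod q)ˣ) : ZMod q)‖ ^ k a) ^ 2 : ℝ) : ℂ) := by
    intro k b
    simp only [P, map_prod, map_pow, map_mul, map_sub, map_one, Polynomial.aeval_X]
    rw [← Finset.prod_pow, Complex.ofReal_prod]
    refine Finset.prod_congr rfl fun a _ => ?_
    rw [← pow_mul, mul_comm (k a) 2, pow_mul, Complex.ofReal_pow, ← zl_sq, zl_pow, zl_pow,
      ZMod.natCast_zmod_val, ZMod.natCast_zmod_val]
    simp
  have hgh1 : ∑ a, (g a : ℝ) * zl q ((1 : (ZMod q)ˣ) * a : (ZMod q)ˣ) =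
      ∑ a, (h a : ℝ) * zl q ((1 : (ZMod q)ˣ) * a : (ZMod q)ˣ) := by
    simpa using hgh
  rw [hprod, hprod] at hgh1
  have h1 := Real.log_injOn_pos (hppos g 1) (hppos h 1) hgh1
  have hz : Polynomial.aeval (ZMod.stdAddChar (1 : ZMod q)) (P g - P h) = 0 := by
    have e1 := hP g 1
    have e2 := hP h 1
    rw [Units.val_one] at e1 e2
    rw [map_sub, e1, e2, h1, sub_self]
  have hint : IsIntegral ℤ (ZMod.stdAddChar (1 : ZMod q)) := (zl_prim q).isIntegral (NeZero.pos q)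
  have hdvd := minpoly.isIntegrallyClosed_dvd hint hz
  have hcop : Nat.Coprime (b : ZMod q).val q := ZMod.val_coe_unit_coprime b
  rw [(zl_prim q).minpoly_eq_pow_coprime hcop, zl_pow, one_mul, ZMod.natCast_zmod_val] at hdvd
  have hz2 := Polynomial.aeval_eq_zero_of_dvd_aeval_eq_zero hdvd (minpoly.aeval ℤ _)
  rw [map_sub, hP, hP, sub_eq_zero] at hz2
  have h3 := Complex.ofReal_injective hz2
  rw [hprod, hprod, (pow_left_inj₀ (hppos g b).le (hppos h b).le two_ne_zero).1 h3]

lemma zl_conj (q : ℕ) [NeZero q] (hq1 : 1 < q) (g : (ZMod q)ˣ → ℤ)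
    (hg : ∑ a, (g a : ℝ) * zl q a = 0) (b : (ZMod q)ˣ) :
    ∑ a, (g a : ℝ) * zl q (b * a : (ZMod q)ˣ) = 0 := by
  have hsp : ∀ a, (g a : ℝ) = ((g a).toNat : ℝ) - ((-(g a)).toNat : ℝ) := by
    intro a
    have := Int.toNat_sub_toNat_neg (g a)
    exact_mod_cast this.symm
  simp only [hsp, sub_mul, Finset.sum_sub_distrib, sub_eq_zero] at hg ⊢
  exact zl_conj_pos q hq1 _ _ hg b

lemma zl_sum_units (q : ℕ) [NeZero q] (F : ZMod q → ℂ) (h : ∀ j, ¬ IsUnit j → F j = 0) :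
    ∑ j, F j = ∑ u : (ZMod q)ˣ, F u :=
  (Fintype.sum_of_injective (fun u : (ZMod q)ˣ => (u : ZMod q)) Units.val_injective _ _
    (fun j hj => h j (fun ⟨u, hu⟩ => hj ⟨u, hu⟩)) (fun _ => rfl)).symm

lemma zl_indep (q : ℕ) [NeZero q] (hq1 : 1 < q) (hq : IsPrimePow q) (g : (ZMod q)ˣ → ℤ)
    (hg : ∑ a, (g a : ℝ) * zl q a = 0) (b : (ZMod q)ˣ) : g b + g (-b) = 0 := by
  have hev : ∀ χ : DirichletCharacter ℂ q, χ.Even → ∑ a : (ZMod q)ˣ, (g a : ℂ) * χ a = 0 := by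
    intro χ hχ
    have hχ' : (χ⁻¹).Even := by
      rw [DirichletCharacter.Even, MulChar.inv_apply_eq_inv', hχ, inv_one]
    have h1 := lz_char_ne q hq1 hq χ⁻¹ hχ'
    rw [zl_sum_units q _ (fun j hj => by rw [MulChar.map_nonunit _ hj, zero_mul])] at h1
    have h2 : (∑ a : (ZMod q)ˣ, (g a : ℂ) * χ a) * (∑ u : (ZMod q)ˣ, χ⁻¹ u * (zl q u : ℂ)) = 0 := by
      rw [Finset.sum_mul]
      have h3 : ∀ a : (ZMod q)ˣ, (g a : ℂ) * χ a * (∑ u : (ZMod q)ˣ, χ⁻¹ u * (zl q u : ℂ)) =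
          ∑ b : (ZMod q)ˣ, χ⁻¹ b * ((g a : ℂ) * (zl q (b * a : (ZMod q)ˣ) : ℂ)) := by
        intro a
        rw [← Equiv.sum_comp (Equiv.mulRight a), Finset.mul_sum]
        refine Finset.sum_congr rfl fun b _ => ?_
        have h4 : χ a * χ⁻¹ a = 1 := by
          rw [MulChar.inv_apply_eq_inv']
          exact mul_inv_cancel₀ (a.isUnit.map χ).ne_zero
        simp only [Equiv.coe_mulRight, Units.val_mul, map_mul]
        linear_combination ((g a : ℂ) * χ⁻¹ b * (zl q (b * a) : ℂ)) * h4
      simp only [h3]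
      rw [Finset.sum_comm]
      refine Finset.sum_eq_zero fun b _ => ?_
      rw [← Finset.mul_sum]
      have h5 := zl_conj q hq1 g hg b
      have h6 : ∑ a : (ZMod q)ˣ, (g a : ℂ) * (zl q (b * a : (ZMod q)ˣ) : ℂ) = 0 := by
        exact_mod_cast h5
      rw [h6, mul_zero]
    exact (mul_eq_zero.1 h2).resolve_right h1
  have hall : ∀ χ : DirichletCharacter ℂ q, ∑ a : (ZMod q)ˣ, ((g a + g (-a) : ℤ) : ℂ) * χ a = 0 := by
    intro χ
    have e1 : ∑ a : (ZMod q)ˣ, ((g a + g (-a) : ℤ) : ℂ) * χ a =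
        ∑ a : (ZMod q)ˣ, (g a : ℂ) * χ a + ∑ a : (ZMod q)ˣ, (g a : ℂ) * χ (-a : (ZMod q)ˣ) := by
      rw [← Equiv.sum_comp (Equiv.neg (ZMod q)ˣ) (fun a => (g a : ℂ) * χ (-a : (ZMod q)ˣ)),
        ← Finset.sum_add_distrib]
      refine Finset.sum_congr rfl fun a _ => ?_
      simp
      ring
    rw [e1]
    rcases χ.even_or_odd with h | h
    · have : ∀ a : (ZMod q)ˣ, χ (-a : (ZMod q)ˣ) = χ a := fun a => by
        rw [Units.val_neg]; exact DirichletCharacter.Even.eval_neg χ _ h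
      simp only [this, hev χ h, add_zero]
    · have : ∀ a : (ZMod q)ˣ, χ (-a : (ZMod q)ˣ) = - χ a := fun a => by
        rw [Units.val_neg]; exact DirichletCharacter.Odd.eval_neg χ _ h
      simp only [this, mul_neg, Finset.sum_neg_distrib, add_neg_cancel]
  have h7 : ∑ χ : DirichletCharacter ℂ q, χ (b : ZMod q)⁻¹ *
      ∑ a : (ZMod q)ˣ, ((g a + g (-a) : ℤ) : ℂ) * χ a = 0 := by
    simp only [hall, mul_zero, Finset.sum_const_zero]
  have h8 : ∑ χ : DirichletCharacter ℂ q, χ (b : ZMod q)⁻¹ *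
      ∑ a : (ZMod q)ˣ, ((g a + g (-a) : ℤ) : ℂ) * χ a =
      ∑ a : (ZMod q)ˣ, ((g a + g (-a) : ℤ) : ℂ) *
        ∑ χ : DirichletCharacter ℂ q, χ (b : ZMod q)⁻¹ * χ a := by
    simp only [Finset.mul_sum]
    rw [Finset.sum_comm]
    refine Finset.sum_congr rfl fun a _ => Finset.sum_congr rfl fun χ _ => by ring
  rw [h8] at h7
  simp only [DirichletCharacter.sum_char_inv_mul_char_eq ℂ b.isUnit, Units.val_inj] at h7
  simp only [mul_ite, mul_zero, Finset.sum_ite_eq, Finset.mem_univ, if_true] at h7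
  have h9 : ((q.totient : ℕ) : ℂ) ≠ 0 := by
    exact_mod_cast (Nat.totient_pos.2 (NeZero.pos q)).ne'
  have := (mul_eq_zero.1 h7).resolve_right h9
  exact_mod_cast this

lemma zl_integral (q : ℕ) [NeZero q] (a : ZMod q) :
    IsIntegral ℤ ((‖(1 : ℂ) - ZMod.stdAddChar a‖ : ℝ) : ℂ) := by
  have h1 : ∀ a : ZMod q, IsIntegral ℤ ((1 : ℂ) - ZMod.stdAddChar a) := by
    intro a
    refine isIntegral_one.sub ?_
    have h := ((zl_prim q).isIntegral (NeZero.pos q)).pow a.val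
    rwa [zl_pow, one_mul, ZMod.natCast_zmod_val] at h
  have h2 := (h1 a).mul (h1 (-a))
  rw [zl_sq, Complex.ofReal_pow] at h2
  exact IsIntegral.of_pow two_pos h2

lemma zl_final (q : ℕ) [NeZero q] (hq1 : 1 < q) (hq : IsPrimePow q) (F : (ZMod q)ˣ → ℂ)
    (hF : ∀ a, F (-a) = F a) (halg : ∀ a, IsAlgebraic ℚ (F a))
    (h : ∑ a, F a * (zl q a : ℂ) = 0) : ∀ a, F a = 0 := by
  classical
  let v : (ZMod q)ˣ → ℕ := fun a => (a : ZMod q).val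
  have vinj : ∀ a b, v a = v b → a = b := fun a b hab => Units.ext (ZMod.val_injective q hab)
  let W : (ZMod q)ˣ → ℂ := fun a => (if v a ≤ v (-a) then 1 else 0) + (if v a < v (-a) then 1 else 0)
  have hW : ∀ a, W a + W (-a) = 2 := by
    intro a
    simp only [W, neg_neg]
    rcases lt_trichotomy (v a) (v (-a)) with h | h | h
    · rw [if_pos h.le, if_pos h, if_neg (not_le.2 h), if_neg (not_lt.2 h.le)]; norm_num
    · rw [if_pos h.le, if_neg h.not_lt, if_pos h.ge, if_neg h.symm.not_lt]; norm_num
    · rw [if_neg (not_le.2 h), if_neg (not_lt.2 h.le), if_pos h.le, if_pos h]; norm_num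
  have hzn : ∀ a : (ZMod q)ˣ, zl q (-a : (ZMod q)ˣ) = zl q a := fun a => by
    rw [Units.val_neg, zl_neg]
  have hs : ∑ a, W a * F a * (zl q a : ℂ) = 0 := by
    have e : ∑ a, W a * F a * (zl q a : ℂ) = ∑ a, W (-a) * F a * (zl q a : ℂ) := by
      rw [← Equiv.sum_comp (Equiv.neg (ZMod q)ˣ)]
      refine Finset.sum_congr rfl fun a _ => ?_
      simp only [Equiv.neg_apply, hF, hzn]
    have e2 : ∑ a, W a * F a * (zl q a : ℂ) + ∑ a, W (-a) * F a * (zl q a : ℂ) = 0 := by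
      rw [← Finset.sum_add_distrib]
      have : ∀ a : (ZMod q)ˣ, W a * F a * (zl q a : ℂ) + W (-a) * F a * (zl q a : ℂ) =
          2 * (F a * (zl q a : ℂ)) := fun a => by
        linear_combination (F a * (zl q a : ℂ)) * hW a
      simp only [this]
      rw [← Finset.mul_sum, h, mul_zero]
    rw [← e, ← two_mul] at e2
    exact (mul_eq_zero.1 e2).resolve_left two_ne_zero
  let R := {a : (ZMod q)ˣ // v a ≤ v (-a)}
  have hsub : ∀ G : (ZMod q)ˣ → ℂ, (∀ a, ¬ v a ≤ v (-a) → G a = 0) → ∑ a, G a = ∑ r : R, G r.1 := by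
    intro G hG
    exact (Fintype.sum_of_injective (fun r : R => r.1) Subtype.val_injective _ _
      (fun j hj => hG j (fun hj' => hj ⟨⟨j, hj'⟩, rfl⟩)) (fun _ => rfl)).symm
  have hb := bk_baker (ι := R) (fun r => ‖(1 : ℂ) - ZMod.stdAddChar (r.1 : ZMod q)‖)
    (fun r => norm_pos_iff.2 (zl_ne q hq1 r.1)) (fun r => zl_integral q _) (by
      intro g hg
      let g' : (ZMod q)ˣ → ℤ := fun a => if ha : v a ≤ v (-a) then g ⟨a, ha⟩ else 0
      have h1 : ∑ a, (g' a : ℝ) * zl q a = 0 := by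
        rw [← Fintype.sum_of_injective (fun r : R => r.1) Subtype.val_injective
          (fun r : R => (g r : ℝ) * zl q r.1) (fun a => (g' a : ℝ) * zl q a) ?_ ?_]
        · exact hg
        · intro j hj
          have : g' j = 0 := dif_neg (fun hj' => hj ⟨⟨j, hj'⟩, rfl⟩)
          simp [this]
        · intro r
          have : g' r.1 = g r := dif_pos r.2
          simp only [this]
      intro r
      have h2 := zl_indep q hq1 hq g' h1 r.1
      have h3 : g' r.1 = g r := dif_pos r.2
      by_cases h4 : v (-r.1) ≤ v (- -r.1)
      · rw [neg_neg] at h4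
        have h5 : -r.1 = r.1 := vinj _ _ (le_antisymm h4 r.2)
        rw [h5, h3] at h2
        omega
      · have h5 : g' (-r.1) = 0 := dif_neg h4
        rw [h3, h5] at h2
        omega)
    (fun r => W r.1 * F r.1) (by
      intro r
      refine IsAlgebraic.mul ?_ (halg _)
      simp only [W]
      refine IsAlgebraic.add ?_ ?_ <;> split_ifs <;> first | exact isAlgebraic_one | exact isAlgebraic_zero)
    (by
      have := hsub (fun a => W a * F a * (zl q a : ℂ)) (fun a ha => by
        have hw : W a = 0 := by
          simp only [W]
          rw [if_neg ha, if_neg (fun h => ha h.le), add_zero]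
        simp only [hw, zero_mul])
      rw [hs] at this
      exact this.symm)
  have hR : ∀ a, v a ≤ v (-a) → F a = 0 := by
    intro a ha
    have h1 := hb ⟨a, ha⟩
    refine (mul_eq_zero.1 h1).resolve_left ?_
    simp only [W]
    rw [if_pos ha]
    split_ifs <;> norm_num
  intro a
  rcases le_total (v a) (v (-a)) with h1 | h1
  · exact hR a h1
  · rw [← hF]
    exact hR _ (by rwa [neg_neg])

lemma zl_gcd (q : ℕ) [NeZero q] (j : ZMod q) (hj : ¬ IsUnit j) : Int.gcd (j.val : ℤ) q ≠ 1 := by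
  intro h
  apply hj
  rw [Int.gcd_natCast_natCast] at h
  have := (ZMod.isUnit_iff_coprime j.val q).2 h
  rwa [ZMod.natCast_zmod_val] at this

/-- For a prime power `q > 1` and even, algebraic-valued, Dirichlet-type periodic functions
`f₁, …, f_n` with period `q`, the numbers `L'(0,f₁), …, L'(0,f_n)` are linearly independent
over the field of algebraic numbers iff the functions `f₁, …, f_n` are. -/
theorem stmt11 (q : ℕ) (hq1 : 1 < q) (hq : IsPrimePow q) (n : ℕ) (f : Fin n → ℤ → ℂ)
    (hper : ∀ i, ∀ m : ℤ, f i (m + q) = f i m)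
    (heven : ∀ i, ∀ m : ℤ, f i (-m) = f i m)
    (hdir : ∀ i, ∀ m : ℤ, Int.gcd m q ≠ 1 → f i m = 0)
    (halg : ∀ i, ∀ m : ℤ, IsAlgebraic ℚ (f i m)) :
    (∀ c : Fin n → ℂ, (∀ i, IsAlgebraic ℚ (c i)) →
        ∑ i, c i * Lderiv0 q (f i) = 0 → ∀ i, c i = 0) ↔
      (∀ c : Fin n → ℂ, (∀ i, IsAlgebraic ℚ (c i)) →
        (∀ m : ℤ, ∑ i, c i * f i m = 0) → ∀ i, c i = 0) := by
  have : NeZero q := ⟨by omega⟩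
  have hlin : ∀ c : Fin n → ℂ, ∑ i, c i * Lderiv0 q (f i) =
      -(∑ j : ZMod q, (∑ i, c i * f i (j.val : ℤ)) * (zl q j : ℂ)) / 2 := by
    intro c
    have h1 : ∀ i, c i * Lderiv0 q (f i) =
        -(∑ j : ZMod q, c i * f i (j.val : ℤ) * (zl q j : ℂ)) / 2 := by
      intro i
      rw [lz_Lderiv0 q hq1 (f i) (hper i) (heven i) (hdir i)]
      simp only [mul_assoc, ← Finset.mul_sum]
      ring
    simp only [h1, Finset.sum_mul]
    rw [Finset.sum_comm, ← Finset.sum_div, Finset.sum_neg_distrib]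
  constructor
  · intro H c hc h0
    refine H c hc ?_
    rw [hlin]
    simp only [h0, zero_mul, Finset.sum_const_zero, neg_zero, zero_div]
  · intro H c hc h0
    refine H c hc ?_
    rw [hlin] at h0
    have h1 : ∑ j : ZMod q, (∑ i, c i * f i (j.val : ℤ)) * (zl q j : ℂ) = 0 := by
      linear_combination (-2) * h0
    have hnon : ∀ j : ZMod q, ¬ IsUnit j → ∑ i, c i * f i (j.val : ℤ) = 0 := by
      intro j hj
      refine Finset.sum_eq_zero fun i _ => ?_
      rw [hdir i _ (zl_gcd q j hj), mul_zero]
    rw [zl_sum_units q _ (fun j hj => by rw [hnon j hj, zero_mul])] at h1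
    have h2 := zl_final q hq1 hq (fun a => ∑ i, c i * f i ((a : ZMod q).val : ℤ)) (by
        intro a
        refine Finset.sum_congr rfl fun i _ => ?_
        have e := lz_periodic q (f i) (hper i) (-((a : ZMod q).val : ℤ))
        rw [heven] at e
        rw [e, Int.cast_neg, Int.cast_natCast, ZMod.natCast_zmod_val, Units.val_neg]) (by
        intro a
        exact (IsIntegral.sum _ fun i _ => ((hc i).mul (halg i _)).isIntegral).isAlgebraic) h1
    intro m
    have h3 : ∑ i, c i * f i m = ∑ i, c i * f i ((m : ZMod q).val : ℤ) :=
      Finset.sum_congr rfl fun i _ => by rw [← lz_periodic q (f i) (hper i) m]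
    rw [h3]
    by_cases hu : IsUnit (m : ZMod q)
    · obtain ⟨u, hu⟩ := hu
      rw [← hu]
      exact h2 u
    · exact hnon _ hu
end

section
/- Let q ≥ 2 be an integer that is not a prime power (i.e., q has at least two distinct prime factors). Then 2^{φ(q)} · ∏_{1 ≤ k ≤ q-1, gcd(k,q)=1} sin(kπ/q) = 1, where φ is Euler's totient function. -/
open scoped Real

/-- If `q ≥ 2` is not a prime power, then `2^{φ(q)} ∏_{1 ≤ k ≤ q-1, (k,q)=1} sin(kπ/q) = 1`. -/
theorem stmt14 (q : ℕ) (hq : 2 ≤ q) (h : ¬ IsPrimePow q) :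
    (2 : ℝ) ^ q.totient *
      ∏ k ∈ Finset.filter (fun k => Nat.gcd k q = 1) (Finset.Icc 1 (q - 1)),
        Real.sin ((k : ℝ) * π / q) = 1 := by
  have hq0 : q ≠ 0 := by omega
  haveI : NeZero q := ⟨hq0⟩
  have hqpos : (0:ℝ) < q := by positivity
  have hζ := Complex.isPrimitiveRoot_exp q hq0
  set ζ := Complex.exp (2 * π * Complex.I / q) with hζd
  have h1 : Polynomial.eval 1 (Polynomial.cyclotomic q ℂ) = 1 := by
    apply Polynomial.eval_one_cyclotomic_not_prime_pow
    intro p hp k hk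
    rcases Nat.eq_zero_or_pos k with rfl | hk0
    · simp at hk; omega
    · exact h (hk ▸ hp.isPrimePow.pow hk0.ne')
  rw [Polynomial.cyclotomic_eq_prod_X_sub_primitiveRoots hζ, Polynomial.eval_prod] at h1
  simp only [Polynomial.eval_sub, Polynomial.eval_X, Polynomial.eval_C] at h1
  have h2 : ∏ k ∈ Finset.filter (fun k => Nat.gcd k q = 1) (Finset.Icc 1 (q - 1)), (1 - ζ ^ k)
      = ∏ μ ∈ primitiveRoots q ℂ, (1 - μ) := by
    refine Finset.prod_bij (fun k _ => ζ ^ k) ?_ ?_ ?_ ?_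
    · intro k hk
      simp only [Finset.mem_filter, Finset.mem_Icc] at hk
      rw [mem_primitiveRoots (by omega)]
      exact hζ.pow_of_coprime k hk.2
    · intro a ha b hb hab
      simp only [Finset.mem_filter, Finset.mem_Icc] at ha hb
      exact hζ.pow_inj (by omega) (by omega) hab
    · intro μ hμ
      rw [mem_primitiveRoots (by omega), hζ.isPrimitiveRoot_iff] at hμ
      obtain ⟨i, hi, hc, rfl⟩ := hμ
      refine ⟨i, ?_, rfl⟩
      simp only [Finset.mem_filter, Finset.mem_Icc]
      refine ⟨⟨?_, by omega⟩, hc⟩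
      rcases Nat.eq_zero_or_pos i with rfl | h0
      · simp at hc; omega
      · exact h0
    · intros; rfl
  have hcard : (Finset.filter (fun k => Nat.gcd k q = 1) (Finset.Icc 1 (q - 1))).card
      = q.totient := by
    rw [Nat.totient_eq_card_coprime]
    congr 1
    ext i
    simp only [Finset.mem_filter, Finset.mem_Icc, Finset.mem_range, Nat.Coprime, Nat.gcd_comm q i]
    constructor
    · rintro ⟨⟨_, _⟩, h3⟩
      exact ⟨by omega, h3⟩
    · rintro ⟨_, h3⟩
      rcases Nat.eq_zero_or_pos i with rfl | h0
      · simp at h3; omega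
      · exact ⟨⟨h0, by omega⟩, h3⟩
  rw [← hcard, ← Finset.prod_const, ← Finset.prod_mul_distrib]
  rw [← h2] at h1
  have h3 := congrArg norm h1
  rw [norm_prod, norm_one] at h3
  rw [← h3]
  refine Finset.prod_congr rfl ?_
  intro k hk
  simp only [Finset.mem_filter, Finset.mem_Icc] at hk
  have e : ζ ^ k = Complex.exp (Complex.I * ((2 * (k * π / q) : ℝ) : ℂ)) := by
    rw [hζd, ← Complex.exp_nat_mul]
    congr 1
    push_cast
    ring
  rw [norm_sub_rev, e, Complex.norm_exp_I_mul_ofReal_sub_one, mul_div_cancel_left₀ _ two_ne_zero,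
    Real.norm_of_nonneg]
  have : 0 ≤ Real.sin (k * π / q) := by
    apply Real.sin_nonneg_of_nonneg_of_le_pi (by positivity)
    rw [div_le_iff₀ hqpos, mul_comm]
    have : (k:ℝ) ≤ q := by exact_mod_cast (by omega : k ≤ q)
    gcongr
  positivity
end
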